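/- arXiv:0907.4216 — 2 statements merged into one kernel-verified Lean document; each statement's English description precedes it below -/
import Mathlib

section
/- Corollary: Let D be a domain in ℝ⁴ = ℝ²×ℝ² whose boundary ∂D is a smooth hypersurface in some open set U ⊆ ℝ⁴, and suppose that either D or ℝ⁴∖D is strictly convex in this neighborhood, i.e. D ∩ U (respectively (ℝ⁴∖D) ∩ U) is convex and ∂D ∩ U contains no nondegenerate line segment. Then for every (p1,p2,p3) with 1/p1+1/p2+1/p3 = 1, 1 < p1,p2,p3 < ∞, and exactly one of p1,p2,p3 less than 2, there is no constant C such that ‖T_D(f,g)‖_{L^{p3'}(ℝ²)} ≤ C ‖f‖_{L^{p1}(ℝ²)} ‖g‖_{L^{p2}(ℝ²)} for all Schwartz f,g on ℝ², where p3' = p3/(p3−1); i.e., T_D does not extend to a bounded bilinear Fourier multiplier from L^{p1}(ℝ²)×L^{p2}(ℝ²) to L^{p3'}(ℝ²). -/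
open MeasureTheory Filter Topology Set

noncomputable section

abbrev V2 : Type := ℝ × ℝ
abbrev Amb : Type := V2 × V2 × V2

def dot2 (x y : V2) : ℝ := x.1 * y.1 + x.2 * y.2

def dot6 (x y : Amb) : ℝ := dot2 x.1 y.1 + dot2 x.2.1 y.2.1 + dot2 x.2.2 y.2.2

def Gamma : Set Amb := {x | x.1 + x.2.1 + x.2.2 = 0}

def Phi (x : V2 × V2) : Amb := (x.1, x.2, -(x.1 + x.2))

def FT (f : V2 → ℂ) (ξ : V2) : ℂ :=
  ∫ x : V2, Complex.exp (-(2 * Real.pi * dot2 x ξ) * Complex.I) * f x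

def LambdaIntegrand (Dt : Set Amb) (f1 f2 f3 : V2 → ℂ) (ξ : V2 × V2) : ℂ :=
  Set.indicator Dt (fun _ => (1 : ℂ)) (Phi ξ) *
    (FT f1 ξ.1 * (FT f2 ξ.2 * FT f3 (-(ξ.1 + ξ.2))))

def Lambda (Dt : Set Amb) (f1 f2 f3 : V2 → ℂ) : ℂ :=
  ∫ ξ : V2 × V2, LambdaIntegrand Dt f1 f2 f3 ξ

def OfType (Lam : (V2 → ℂ) → (V2 → ℂ) → (V2 → ℂ) → ℂ) (p1 p2 p3 : ℝ) : Prop :=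
  ∃ C : ℝ, ∀ f1 f2 f3 : SchwartzMap V2 ℂ,
    ENNReal.ofReal ‖Lam ⇑f1 ⇑f2 ⇑f3‖ ≤ ENNReal.ofReal C *
      (eLpNorm (⇑f1) (ENNReal.ofReal p1) volume *
        (eLpNorm (⇑f2) (ENNReal.ofReal p2) volume *
          eLpNorm (⇑f3) (ENNReal.ofReal p3) volume))

def bdry (Dt : Set Amb) : Set Amb := Phi '' frontier (Phi ⁻¹' Dt)

def comp3 (x : Amb) : Fin 3 → V2 := ![x.1, x.2.1, x.2.2]

def IsSmoothHypersurface (M : Set (V2 × V2)) : Prop :=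
  ∀ p ∈ M, ∃ (W : Set (V2 × V2)) (g : V2 × V2 → ℝ),
    IsOpen W ∧ p ∈ W ∧ ContDiffOn ℝ (⊤ : ℕ∞) g W ∧
    (∀ x ∈ W, fderiv ℝ g x ≠ 0) ∧ M ∩ W = {x ∈ W | g x = 0}

def SliceCurvature (Dt : Set Amb) (j : Fin 3) : Prop :=
  ∃ U : Set Amb, U ⊆ Gamma ∧ IsOpen (Phi ⁻¹' U) ∧
    IsSmoothHypersurface (Phi ⁻¹' (bdry Dt ∩ U)) ∧
    IsConnected (Phi ⁻¹' (bdry Dt ∩ U)) ∧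
    ∃ (ξ0 : V2) (γ : ℝ → Amb) (t0 ε : ℝ), 0 < ε ∧
      ContDiffOn ℝ 2 γ (Set.Ioo (t0 - ε) (t0 + ε)) ∧
      (∀ t ∈ Set.Ioo (t0 - ε) (t0 + ε), γ t ∈ bdry Dt ∩ U ∧ comp3 (γ t) j = ξ0) ∧
      (∀ t ∈ Set.Ioo (t0 - ε) (t0 + ε), deriv γ t ≠ 0) ∧
      LinearIndependent ℝ ![deriv γ t0, deriv (deriv γ) t0]

def Pv (v : Amb) : Set Amb := {ξ | ξ ∈ Gamma ∧ 0 < dot6 ξ v}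

def blowSet (Dt : Set Amb) (ξ : Amb) (r : ℝ) : Set Amb := (fun y => r • (y - ξ)) '' Dt

def BlowupNormal (Dt : Set Amb) (ξ v : Amb) : Prop :=
  ∀ᵐ x : V2 × V2, Filter.Tendsto
    (fun r : ℝ => Set.indicator (blowSet Dt ξ r) (fun _ => (1 : ℝ)) (Phi x))
    Filter.atTop (𝓝 (Set.indicator (Pv v) (fun _ => (1 : ℝ)) (Phi x)))

def truncPV (v : Amb) (f1 f2 f3 : V2 → ℂ) (δ : ℝ) : ℂ :=
  ∫ t in {t : ℝ | δ < |t| ∧ |t| < δ⁻¹},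
    (∫ x : V2, f1 (x - t • v.1) * (f2 (x - t • v.2.1) * f3 (x - t • v.2.2))) / (t : ℂ)

def HasPV (v : Amb) (f1 f2 f3 : V2 → ℂ) (L : ℂ) : Prop :=
  Filter.Tendsto (truncPV v f1 f2 f3) (𝓝[>] (0 : ℝ)) (𝓝 L)

/-- The bilinear Fourier multiplier operator with symbol `χ_D`. -/
def TD (D : Set (V2 × V2)) (f g : V2 → ℂ) (x : V2) : ℂ :=
  ∫ ξ : V2 × V2, Set.indicator D (fun _ => (1 : ℂ)) ξ *
    (FT f ξ.1 * (FT g ξ.2 * Complex.exp ((2 * Real.pi * dot2 (ξ.1 + ξ.2) x) * Complex.I)))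

/-!
Blowing `D` up at a boundary point turns `χ_D` into the indicator of a half-space of `ℝ⁴`. By
strict convexity the conormals of these half-spaces vary along the boundary, and after a linear
change of variables they include a whole interval of slopes. Superposing modulated functions with
random signs, the assumed `L^p × L^q × L^r` bound yields a square function estimate, uniform over
finite families of half-spaces. It is tested on the tubes of Fefferman's ball multiplier argument:
parallelograms whose slopes and intercepts are built from the same binary digits are disjoint over
`2 ≤ x ≤ 3` but compress into a set of small measure over `0 ≤ x ≤ 1/2`. Hölder's inequality on the
small set, which gains because `r < 2`, then contradicts the estimate.
-/

open scoped FourierTransform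

section FourierTransform

@[fun_prop] lemma continuous_dot2 {X : Type*} [TopologicalSpace X] {a b : X → V2}
    (ha : Continuous a) (hb : Continuous b) : Continuous fun x => dot2 (a x) (b x) := by
  unfold dot2; fun_prop

/-- The character `e^{2πit}` of the real line, as a complex-valued function. -/
def phase (t : ℝ) : ℂ := Complex.exp ((2 * Real.pi * t : ℝ) * Complex.I)

@[simp] lemma norm_phase (t : ℝ) : ‖phase t‖ = 1 := Complex.norm_exp_ofReal_mul_I _

lemma phase_add (s t : ℝ) : phase (s + t) = phase s * phase t := by
  simp only [phase, ← Complex.exp_add, ← add_mul, mul_add, Complex.ofReal_add]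

lemma contDiff_phase {n : WithTop ℕ∞} : ContDiff ℝ n phase :=
  ((Complex.ofRealCLM.contDiff.comp (contDiff_const.mul contDiff_id)).mul contDiff_const).cexp

@[fun_prop] lemma continuous_phase : Continuous phase := (contDiff_phase (n := 0)).continuous

lemma hasDerivAt_phase (t : ℝ) : HasDerivAt phase (2 * Real.pi * Complex.I * phase t) t := by
  refine (((hasDerivAt_id t).const_mul (2 * Real.pi)).ofReal_comp.mul_const
    Complex.I).cexp.congr_deriv ?_
  simp only [phase, id]
  push_cast
  ring

lemma iteratedDeriv_phase (n : ℕ) :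
    iteratedDeriv n phase = fun t => (2 * Real.pi * Complex.I) ^ n * phase t := by
  induction n with
  | zero => simp
  | succ n ih =>
    ext t
    rw [iteratedDeriv_succ, ih, ((hasDerivAt_phase t).const_mul _).deriv]
    ring

lemma hasTemperateGrowth_phase : Function.HasTemperateGrowth phase := by
  refine ⟨contDiff_phase, fun n => ⟨0, (2 * Real.pi) ^ n, fun t => ?_⟩⟩
  rw [norm_iteratedFDeriv_eq_norm_iteratedDeriv, iteratedDeriv_phase]
  simp [abs_of_pos Real.pi_pos]

lemma FT_eq_integral_phase (f : V2 → ℂ) (ξ : V2) :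
    FT f ξ = ∫ x, phase (-dot2 x ξ) * f x := by
  simp only [FT, phase]
  congr! 4
  push_cast
  ring

lemma integral_comp_equivRealProd (f : V2 → ℂ) :
    ∫ z, f (Complex.equivRealProdCLM z) = ∫ x, f x :=
  Complex.volume_preserving_equiv_real_prod.integral_comp
    Complex.measurableEquivRealProd.measurableEmbedding f

lemma inner_eq_dot2 (z w : ℂ) :
    inner ℝ z w = dot2 (Complex.equivRealProdCLM z) (Complex.equivRealProdCLM w) := by
  simp [dot2, Complex.inner, mul_comm]

/-- The Fourier transform `FT` of Schwartz functions, as an operator on Schwartz space. It is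
transported from Mathlib's Fourier transform on the Euclidean plane `ℂ`, since `V2` carries the
sup norm. -/
def schwartzFT (f : SchwartzMap V2 ℂ) : SchwartzMap V2 ℂ :=
  SchwartzMap.compCLMOfContinuousLinearEquiv ℝ Complex.equivRealProdCLM.symm
    (𝓕 (SchwartzMap.compCLMOfContinuousLinearEquiv ℝ Complex.equivRealProdCLM f))

lemma schwartzFT_apply (f : SchwartzMap V2 ℂ) (ξ : V2) : schwartzFT f ξ = FT f ξ := by
  change 𝓕 (f ∘ Complex.equivRealProdCLM) (Complex.equivRealProdCLM.symm ξ) = _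
  rw [Real.fourier_eq', FT_eq_integral_phase, ← integral_comp_equivRealProd]
  simp_rw [inner_eq_dot2, ContinuousLinearEquiv.apply_symm_apply, phase, neg_mul, mul_neg]
  rfl

lemma FT_inversion (f : SchwartzMap V2 ℂ) (x : V2) :
    f x = ∫ ξ, FT f ξ * phase (dot2 ξ x) := by
  set g := SchwartzMap.compCLMOfContinuousLinearEquiv ℝ Complex.equivRealProdCLM f with hg
  have hinv : 𝓕⁻ ((𝓕 g : SchwartzMap ℂ ℂ) : ℂ → ℂ) = g := by
    rw [← SchwartzMap.fourierInv_coe, FourierTransform.fourierInv_fourier_eq]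
  have hFT (z : ℂ) : (𝓕 g : SchwartzMap ℂ ℂ) z = FT f (Complex.equivRealProdCLM z) := by
    rw [← schwartzFT_apply]
    exact congr_arg _ (Complex.equivRealProdCLM.symm_apply_apply z).symm
  calc f x = g (Complex.equivRealProdCLM.symm x) := by simp [hg]
    _ = ∫ ξ, FT f ξ * phase (dot2 ξ x) := by
        rw [← hinv, Real.fourierInv_eq', ← integral_comp_equivRealProd]
        simp_rw [hFT, inner_eq_dot2, ContinuousLinearEquiv.apply_symm_apply, smul_eq_mul, phase,
          mul_comm (FT _ _)]

lemma continuous_FT (f : SchwartzMap V2 ℂ) : Continuous (FT f) :=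
  (schwartzFT f).continuous.congr (schwartzFT_apply f)

lemma integrable_FT (f : SchwartzMap V2 ℂ) : Integrable (FT f) :=
  (schwartzFT f).integrable.congr (ae_of_all _ (schwartzFT_apply f))

lemma norm_FT_le (f : V2 → ℂ) (ξ : V2) : ‖FT f ξ‖ ≤ ∫ x, ‖f x‖ := by
  rw [FT_eq_integral_phase]
  exact (norm_integral_le_integral_norm _).trans_eq (by simp)

lemma FT_sum {ι : Type*} (s : Finset ι) (c : ι → ℂ) (f : ι → SchwartzMap V2 ℂ) (ξ : V2) :
    FT (∑ i ∈ s, c i • f i : SchwartzMap V2 ℂ) ξ = ∑ i ∈ s, c i * FT (f i) ξ := by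
  have hint (i : ι) : Integrable fun x => phase (-dot2 x ξ) * f i x :=
    (f i).integrable.bdd_mul (c := 1) (by fun_prop) (ae_of_all _ fun x => by simp)
  simp_rw [FT_eq_integral_phase, sum_apply, smul_apply, smul_eq_mul,
    Finset.mul_sum, mul_left_comm _ (c _)]
  rw [integral_finsetSum _ fun i _ => (hint i).const_mul _]
  exact Finset.sum_congr rfl fun i _ => integral_const_mul _ _

/-- The functional `x ↦ x.1·u + x.2·w` on pairs of planar vectors. -/
def pairDot (u w : V2) : (V2 × V2) →L[ℝ] ℝ :=
  LinearMap.toContinuousLinearMap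
    { toFun := fun x => dot2 x.1 u + dot2 x.2 w
      map_add' := fun x y => by simp only [dot2, Prod.fst_add, Prod.snd_add]; ring
      map_smul' := fun c x => by
        simp only [dot2, Prod.smul_fst, Prod.smul_snd, smul_eq_mul, RingHom.id_apply]; ring }

lemma pairDot_apply (u w : V2) (x : V2 × V2) : pairDot u w x = dot2 x.1 u + dot2 x.2 w := rfl

/-- Modulation of a Schwartz function on the plane by the character of frequency `a`. -/
def modulate (a : V2) (f : SchwartzMap V2 ℂ) : SchwartzMap V2 ℂ :=
  SchwartzMap.smulLeftCLM ℂ (fun x : V2 => phase (dot2 x a)) f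

lemma modulate_apply (a : V2) (f : SchwartzMap V2 ℂ) (x : V2) :
    modulate a f x = phase (dot2 x a) * f x := by
  have hdot : Function.HasTemperateGrowth fun x : V2 => dot2 x a :=
    ((ContinuousLinearMap.fst ℝ ℝ ℝ).smulRight a.1 +
      (ContinuousLinearMap.snd ℝ ℝ ℝ).smulRight a.2 : V2 →L[ℝ] ℝ).hasTemperateGrowth
  exact SchwartzMap.smulLeftCLM_apply_apply (hasTemperateGrowth_phase.comp hdot) f x

lemma norm_modulate_apply (a : V2) (f : SchwartzMap V2 ℂ) (x : V2) :
    ‖modulate a f x‖ = ‖f x‖ := by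
  simp [modulate_apply]

lemma FT_modulate (f : SchwartzMap V2 ℂ) (a ξ : V2) : FT (modulate a f) ξ = FT f (ξ - a) := by
  simp_rw [FT_eq_integral_phase, modulate_apply, ← mul_assoc, ← phase_add]
  congr! 4
  simp only [dot2, Prod.fst_sub, Prod.snd_sub]
  ring

end FourierTransform

instance isAddHaarMeasure_volume_V2_prod : (volume : Measure (V2 × V2)).IsAddHaarMeasure :=
  inferInstanceAs ((volume : Measure V2).prod (volume : Measure V2)).IsAddHaarMeasure

section TrilinearForm

/-- The trilinear form `∫ χ_D(ξ, η) f̂(ξ) ĝ(η) ĥ(-ξ-η) dξ dη` dual to the operator `TD D`. -/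
def trilinearForm (D : Set (V2 × V2)) (f g h : V2 → ℂ) : ℂ :=
  ∫ ξ : V2 × V2, indicator D (fun _ => (1 : ℂ)) ξ *
    (FT f ξ.1 * (FT g ξ.2 * FT h (-(ξ.1 + ξ.2))))

/-- Boundedness of the trilinear form of `D` at the exponents `p`, `q`, `r`, with constant `C`. -/
def TrilinearBound (D : Set (V2 × V2)) (p q r : ℝ) (C : ENNReal) : Prop :=
  ∀ f g h : SchwartzMap V2 ℂ, ‖trilinearForm D f g h‖ₑ ≤
    C * (eLpNorm f (ENNReal.ofReal p) volume * (eLpNorm g (ENNReal.ofReal q) volume *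
      eLpNorm h (ENNReal.ofReal r) volume))

lemma integrable_FT_mul (f g : SchwartzMap V2 ℂ) :
    Integrable fun ξ : V2 × V2 => FT f ξ.1 * FT g ξ.2 :=
  (integrable_FT f).mul_prod (integrable_FT g)

lemma integrable_FT_triple (f g h : SchwartzMap V2 ℂ) :
    Integrable fun ξ : V2 × V2 => FT f ξ.1 * (FT g ξ.2 * FT h (-(ξ.1 + ξ.2))) := by
  have hbdd := (integrable_FT_mul f g).mul_bdd (c := ∫ x, ‖h x‖)
    (g := fun ξ : V2 × V2 => FT h (-(ξ.1 + ξ.2)))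
    ((continuous_FT h).comp (by fun_prop)).aestronglyMeasurable
    (ae_of_all _ fun x => norm_FT_le _ _)
  simpa only [mul_assoc] using hbdd

lemma integrable_indicator_one_mul {X : Type*} [MeasurableSpace X] {μ : Measure X} {D : Set X}
    (hD : MeasurableSet D) {Q : X → ℂ} (hQ : Integrable Q μ) :
    Integrable (fun ξ => indicator D (fun _ => (1 : ℂ)) ξ * Q ξ) μ := by
  simpa only [← indicator_mul_left, one_mul] using hQ.indicator hD

lemma trilinearForm_sum_sum {ι : Type*} (s : Finset ι) {D : Set (V2 × V2)}
    (hD : MeasurableSet D) (f : SchwartzMap V2 ℂ) (g h : ι → SchwartzMap V2 ℂ) (c : ι → ℂ) :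
    trilinearForm D f (∑ i ∈ s, c i • g i : SchwartzMap V2 ℂ)
        (∑ i ∈ s, c i • h i : SchwartzMap V2 ℂ) =
      ∑ i ∈ s, ∑ j ∈ s, (c i * c j) * trilinearForm D f (g i) (h j) := by
  have hint (i j : ι) := (integrable_indicator_one_mul hD
    (integrable_FT_triple f (g i) (h j))).const_mul (c i * c j)
  simp only [trilinearForm, ← integral_const_mul, FT_sum]
  simp_rw [← integral_finsetSum _ fun j _ => hint _ j]
  rw [← integral_finsetSum _ fun i _ => integrable_finsetSum _ fun j _ => hint i j]
  refine integral_congr_ae (ae_of_all _ fun ξ => ?_)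
  simp_rw [Finset.sum_mul_sum, Finset.mul_sum]
  refine Finset.sum_congr rfl fun i _ => Finset.sum_congr rfl fun j _ => ?_
  ring

end TrilinearForm

section Duality

variable {P : V2 × V2 → ℂ}

lemma integrable_phase_mul (hP : Integrable P) (h : SchwartzMap V2 ℂ) :
    Integrable (Function.uncurry fun (x : V2) (ξ : V2 × V2) =>
      P ξ * phase (dot2 (ξ.1 + ξ.2) x) * h x) (volume.prod volume) := by
  have hphase := ((h.integrable (μ := volume)).mul_prod hP).bdd_mul (c := 1)
    (f := fun z : V2 × (V2 × V2) => phase (dot2 (z.2.1 + z.2.2) z.1))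
    (by fun_prop) (ae_of_all _ fun x => by simp)
  refine hphase.congr (ae_of_all _ fun z => ?_)
  simp only [Function.uncurry]
  ring

lemma integral_phase_mul (hP : Integrable P) (h : SchwartzMap V2 ℂ) :
    ∫ x, (∫ ξ, P ξ * phase (dot2 (ξ.1 + ξ.2) x)) * h x = ∫ ξ, P ξ * FT h (-(ξ.1 + ξ.2)) := by
  simp_rw [← integral_mul_const]
  rw [integral_integral_swap (integrable_phase_mul hP h)]
  simp_rw [FT_eq_integral_phase, ← integral_const_mul, mul_assoc]
  have hdot (ξ : V2 × V2) (x : V2) : -dot2 x (-(ξ.1 + ξ.2)) = dot2 (ξ.1 + ξ.2) x := by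
    simp only [dot2, Prod.fst_neg, Prod.snd_neg]
    ring
  simp_rw [hdot]

lemma aestronglyMeasurable_integral_phase (hP : Integrable P) :
    AEStronglyMeasurable (fun x : V2 => ∫ ξ, P ξ * phase (dot2 (ξ.1 + ξ.2) x)) volume :=
  (hP.aestronglyMeasurable.comp_snd.mul
    (Continuous.aestronglyMeasurable (by fun_prop :
      Continuous fun z : V2 × (V2 × V2) => phase (dot2 (z.2.1 + z.2.2) z.1)))).integral_prod_right'

variable {D : Set (V2 × V2)}

lemma TD_eq_integral_phase (f g : V2 → ℂ) :
    TD D f g = fun x => ∫ ξ : V2 × V2, indicator D (fun _ => (1 : ℂ)) ξ *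
      (FT f ξ.1 * FT g ξ.2) * phase (dot2 (ξ.1 + ξ.2) x) := by
  ext x
  simp only [TD, phase]
  push_cast
  simp only [mul_assoc]

lemma aestronglyMeasurable_TD (hD : MeasurableSet D) (f g : SchwartzMap V2 ℂ) :
    AEStronglyMeasurable (TD D f g) volume := by
  rw [TD_eq_integral_phase]
  exact aestronglyMeasurable_integral_phase
    (integrable_indicator_one_mul hD (integrable_FT_mul f g))

lemma integral_TD_mul (hD : MeasurableSet D) (f g h : SchwartzMap V2 ℂ) :
    ∫ x, TD D f g x * h x = trilinearForm D f g h := by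
  rw [TD_eq_integral_phase, integral_phase_mul
    (integrable_indicator_one_mul hD (integrable_FT_mul f g))]
  simp only [trilinearForm, mul_assoc]

lemma TrilinearBound.of_TD (hD : MeasurableSet D) {p q r : ℝ} (hr : 1 < r) {C : ENNReal}
    (h : ∀ f g : SchwartzMap V2 ℂ,
      eLpNorm (TD D f g) (ENNReal.ofReal (r / (r - 1))) volume ≤
        C * (eLpNorm f (ENNReal.ofReal p) volume * eLpNorm g (ENNReal.ofReal q) volume)) :
    TrilinearBound D p q r C := by
  intro f g k
  have hconj : ENNReal.HolderTriple (ENNReal.ofReal (r / (r - 1))) (ENNReal.ofReal r) 1 :=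
    (Real.HolderConjugate.conjExponent hr).symm.ennrealOfReal
  calc ‖trilinearForm D f g k‖ₑ ≤ eLpNorm (TD D f g • ⇑k) 1 volume := by
        rw [← integral_TD_mul hD, eLpNorm_one_eq_lintegral_enorm]
        exact enorm_integral_le_lintegral_enorm _
    _ ≤ eLpNorm (TD D f g) (ENNReal.ofReal (r / (r - 1))) volume *
          eLpNorm k (ENNReal.ofReal r) volume :=
        eLpNorm_smul_le_mul_eLpNorm k.continuous.aestronglyMeasurable
          (aestronglyMeasurable_TD hD f g)
    _ ≤ C * (eLpNorm f (ENNReal.ofReal p) volume * eLpNorm g (ENNReal.ofReal q) volume) *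
          eLpNorm k (ENNReal.ofReal r) volume := by
        gcongr
        exact h f g
    _ = _ := by simp only [mul_assoc]

end Duality

section Symmetries

variable {D : Set (V2 × V2)} {p q r : ℝ} {C : ENNReal}

lemma TrilinearBound.preimage_swap (h : TrilinearBound D p q r C) :
    TrilinearBound (Prod.swap ⁻¹' D) q p r C := by
  intro f g k
  have hform : trilinearForm (Prod.swap ⁻¹' D) f g k = trilinearForm D g f k := by
    refine Eq.trans ?_ ((Measure.measurePreserving_swap (μ := (volume : Measure V2))
      (ν := (volume : Measure V2))).integral_comp MeasurableEquiv.prodComm.measurableEmbedding _)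
    refine integral_congr_ae (ae_of_all _ fun ξ => ?_)
    simp only [Prod.fst_swap, Prod.snd_swap, add_comm ξ.2, mul_left_comm (FT g _)]
    rfl
  rw [hform]
  refine (h g f k).trans_eq ?_
  ring

/-- The involution of frequency space exchanging the first and third frequencies, where the third
frequency of `(ξ, η)` is `-(ξ + η)`. -/
def exchangeFirstThird : (V2 × V2) ≃L[ℝ] (V2 × V2) :=
  let e := (-(ContinuousLinearMap.fst ℝ V2 V2 + ContinuousLinearMap.snd ℝ V2 V2)).prod
    (ContinuousLinearMap.snd ℝ V2 V2)
  ContinuousLinearEquiv.equivOfInverse e e (fun x => by simp [e]) (fun x => by simp [e])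

lemma exchangeFirstThird_apply (x : V2 × V2) : exchangeFirstThird x = (-(x.1 + x.2), x.2) := rfl

lemma measurePreserving_exchangeFirstThird : MeasurePreserving exchangeFirstThird := by
  have hskew : MeasurePreserving (fun z : V2 × V2 => (z.1, -z.2 - z.1)) (volume.prod volume)
      (volume.prod volume) :=
    MeasurePreserving.skew_product (g := fun x y : V2 => -y - x) (MeasurePreserving.id volume)
      (by fun_prop) (ae_of_all _ fun x => ((measurePreserving_sub_right volume x).comp
        (Measure.measurePreserving_neg volume)).map_eq)
  have hswap := Measure.measurePreserving_swap (μ := (volume : Measure V2))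
    (ν := (volume : Measure V2))
  have hcomp : ⇑exchangeFirstThird =
      (Prod.swap ∘ fun z : V2 × V2 => (z.1, -z.2 - z.1)) ∘ Prod.swap := by
    ext1 x
    exact Prod.ext (neg_add' _ _) rfl
  exact hcomp ▸ (hswap.comp hskew).comp hswap

lemma TrilinearBound.preimage_exchangeFirstThird (h : TrilinearBound D p q r C) :
    TrilinearBound (exchangeFirstThird ⁻¹' D) r q p C := by
  intro f g k
  have hform : trilinearForm (exchangeFirstThird ⁻¹' D) f g k = trilinearForm D k g f := by
    refine Eq.trans ?_ (measurePreserving_exchangeFirstThird.integral_comp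
      exchangeFirstThird.toHomeomorph.measurableEmbedding _)
    refine integral_congr_ae (ae_of_all _ fun ξ => ?_)
    have hindicator : indicator (exchangeFirstThird ⁻¹' D) (fun _ => (1 : ℂ)) ξ =
      indicator D (fun _ => 1) (exchangeFirstThird ξ) := rfl
    simp only [hindicator, exchangeFirstThird_apply, show -(-(ξ.1 + ξ.2) + ξ.2) = ξ.1 by abel]
    ring
  rw [hform]
  refine (h k g f).trans_eq ?_
  ring

lemma eLpNorm_comp_of_map_eq_smul {X E : Type*} [MeasurableSpace X] [NormedAddCommGroup E]
    {μ : Measure X} {A : X → X} {c : NNReal} (hA : AEMeasurable A μ) (hmap : μ.map A = c • μ)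
    {F : X → E} (hF : AEStronglyMeasurable F μ) {s : ℝ} (hs : 0 < s) :
    eLpNorm (F ∘ A) (ENNReal.ofReal s) μ =
      (c : ENNReal) ^ s⁻¹ * eLpNorm F (ENNReal.ofReal s) μ := by
  rw [← eLpNorm_map_measure (hmap ▸ hF.smul_measure c) hA, hmap,
    eLpNorm_smul_measure_of_ne_top' ENNReal.ofReal_ne_top, ENNReal.toReal_ofReal hs.le,
    ENNReal.smul_def, smul_eq_mul, ENNReal.coe_rpow_of_nonneg _ (inv_nonneg.2 hs.le)]

variable {A : V2 ≃L[ℝ] V2} {c : NNReal}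

lemma integral_comp_of_map_eq_smul {X : Type*} [MeasurableSpace X] {μ : Measure X} {A : X → X}
    (hA : MeasurableEmbedding A) (hmap : μ.map A = c • μ) (F : X → ℂ) :
    ∫ x, F (A x) ∂μ = c * ∫ x, F x ∂μ := by
  rw [← hA.integral_map, hmap, integral_smul_nnreal_measure, NNReal.smul_def, Complex.real_smul]

lemma FT_comp_of_map_eq_smul (hA : ∀ x y, dot2 (A x) y = dot2 x (A y))
    (hmap : (volume : Measure V2).map A = c • volume) (F : V2 → ℂ) (ξ : V2) :
    FT (F ∘ A) (A ξ) = c * FT F ξ := by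
  simp_rw [FT_eq_integral_phase, ← integral_comp_of_map_eq_smul
    A.toHomeomorph.measurableEmbedding hmap, ← hA]
  rfl

lemma trilinearForm_comp_of_map_eq_smul (hA : ∀ x y, dot2 (A x) y = dot2 x (A y))
    (hc : c ≠ 0) (hmap : (volume : Measure V2).map A = c • volume) (f g h : V2 → ℂ) :
    trilinearForm D (f ∘ A) (g ∘ A) (h ∘ A) =
      c * trilinearForm (Prod.map A A ⁻¹' D) f g h := by
  have hmap₂ : (volume : Measure (V2 × V2)).map (Prod.map A A) =
      (c * c) • (volume : Measure (V2 × V2)) := by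
    rw [Measure.volume_eq_prod, ← Measure.map_prod_map _ _ A.continuous.measurable
      A.continuous.measurable, hmap]
    change ((c : ENNReal) • volume).prod ((c : ENNReal) • volume) = ((c * c : NNReal) : ENNReal) • _
    rw [Measure.prod_smul_left, Measure.prod_smul_right, smul_smul, ENNReal.coe_mul]
  have hc' : ((c * c : NNReal) : ℂ) ≠ 0 := by simpa using hc
  apply mul_left_cancel₀ hc'
  rw [← mul_assoc]
  have hemb : MeasurableEmbedding (Prod.map A A) :=
    (A.prodCongr A).toHomeomorph.measurableEmbedding
  have hindicator (ξ : V2 × V2) : indicator (Prod.map A A ⁻¹' D) (fun _ => (1 : ℂ)) ξ =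
      indicator D (fun _ => 1) (Prod.map A A ξ) := rfl
  refine (integral_comp_of_map_eq_smul hemb hmap₂ _).symm.trans ?_
  unfold trilinearForm
  rw [← integral_const_mul]
  refine integral_congr_ae (ae_of_all _ fun ξ => ?_)
  simp only [Prod.map_fst, Prod.map_snd, ← map_add, ← map_neg, hindicator,
    FT_comp_of_map_eq_smul hA hmap]
  push_cast
  ring

lemma TrilinearBound.preimage_prodMap (h : TrilinearBound D p q r C) (hp : 0 < p) (hq : 0 < q)
    (hr : 0 < r) (hsum : p⁻¹ + q⁻¹ + r⁻¹ = 1) (hA : ∀ x y, dot2 (A x) y = dot2 x (A y))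
    (hc : c ≠ 0) (hmap : (volume : Measure V2).map A = c • volume) :
    TrilinearBound (Prod.map A A ⁻¹' D) p q r C := by
  intro f g k
  have hc₀ : (c : ENNReal) ≠ 0 := by simpa using hc
  have hcoe : ‖((c : ℝ) : ℂ)‖ₑ = c := by
    rw [← ofReal_norm]
    simp
  have hnorm (F : SchwartzMap V2 ℂ) {s : ℝ} (hs : 0 < s) :=
    eLpNorm_comp_of_map_eq_smul A.continuous.aemeasurable hmap
      F.continuous.aestronglyMeasurable hs
  let comp (F : SchwartzMap V2 ℂ) : SchwartzMap V2 ℂ :=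
    SchwartzMap.compCLMOfContinuousLinearEquiv ℝ A F
  have hpow : (c : ENNReal) ^ p⁻¹ * (c ^ q⁻¹ * c ^ r⁻¹) = c := by
    rw [← ENNReal.rpow_add _ _ hc₀ ENNReal.coe_ne_top,
      ← ENNReal.rpow_add _ _ hc₀ ENNReal.coe_ne_top, ← add_assoc, hsum, ENNReal.rpow_one]
  refine (ENNReal.mul_le_mul_iff_right hc₀ ENNReal.coe_ne_top).1 ?_
  calc (c : ENNReal) * ‖trilinearForm (Prod.map A A ⁻¹' D) f g k‖ₑ
      = ‖trilinearForm D (comp f) (comp g) (comp k)‖ₑ := by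
        change _ = ‖trilinearForm D (f ∘ A) (g ∘ A) (k ∘ A)‖ₑ
        rw [trilinearForm_comp_of_map_eq_smul hA hc hmap, enorm_mul, hcoe]
    _ ≤ C * (eLpNorm (f ∘ A) (ENNReal.ofReal p) volume *
          (eLpNorm (g ∘ A) (ENNReal.ofReal q) volume *
            eLpNorm (k ∘ A) (ENNReal.ofReal r) volume)) := h (comp f) (comp g) (comp k)
    _ = _ := by
        rw [hnorm f hp, hnorm g hq, hnorm k hr]
        conv_rhs => rw [← hpow]
        ring

lemma TrilinearBound.preimage_smul (h : TrilinearBound D p q r C) (hp : 0 < p) (hq : 0 < q)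
    (hr : 0 < r) (hsum : p⁻¹ + q⁻¹ + r⁻¹ = 1) {a : ℝ} (ha : a ≠ 0) :
    TrilinearBound ((a • ·) ⁻¹' D) p q r C := by
  refine h.preimage_prodMap hp hq hr hsum (A := ContinuousLinearEquiv.smulLeft (Units.mk0 a ha))
    (c := Real.toNNReal |(a ^ Module.finrank ℝ V2)⁻¹|) (fun x y => ?_) ?_
    (Measure.map_addHaar_smul volume ha)
  · simp only [ContinuousLinearEquiv.smulLeft_apply_apply, Units.smul_def, Units.val_mk0]
    simp only [dot2, Prod.smul_fst, Prod.smul_snd, smul_eq_mul, mul_left_comm, mul_assoc]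
  · simpa using ha

lemma TrilinearBound.preimage_coordSwap (h : TrilinearBound D p q r C) (hp : 0 < p) (hq : 0 < q)
    (hr : 0 < r) (hsum : p⁻¹ + q⁻¹ + r⁻¹ = 1) :
    TrilinearBound (Prod.map Prod.swap Prod.swap ⁻¹' D) p q r C :=
  h.preimage_prodMap hp hq hr hsum (A := ContinuousLinearEquiv.prodComm ℝ ℝ ℝ) (c := 1)
    (fun x y => by simp [dot2, add_comm]) one_ne_zero
    (by rw [one_smul]; exact (Measure.measurePreserving_swap (μ := (volume : Measure ℝ))
      (ν := (volume : Measure ℝ))).map_eq)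

end Symmetries

section HalfLine

/-- A continuous, compressed form `e^{-as} - e^{-bs}` of the indicator function of `s > 0`, which
it approaches as `a → 0` and `b → ∞`. -/
def expStep (a b s : ℝ) : ℂ := (Real.exp (-(a * max s 0)) - Real.exp (-(b * max s 0)) : ℝ)

/-- The Fourier transform of `expStep a b`. -/
def expStepKernel (a b t : ℝ) : ℂ :=
  (a + 2 * Real.pi * t * Complex.I)⁻¹ - (b + 2 * Real.pi * t * Complex.I)⁻¹

variable {a b : ℝ}

@[fun_prop] lemma continuous_expStep : Continuous (expStep a b) := by
  unfold expStep; fun_prop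

lemma expStep_eq_indicator : expStep a b = indicator (Ioi 0) fun s : ℝ =>
    Complex.exp (-a * s) - Complex.exp (-b * s) := by
  ext s
  rcases lt_or_ge 0 s with hs | hs
  · simp [expStep, max_eq_left hs.le, indicator_of_mem (mem_Ioi.2 hs)]
  · simp [expStep, max_eq_right hs, indicator_of_notMem (notMem_Ioi.2 hs)]

lemma norm_expStep_le (ha : 0 < a) (hb : 0 < b) (s : ℝ) : ‖expStep a b s‖ ≤ 1 := by
  have hexp {c : ℝ} (hc : 0 < c) : Real.exp (-(c * max s 0)) ∈ Icc (0 : ℝ) 1 :=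
    ⟨(Real.exp_pos _).le, Real.exp_le_one_iff.2 (by
      have := mul_nonneg hc.le (le_max_right s 0)
      linarith)⟩
  rw [expStep, Complex.norm_real, Real.norm_eq_abs]
  exact abs_sub_le_of_nonneg_of_le (hexp ha).1 (hexp ha).2 (hexp hb).1 (hexp hb).2

lemma integrable_expStep (ha : 0 < a) (hb : 0 < b) : Integrable (expStep a b) := by
  rw [expStep_eq_indicator, integrable_indicator_iff measurableSet_Ioi]
  exact (integrableOn_exp_mul_complex_Ioi (by simpa) 0).sub
    (integrableOn_exp_mul_complex_Ioi (by simpa) 0)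

lemma fourier_expStep (ha : 0 < a) (hb : 0 < b) : 𝓕 (expStep a b) = expStepKernel a b := by
  ext t
  have hre {c : ℝ} (hc : 0 < c) : (-(c + 2 * Real.pi * t * Complex.I : ℂ)).re < 0 := by
    simpa using hc
  have hintegrand (v : ℝ) :
      Complex.exp (↑(-2 * Real.pi * v * t) * Complex.I) • expStep a b v =
        indicator (Ioi 0) (fun v : ℝ => Complex.exp (-(a + 2 * Real.pi * t * Complex.I) * v) -
          Complex.exp (-(b + 2 * Real.pi * t * Complex.I) * v)) v := by
    rw [expStep_eq_indicator, smul_eq_mul]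
    by_cases hv : v ∈ Ioi (0 : ℝ)
    · rw [indicator_of_mem hv, indicator_of_mem hv, mul_sub, ← Complex.exp_add, ← Complex.exp_add]
      push_cast
      ring_nf
    · rw [indicator_of_notMem hv, indicator_of_notMem hv, mul_zero]
  simp_rw [Real.fourier_real_eq_integral_exp_smul, hintegrand, integral_indicator measurableSet_Ioi]
  rw [integral_sub (integrableOn_exp_mul_complex_Ioi (hre ha) 0)
    (integrableOn_exp_mul_complex_Ioi (hre hb) 0),
    integral_exp_mul_complex_Ioi (hre ha), integral_exp_mul_complex_Ioi (hre hb)]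
  simp only [expStepKernel, Complex.ofReal_zero, mul_zero, Complex.exp_zero, neg_div_neg_eq,
    one_div]

lemma norm_add_two_pi_mul_I (c t : ℝ) :
    ‖(c + 2 * Real.pi * t * Complex.I : ℂ)‖ = √(c ^ 2 + (2 * Real.pi * t) ^ 2) := by
  rw [← Complex.norm_add_mul_I]
  push_cast
  rfl

lemma mul_sqrt_le_norm_add_two_pi_mul_I {m c : ℝ} (hm₀ : 0 ≤ m) (hm₁ : m ≤ 1) (hmc : m ≤ c)
    (t : ℝ) : m * √(1 + t ^ 2) ≤ ‖(c + 2 * Real.pi * t * Complex.I : ℂ)‖ := by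
  rw [norm_add_two_pi_mul_I]
  apply Real.le_sqrt_of_sq_le
  rw [mul_pow, Real.sq_sqrt (by positivity), mul_add, mul_one, ← mul_pow]
  have hmt : |m * t| ≤ |2 * Real.pi * t| := by
    rw [abs_mul, abs_mul (2 * Real.pi), abs_of_nonneg hm₀, abs_of_pos Real.two_pi_pos]
    gcongr
    linarith [Real.pi_gt_three]
  exact add_le_add (by gcongr) (sq_le_sq.2 hmt)

lemma add_two_pi_mul_I_ne_zero {c : ℝ} (hc : 0 < c) (t : ℝ) :
    (c + 2 * Real.pi * t * Complex.I : ℂ) ≠ 0 := fun h => by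
  simpa [hc.ne'] using congr_arg Complex.re h

lemma integrable_expStepKernel (ha : 0 < a) (hb : 0 < b) : Integrable (expStepKernel a b) := by
  have hcont : Continuous (expStepKernel a b) :=
    (Continuous.inv₀ (by fun_prop) (add_two_pi_mul_I_ne_zero ha)).sub
      (Continuous.inv₀ (by fun_prop) (add_two_pi_mul_I_ne_zero hb))
  set m := min 1 (min a b)
  have hm : 0 < m := by positivity
  refine (integrable_inv_one_add_sq.const_mul (|b - a| / m ^ 2)).mono'
    hcont.aestronglyMeasurable (ae_of_all _ fun t => ?_)
  have hnum : ‖(b + 2 * Real.pi * t * Complex.I : ℂ) - (a + 2 * Real.pi * t * Complex.I)‖ =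
      |b - a| := by
    rw [add_sub_add_right_eq_sub, ← Complex.ofReal_sub, Complex.norm_real, Real.norm_eq_abs]
  have hden : m ^ 2 * (1 + t ^ 2) ≤ ‖(a + 2 * Real.pi * t * Complex.I : ℂ)‖ *
      ‖(b + 2 * Real.pi * t * Complex.I : ℂ)‖ :=
    calc m ^ 2 * (1 + t ^ 2) = m * √(1 + t ^ 2) * (m * √(1 + t ^ 2)) := by
          rw [mul_mul_mul_comm, Real.mul_self_sqrt (by positivity), pow_two]
      _ ≤ _ := by
          gcongr
          · exact mul_sqrt_le_norm_add_two_pi_mul_I hm.le (min_le_left _ _)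
              ((min_le_right _ _).trans (min_le_left _ _)) t
          · exact mul_sqrt_le_norm_add_two_pi_mul_I hm.le (min_le_left _ _)
              ((min_le_right _ _).trans (min_le_right _ _)) t
  rw [expStepKernel, inv_sub_inv (add_two_pi_mul_I_ne_zero ha t) (add_two_pi_mul_I_ne_zero hb t),
    norm_div, norm_mul, hnum, ← div_eq_mul_inv, div_div]
  gcongr

lemma expStep_eq_integral (ha : 0 < a) (hb : 0 < b) (s : ℝ) :
    expStep a b s = ∫ t, expStepKernel a b t * phase (t * s) := by
  have hinv := continuous_expStep.fourierInv_fourier_eq (integrable_expStep ha hb)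
    (fourier_expStep ha hb ▸ integrable_expStepKernel ha hb)
  rw [← congr_fun hinv s, fourier_expStep ha hb, Real.fourierInv_eq']
  simp [phase, mul_comm, mul_assoc]

lemma norm_expStepKernel_le {t : ℝ} (ht : t ≠ 0) : ‖expStepKernel a b t‖ ≤ 2 * |t|⁻¹ := by
  have hinv (c : ℝ) : ‖(c + 2 * Real.pi * t * Complex.I : ℂ)⁻¹‖ ≤ |t|⁻¹ := by
    rw [norm_inv]
    gcongr
    rw [norm_add_two_pi_mul_I]
    refine Real.le_sqrt_of_sq_le ?_
    rw [sq_abs, mul_pow]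
    have hpi : 1 ≤ (2 * Real.pi) ^ 2 := by nlinarith [Real.pi_gt_three]
    nlinarith [sq_nonneg c, mul_le_mul_of_nonneg_right hpi (sq_nonneg t)]
  calc _ ≤ |t|⁻¹ + |t|⁻¹ := (norm_sub_le _ _).trans (add_le_add (hinv a) (hinv b))
    _ = 2 * |t|⁻¹ := (two_mul _).symm

lemma tendsto_expStepKernel {t : ℝ} (ht : t ≠ 0) :
    Tendsto (fun ε : ℝ => expStepKernel ε ε⁻¹ t) (𝓝[>] 0)
      (𝓝 (2 * Real.pi * t * Complex.I)⁻¹) := by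
  have hne : (2 * Real.pi * t * Complex.I : ℂ) ≠ 0 := by simp [ht, Real.pi_ne_zero]
  have hsmall : Tendsto (fun ε : ℝ => (ε + 2 * Real.pi * t * Complex.I : ℂ)⁻¹) (𝓝[>] 0)
      (𝓝 (2 * Real.pi * t * Complex.I)⁻¹) := by
    have hcont : Continuous fun ε : ℝ => (ε + 2 * Real.pi * t * Complex.I : ℂ) := by fun_prop
    refine Tendsto.inv₀ ?_ hne
    simpa using (hcont.tendsto 0).mono_left nhdsWithin_le_nhds
  have hlarge : Tendsto (fun ε : ℝ => ((ε⁻¹ : ℝ) + 2 * Real.pi * t * Complex.I : ℂ)⁻¹) (𝓝[>] 0)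
      (𝓝 0) := by
    refine tendsto_inv₀_cobounded.comp (tendsto_norm_atTop_iff_cobounded.1 ?_)
    refine tendsto_atTop_mono (fun ε => ?_) tendsto_inv_nhdsGT_zero
    simpa using Complex.re_le_norm ((ε⁻¹ : ℝ) + 2 * Real.pi * t * Complex.I : ℂ)
  simpa [expStepKernel] using hsmall.sub hlarge

lemma tendsto_expStep (s : ℝ) : Tendsto (fun ε : ℝ => expStep ε ε⁻¹ s) (𝓝[>] 0)
    (𝓝 (indicator (Ioi 0) (fun _ => (1 : ℂ)) s)) := by
  rcases lt_or_ge 0 s with hs | hs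
  · have hsmall : Tendsto (fun ε : ℝ => Real.exp (-(ε * s))) (𝓝[>] 0) (𝓝 1) := by
      have hcont : Continuous fun ε : ℝ => Real.exp (-(ε * s)) := by fun_prop
      simpa using (hcont.tendsto 0).mono_left nhdsWithin_le_nhds
    have hlarge : Tendsto (fun ε : ℝ => Real.exp (-(ε⁻¹ * s))) (𝓝[>] 0) (𝓝 0) :=
      Real.tendsto_exp_neg_atTop_nhds_zero.comp
        (Tendsto.atTop_mul_const hs tendsto_inv_nhdsGT_zero)
    simpa [expStep, indicator_of_mem (mem_Ioi.2 hs), max_eq_left hs.le] using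
      (hsmall.sub hlarge).ofReal
  · simp [expStep, indicator_of_notMem (notMem_Ioi.2 hs), max_eq_right hs]

/-- The characteristic function `t ↦ ∫ Q e^{2πits}` of the distribution of the real phase `s` under
the complex density `Q`. -/
def charIntegral {X : Type*} [MeasurableSpace X] (μ : Measure X) (Q : X → ℂ) (s : X → ℝ) (t : ℝ) :
    ℂ :=
  ∫ x, Q x * phase (t * s x) ∂μ

variable {X : Type*} [MeasurableSpace X] {μ : Measure X} [SFinite μ] {Q : X → ℂ} {s : X → ℝ}

lemma measurable_phase_mul (hs : Measurable s) : Measurable fun z : ℝ × X => phase (z.1 * s z.2) :=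
  continuous_phase.measurable.comp (measurable_fst.mul (hs.comp measurable_snd))

lemma aestronglyMeasurable_charIntegral (hQ : AEStronglyMeasurable Q μ) (hs : Measurable s) :
    AEStronglyMeasurable (charIntegral μ Q s) volume :=
  (hQ.comp_snd.mul (measurable_phase_mul hs).aestronglyMeasurable).integral_prod_right'

lemma integral_expStep_mul (hQ : Integrable Q μ) (hs : Measurable s) (ha : 0 < a) (hb : 0 < b) :
    ∫ x, expStep a b (s x) * Q x ∂μ = ∫ t, expStepKernel a b t * charIntegral μ Q s t := by
  have hprod : Integrable (Function.uncurry fun (t : ℝ) (x : X) =>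
      expStepKernel a b t * (Q x * phase (t * s x))) (volume.prod μ) := by
    refine (((integrable_expStepKernel ha hb).mul_prod hQ).mul_bdd (c := 1)
      (measurable_phase_mul hs).aestronglyMeasurable (ae_of_all _ fun z => by simp)).congr
      (ae_of_all _ fun z => mul_assoc _ _ _)
  simp_rw [charIntegral, ← integral_const_mul, integral_integral_swap hprod,
    expStep_eq_integral ha hb, ← integral_mul_const]
  simp only [mul_assoc, mul_comm (Q _)]

/-- Fourier inversion for `expStep ε ε⁻¹` as `ε → 0`. -/
lemma integral_indicator_pos_mul (hQ : Integrable Q μ) (hs : Measurable s)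
    (hF : Integrable fun t : ℝ => (t : ℂ)⁻¹ * charIntegral μ Q s t) :
    ∫ x, indicator (Ioi 0) (fun _ => (1 : ℂ)) (s x) * Q x ∂μ =
      ∫ t : ℝ, (2 * Real.pi * t * Complex.I)⁻¹ * charIntegral μ Q s t := by
  have hpos : ∀ᶠ ε in 𝓝[>] (0 : ℝ), 0 < ε := self_mem_nhdsWithin
  have hleft : Tendsto (fun ε : ℝ => ∫ x, expStep ε ε⁻¹ (s x) * Q x ∂μ) (𝓝[>] 0)
      (𝓝 (∫ x, indicator (Ioi 0) (fun _ => (1 : ℂ)) (s x) * Q x ∂μ)) := by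
    refine tendsto_integral_filter_of_dominated_convergence (fun x => ‖Q x‖)
      (.of_forall fun ε => ?_) (hpos.mono fun ε hε => ae_of_all _ fun x => ?_) hQ.norm
      (ae_of_all _ fun x => (tendsto_expStep _).mul_const _)
    · exact (continuous_expStep.measurable.comp hs).aestronglyMeasurable.mul
        hQ.aestronglyMeasurable
    · rw [norm_mul]
      exact mul_le_of_le_one_left (norm_nonneg _) (norm_expStep_le hε (inv_pos.2 hε) _)
  have hright : Tendsto (fun ε : ℝ => ∫ t, expStepKernel ε ε⁻¹ t * charIntegral μ Q s t) (𝓝[>] 0)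
      (𝓝 (∫ t : ℝ, (2 * Real.pi * t * Complex.I)⁻¹ * charIntegral μ Q s t)) := by
    refine tendsto_integral_filter_of_dominated_convergence
      (fun t => 2 * ‖(t : ℂ)⁻¹ * charIntegral μ Q s t‖) (hpos.mono fun ε hε => ?_)
      (.of_forall fun ε => ?_) (hF.norm.const_mul 2) ?_
    · exact (integrable_expStepKernel hε (inv_pos.2 hε)).aestronglyMeasurable.mul
        (aestronglyMeasurable_charIntegral hQ.aestronglyMeasurable hs)
    · filter_upwards [Measure.ae_ne volume (0 : ℝ)] with t ht
      rw [norm_mul, norm_mul, ← mul_assoc, norm_inv, Complex.norm_real, Real.norm_eq_abs]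
      gcongr
      exact norm_expStepKernel_le ht
    · filter_upwards [Measure.ae_ne volume (0 : ℝ)] with t ht
      exact (tendsto_expStepKernel ht).mul_const _
  refine tendsto_nhds_unique hleft (hright.congr' (hpos.mono fun ε hε => ?_))
  exact (integral_expStep_mul hQ hs hε (inv_pos.2 hε)).symm

end HalfLine

section HalfSpaceForm

lemma charIntegral_pairDot (f g h : SchwartzMap V2 ℂ) (u w : V2) (t : ℝ) :
    charIntegral volume (fun ξ : V2 × V2 => FT f ξ.1 * (FT g ξ.2 * FT h (-(ξ.1 + ξ.2))))
      (pairDot u w) t = ∫ x, f (x + t • u) * (g (x + t • w) * h x) := by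
  have hphase (ξ : V2 × V2) (x : V2) :
      phase (t * pairDot u w ξ) * phase (dot2 (ξ.1 + ξ.2) x) =
        phase (dot2 ξ.1 (x + t • u)) * phase (dot2 ξ.2 (x + t • w)) := by
    rw [← phase_add, ← phase_add, pairDot_apply]
    simp only [dot2, Prod.fst_add, Prod.snd_add, Prod.smul_fst, Prod.smul_snd, smul_eq_mul]
    ring_nf
  calc charIntegral volume (fun ξ : V2 × V2 => FT f ξ.1 * (FT g ξ.2 * FT h (-(ξ.1 + ξ.2))))
        (pairDot u w) t
      = ∫ ξ : V2 × V2, FT f ξ.1 * FT g ξ.2 * phase (t * pairDot u w ξ) *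
          FT h (-(ξ.1 + ξ.2)) := by
        refine integral_congr_ae (ae_of_all _ fun ξ => ?_)
        ring
    _ = ∫ x, (∫ ξ : V2 × V2, FT f ξ.1 * FT g ξ.2 * phase (t * pairDot u w ξ) *
          phase (dot2 (ξ.1 + ξ.2) x)) * h x :=
        (integral_phase_mul ((integrable_FT_mul f g).mul_bdd (c := 1) (by fun_prop)
          (ae_of_all _ fun z => by simp)) h).symm
    _ = ∫ x, f (x + t • u) * (g (x + t • w) * h x) := by
        refine integral_congr_ae (ae_of_all _ fun x => ?_)
        simp_rw [mul_assoc, hphase, ← mul_assoc (f _), FT_inversion f, FT_inversion g,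
          ← integral_prod_mul]
        congr 1
        refine integral_congr_ae (ae_of_all _ fun ξ => ?_)
        ring

end HalfSpaceForm

section RandomSigns

variable {ι : Type*} [Fintype ι]

lemma eLpNorm_signed_sum_le {X E : Type*} [MeasurableSpace X] {μ : Measure X}
    [NormedAddCommGroup E] {z : ι → X → E} {K : Set X} (hK : MeasurableSet K) {q : ℝ}
    (hq : 0 < q) (hz : ∀ x, ∑ i, ‖z i x‖ ≤ indicator K 1 x) (ε : ι → ℤˣ) :
    eLpNorm (∑ i, ε i • z i) (ENNReal.ofReal q) μ ≤ μ K ^ (1 / q) := by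
  have hnorm (x : X) : ‖(∑ i, ε i • z i) x‖ ≤ indicator K 1 x :=
    calc ‖(∑ i, ε i • z i) x‖ ≤ ∑ i, ‖ε i • z i x‖ := by
          simpa only [Finset.sum_apply, Pi.smul_apply] using
            norm_sum_le _ fun i => ε i • z i x
      _ = ∑ i, ‖z i x‖ := Finset.sum_congr rfl fun i _ => by
          rcases Int.units_eq_one_or (ε i) with h | h <;> simp [h]
      _ ≤ indicator K 1 x := hz x
  calc eLpNorm (∑ i, ε i • z i) (ENNReal.ofReal q) μ
      ≤ eLpNorm (indicator K fun _ => (1 : ℝ)) (ENNReal.ofReal q) μ := eLpNorm_mono_real hnorm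
    _ = μ K ^ (1 / q) := by
        rw [eLpNorm_indicator_const hK (by simpa using hq) ENNReal.ofReal_ne_top,
          ENNReal.toReal_ofReal hq.le, enorm_one, one_mul]

variable [DecidableEq ι]

lemma sum_signs_mul (i j : ι) :
    ∑ ε : ι → ℤˣ, (ε i : ℤ) * ε j = if i = j then (Fintype.card (ι → ℤˣ) : ℤ) else 0 := by
  split_ifs with hij
  · subst hij
    simp only [Int.units_coe_mul_self, Finset.sum_const, Finset.card_univ, nsmul_eq_mul, mul_one]
  · have hflip : ∑ ε : ι → ℤˣ, (ε i : ℤ) * ε j = ∑ ε : ι → ℤˣ, -((ε i : ℤ) * ε j) := by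
      refine Fintype.sum_equiv (Equiv.mulLeft (Pi.mulSingle i (-1 : ℤˣ))) _ _ fun ε => ?_
      simp [Pi.mulSingle_eq_of_ne (Ne.symm hij)]
    rw [Finset.sum_neg_distrib] at hflip
    exact self_eq_neg.1 hflip

lemma sum_signs_quadratic {M : Type*} [AddCommGroup M] (a : ι → ι → M) :
    ∑ ε : ι → ℤˣ, ∑ i, ∑ j, ((ε i : ℤ) * ε j) • a i j =
      (Fintype.card (ι → ℤˣ) : ℤ) • ∑ i, a i i := by
  rw [Finset.sum_comm, Finset.smul_sum]
  refine Finset.sum_congr rfl fun i _ => ?_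
  rw [Finset.sum_comm]
  simp_rw [← Finset.sum_smul, sum_signs_mul, ite_smul, zero_smul]
  simp only [Finset.sum_ite_eq, Finset.mem_univ, if_true]

lemma sum_signs_norm_sq {E : Type*} [NormedAddCommGroup E] [InnerProductSpace ℝ E] (z : ι → E) :
    ∑ ε : ι → ℤˣ, ‖∑ i, ε i • z i‖ ^ 2 = Fintype.card (ι → ℤˣ) * ∑ i, ‖z i‖ ^ 2 := by
  have hinner (ε : ι → ℤˣ) : ‖∑ i, ε i • z i‖ ^ 2 =
      ∑ i, ∑ j, ((ε i : ℤ) * ε j) • inner ℝ (z i) (z j) := by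
    simp_rw [Units.smul_def, ← Int.cast_smul_eq_zsmul ℝ, ← real_inner_self_eq_norm_sq, sum_inner,
      inner_sum, real_inner_smul_left, real_inner_smul_right, smul_eq_mul, Int.cast_mul, mul_assoc]
  simp_rw [hinner, sum_signs_quadratic, real_inner_self_eq_norm_sq, zsmul_eq_mul, Int.cast_natCast]

section Lp

variable {X E : Type*} [MeasurableSpace X] {μ : Measure X} [NormedAddCommGroup E]

lemma eLpNorm_two_sq (z : X → E) : eLpNorm z 2 μ ^ 2 = ∫⁻ x, ‖z x‖ₑ ^ 2 ∂μ := by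
  simpa using eLpNorm_nnreal_pow_eq_lintegral (f := z) (μ := μ) (p := 2) two_ne_zero

lemma sum_signs_eLpNorm_sq [InnerProductSpace ℝ E] {z : ι → X → E}
    (hz : ∀ i, AEStronglyMeasurable (z i) μ) :
    ∑ ε : ι → ℤˣ, eLpNorm (∑ i, ε i • z i) 2 μ ^ 2 =
      Fintype.card (ι → ℤˣ) * ∑ i, eLpNorm (z i) 2 μ ^ 2 := by
  have hpointwise (x : X) : ∑ ε : ι → ℤˣ, ‖(∑ i, ε i • z i) x‖ₑ ^ 2 =
      Fintype.card (ι → ℤˣ) * ∑ i, ‖z i x‖ₑ ^ 2 := by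
    have hnnnorm : ∑ ε : ι → ℤˣ, ‖∑ i, ε i • z i x‖₊ ^ 2 =
        Fintype.card (ι → ℤˣ) * ∑ i, ‖z i x‖₊ ^ 2 :=
      NNReal.coe_injective (by simpa using sum_signs_norm_sq fun i => z i x)
    simp only [Finset.sum_apply, Pi.smul_apply, enorm_eq_nnnorm]
    exact_mod_cast congr_arg ((↑) : NNReal → ENNReal) hnnnorm
  have hsum (ε : ι → ℤˣ) : AEStronglyMeasurable (∑ i, ε i • z i) μ :=
    Finset.aestronglyMeasurable_sum _ fun i _ => (hz i).const_smul (ε i)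
  simp_rw [eLpNorm_two_sq]
  rw [← lintegral_finsetSum' _ fun ε _ => (hsum ε).enorm.pow_const 2,
    ← lintegral_finsetSum' _ fun i _ => (hz i).enorm.pow_const 2,
    ← lintegral_const_mul'' _ (Finset.aemeasurable_fun_sum _ fun i _ => (hz i).enorm.pow_const 2)]
  simp_rw [hpointwise]

lemma eLpNorm_le_rpow_mul_of_support_subset {z : X → E} (hz : AEStronglyMeasurable z μ) {s : Set X}
    (hs : Function.support z ⊆ s) {p q : ENNReal} (hpq : p ≤ q) :
    eLpNorm z p μ ≤ μ s ^ (1 / p.toReal - 1 / q.toReal) * eLpNorm z q μ := by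
  have hle := eLpNorm_le_eLpNorm_mul_rpow_measure_univ hpq (hz.restrict (s := s))
  rwa [eLpNorm_restrict_eq_of_support_subset hs, eLpNorm_restrict_eq_of_support_subset hs,
    Measure.restrict_apply_univ, mul_comm] at hle

lemma le_one_add_sq (a : ENNReal) : a ≤ 1 + a ^ 2 := by
  rcases le_total a 1 with ha | ha
  · exact ha.trans le_self_add
  · exact (le_self_pow ha two_ne_zero).trans le_add_self

lemma eLpNorm_le_rpow_mul_one_add_sq {z : X → E} (hz : AEStronglyMeasurable z μ) {s : Set X}
    (hs : Function.support z ⊆ s) {r : ℝ} (hr : 0 < r) (hr2 : r ≤ 2) :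
    eLpNorm z (ENNReal.ofReal r) μ ≤ μ s ^ (1 / r - 1 / 2) * (1 + eLpNorm z 2 μ ^ 2) := by
  have hle := eLpNorm_le_rpow_mul_of_support_subset (q := 2) hz hs
    (ENNReal.ofReal_le_ofNat.2 hr2)
  rw [ENNReal.toReal_ofReal hr.le, ENNReal.toReal_ofNat] at hle
  exact hle.trans (by gcongr; exact le_one_add_sq _)

end Lp

variable {D : Set (V2 × V2)} {p q r : ℝ} {C : ENNReal}

lemma sum_signs_trilinearForm (hD : MeasurableSet D) (f : SchwartzMap V2 ℂ)
    (g h : ι → SchwartzMap V2 ℂ) :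
    ∑ ε : ι → ℤˣ, trilinearForm D f (∑ i, ε i • g i : SchwartzMap V2 ℂ)
        (∑ i, ε i • h i : SchwartzMap V2 ℂ) =
      Fintype.card (ι → ℤˣ) * ∑ i, trilinearForm D f (g i) (h i) := by
  have hquad := sum_signs_quadratic fun i j => trilinearForm D f (g i) (h j)
  simp_rw [zsmul_eq_mul, Int.cast_mul, Int.cast_natCast] at hquad
  simp_rw [← hquad, Units.smul_def, ← Int.cast_smul_eq_zsmul ℂ, trilinearForm_sum_sum _ hD]

lemma TrilinearBound.card_mul_enorm_sum_le (hB : TrilinearBound D p q r C) (hD : MeasurableSet D)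
    (f : SchwartzMap V2 ℂ) (g h : ι → SchwartzMap V2 ℂ) :
    Fintype.card (ι → ℤˣ) * ‖∑ i, trilinearForm D f (g i) (h i)‖ₑ ≤
      ∑ ε : ι → ℤˣ, C * (eLpNorm f (ENNReal.ofReal p) volume *
        (eLpNorm (∑ i, ε i • ⇑(g i)) (ENNReal.ofReal q) volume *
          eLpNorm (∑ i, ε i • ⇑(h i)) (ENNReal.ofReal r) volume)) := by
  have hcoe (ε : ι → ℤˣ) (k : ι → SchwartzMap V2 ℂ) :
      ⇑(∑ i, ε i • k i : SchwartzMap V2 ℂ) = ∑ i, ε i • ⇑(k i) := by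
    ext x
    simp [sum_apply, Units.smul_def]
  calc Fintype.card (ι → ℤˣ) * ‖∑ i, trilinearForm D f (g i) (h i)‖ₑ
      = ‖∑ ε : ι → ℤˣ, trilinearForm D f (∑ i, ε i • g i : SchwartzMap V2 ℂ)
          (∑ i, ε i • h i : SchwartzMap V2 ℂ)‖ₑ := by
        rw [sum_signs_trilinearForm hD, enorm_mul, ← ofReal_norm (Fintype.card (ι → ℤˣ) : ℂ),
          Complex.norm_natCast, ENNReal.ofReal_natCast]
    _ ≤ ∑ ε : ι → ℤˣ, _ := (enorm_sum_le _ _).trans (Finset.sum_le_sum fun ε _ => by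
        simpa only [hcoe] using hB f (∑ i, ε i • g i) (∑ i, ε i • h i))

end RandomSigns

/-- The square function bound: averaging over random signs exploits the orthogonality of the `h i`
in `L²`, while the exponent `r < 2` makes a small common support `E` pay off. -/
lemma TrilinearBound.enorm_sum_le {ι : Type*} [Fintype ι] {D : Set (V2 × V2)} {p q r : ℝ}
    {C : ENNReal} (hB : TrilinearBound D p q r C) (hD : MeasurableSet D) (hq : 0 < q) (hr : 0 < r)
    (hr2 : r ≤ 2) (f : SchwartzMap V2 ℂ) {g h : ι → SchwartzMap V2 ℂ} {K E : Set V2}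
    (hK : MeasurableSet K) (hg : ∀ x, ∑ i, ‖g i x‖ ≤ indicator K 1 x)
    (hh : ∀ i, Function.support (h i) ⊆ E) :
    ‖∑ i, trilinearForm D f (g i) (h i)‖ₑ ≤ C * (eLpNorm f (ENNReal.ofReal p) volume *
      (volume K ^ (1 / q) * (volume E ^ (1 / r - 1 / 2) *
        (1 + ∑ i, eLpNorm (h i) 2 volume ^ 2)))) := by
  classical
  set N : ENNReal := (Fintype.card (ι → ℤˣ) : ENNReal)
  have hsupp (ε : ι → ℤˣ) : Function.support (∑ i, ε i • ⇑(h i)) ⊆ E := by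
    refine fun x hx => by_contra fun hxE => hx ?_
    have hzero (i : ι) : h i x = 0 := by_contra fun h0 => hxE (hh i h0)
    simp [Finset.sum_apply, hzero]
  have hcont (i : ι) : AEStronglyMeasurable (h i) volume := (h i).continuous.aestronglyMeasurable
  have hsum : N * ‖∑ i, trilinearForm D f (g i) (h i)‖ₑ ≤
      ∑ ε : ι → ℤˣ, C * (eLpNorm f (ENNReal.ofReal p) volume * (volume K ^ (1 / q) *
        (volume E ^ (1 / r - 1 / 2) * (1 + eLpNorm (∑ i, ε i • ⇑(h i)) 2 volume ^ 2)))) := by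
    refine (hB.card_mul_enorm_sum_le hD f g h).trans (Finset.sum_le_sum fun ε _ => ?_)
    gcongr
    · exact eLpNorm_signed_sum_le hK hq hg ε
    · exact eLpNorm_le_rpow_mul_one_add_sq
        (Finset.aestronglyMeasurable_sum _ fun i _ => (hcont i).const_smul (ε i)) (hsupp ε) hr hr2
  have hN : ∑ _ε : ι → ℤˣ, (1 : ENNReal) = N := by simp [N]
  simp_rw [← Finset.mul_sum, Finset.sum_add_distrib, sum_signs_eLpNorm_sq hcont, hN] at hsum
  refine (ENNReal.mul_le_mul_iff_right (a := N) (by simp [N]) (by simp [N])).1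
    (hsum.trans_eq ?_)
  ring

section DigitLines

/-- The value `2^{-(i+1)}` of the `i`-th binary digit after the point. -/
def dyad (i : ℕ) : ℝ := (1 / 2) ^ (i + 1)

/-- The number in `[0, 1]` whose binary digits equal to `1` are those in `S`. -/
def digitSlope (S : Finset ℕ) : ℝ := ∑ i ∈ S, dyad i

/-- The line of slope `digitSlope S` whose `i`-th digit contribution vanishes at `x = i / n`. Hence
near `x = k / n` the lines `digitLine n S` nearly depend only on the first `k` digits. -/
def digitLine (n : ℕ) (S : Finset ℕ) (x : ℝ) : ℝ := ∑ i ∈ S, dyad i * (x - i / n)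

lemma digitLine_add (n : ℕ) (S : Finset ℕ) (x t : ℝ) :
    digitLine n S (x + t) = digitLine n S x + digitSlope S * t := by
  simp only [digitLine, digitSlope, Finset.sum_mul, ← Finset.sum_add_distrib]
  exact Finset.sum_congr rfl fun i _ => by ring

lemma dyad_pos (i : ℕ) : 0 < dyad i := by unfold dyad; positivity

lemma sum_Ico_dyad {k n : ℕ} (h : k ≤ n) :
    ∑ i ∈ Finset.Ico k n, dyad i = (1 / 2) ^ k - (1 / 2) ^ n := by
  induction n, h using Nat.le_induction with
  | base => simp
  | succ n hn ih => rw [Finset.sum_Ico_succ_top hn, ih, dyad]; ring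

lemma sum_Ico_dyad_mul {k n : ℕ} (h : k ≤ n) :
    ∑ i ∈ Finset.Ico k n, dyad i * ((i : ℝ) - k + 1) =
      2 * (1 / 2) ^ k - ((n : ℝ) - k + 2) * (1 / 2) ^ n := by
  induction n, h using Nat.le_induction with
  | base => simp
  | succ n hn ih => rw [Finset.sum_Ico_succ_top hn, ih, dyad]; push_cast; ring

lemma digitSlope_nonneg (S : Finset ℕ) : 0 ≤ digitSlope S :=
  Finset.sum_nonneg fun i _ => (dyad_pos i).le

variable {n : ℕ} {S : Finset ℕ} {x : ℝ}

lemma digitSlope_le_one (hS : S ⊆ Finset.range n) : digitSlope S ≤ 1 := by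
  calc digitSlope S ≤ ∑ i ∈ Finset.range n, dyad i :=
        Finset.sum_le_sum_of_subset_of_nonneg hS fun i _ _ => (dyad_pos i).le
    _ ≤ 1 := by
        rw [Finset.range_eq_Ico, sum_Ico_dyad n.zero_le, pow_zero]
        exact sub_le_self _ (by positivity)

lemma abs_digitLine_le (hS : S ⊆ Finset.range n) {M : ℝ} (hx : 0 ≤ x) (hxM : x ≤ M)
    (hM : 1 ≤ M) : |digitLine n S x| ≤ M := by
  calc |digitLine n S x| ≤ ∑ i ∈ S, |dyad i * (x - i / n)| := Finset.abs_sum_le_sum_abs _ _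
    _ ≤ ∑ i ∈ S, dyad i * M := by
        refine Finset.sum_le_sum fun i hi => ?_
        have hin : i < n := Finset.mem_range.1 (hS hi)
        have hle : (i : ℝ) / n ≤ 1 := div_le_one_of_le₀ (by exact_mod_cast hin.le) (by positivity)
        have hnonneg : 0 ≤ (i : ℝ) / n := by positivity
        rw [abs_mul, abs_of_pos (dyad_pos i)]
        exact mul_le_mul_of_nonneg_left (abs_le.2 ⟨by linarith, by linarith⟩) (dyad_pos i).le
    _ = digitSlope S * M := (Finset.sum_mul _ _ _).symm
    _ ≤ M := mul_le_of_le_one_left (by linarith) (digitSlope_le_one hS)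

section SubsetSums

variable {R : Type*} [CommRing R] [LinearOrder R] [IsStrictOrderedRing R] {c : ℕ → R} {δ : R}

lemma le_sum_sub_sum_of_superdecreasing {T T' : Finset ℕ} {i : ℕ} (hc : ∀ m < n, 0 ≤ c m)
    (hsup : δ + ∑ m ∈ Finset.Ico (i + 1) n, c m ≤ c i) (hT : T ⊆ Finset.range n)
    (hT' : T' ⊆ Finset.range n) (hi : i ∈ T) (hi' : i ∉ T') (hlt : ∀ m < i, (m ∈ T ↔ m ∈ T')) :
    δ ≤ ∑ m ∈ T, c m - ∑ m ∈ T', c m := by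
  have hsub : T' ⊆ T.erase i ∪ Finset.Ico (i + 1) n := by
    intro m hm
    rcases lt_trichotomy m i with h | rfl | h
    · exact Finset.mem_union_left _ (Finset.mem_erase.2 ⟨h.ne, (hlt m h).2 hm⟩)
    · exact absurd hm hi'
    · exact Finset.mem_union_right _ (Finset.mem_Ico.2 ⟨h, Finset.mem_range.1 (hT' hm)⟩)
  have hle : ∑ m ∈ T', c m ≤ ∑ m ∈ T.erase i, c m + ∑ m ∈ Finset.Ico (i + 1) n, c m := by
    rw [← Finset.sum_union_inter]
    refine le_add_of_le_of_nonneg (Finset.sum_le_sum_of_subset_of_nonneg hsub fun m hm _ => hc m ?_)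
      (Finset.sum_nonneg fun m hm => hc m (Finset.mem_Ico.1 (Finset.mem_inter.1 hm).2).2)
    rcases Finset.mem_union.1 hm with h | h
    · exact Finset.mem_range.1 (hT (Finset.mem_of_mem_erase h))
    · exact (Finset.mem_Ico.1 h).2
  rw [← Finset.add_sum_erase T c hi]
  linarith

/-- The first index at which `S` and `S'` differ dominates all later terms. -/
lemma le_abs_sum_sub_sum_of_superdecreasing (hc : ∀ i < n, 0 ≤ c i)
    (hsup : ∀ i < n, δ + ∑ m ∈ Finset.Ico (i + 1) n, c m ≤ c i) {S S' : Finset ℕ}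
    (hS : S ⊆ Finset.range n) (hS' : S' ⊆ Finset.range n) (hne : S ≠ S') :
    δ ≤ |∑ i ∈ S, c i - ∑ i ∈ S', c i| := by
  have hD : (symmDiff S S').Nonempty :=
    Finset.nonempty_iff_ne_empty.2 fun h => hne (symmDiff_eq_bot.1 h)
  set i := (symmDiff S S').min' hD
  have hlt (m : ℕ) (hm : m < i) : m ∈ S ↔ m ∈ S' := by
    by_contra h
    have hmem : m ∈ symmDiff S S' := by rw [Finset.mem_symmDiff]; tauto
    exact absurd (Finset.min'_le _ _ hmem) (not_le.2 hm)
  rcases Finset.mem_symmDiff.1 (Finset.min'_mem _ hD) with h | h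
  · exact (le_sum_sub_sum_of_superdecreasing hc (hsup i (Finset.mem_range.1 (hS h.1))) hS hS' h.1
      h.2 hlt).trans (le_abs_self _)
  · rw [abs_sub_comm]
    exact (le_sum_sub_sum_of_superdecreasing hc (hsup i (Finset.mem_range.1 (hS' h.1))) hS' hS h.1
      h.2 fun m hm => (hlt m hm).symm).trans (le_abs_self _)

end SubsetSums

lemma le_abs_digitLine_sub {S' : Finset ℕ} (hS : S ⊆ Finset.range n) (hS' : S' ⊆ Finset.range n)
    (hne : S ≠ S') (hx : 2 ≤ x) : (1 / 2) ^ n ≤ |digitLine n S x - digitLine n S' x| := by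
  have hfrac (i : ℕ) (hi : i < n) : 1 ≤ x - i / n := by
    have hle : (i : ℝ) / n ≤ 1 := div_le_one_of_le₀ (by exact_mod_cast hi.le) (by positivity)
    linarith
  refine le_abs_sum_sub_sum_of_superdecreasing (c := fun i => dyad i * (x - i / n))
    (fun i hi => mul_nonneg (dyad_pos i).le (by linarith [hfrac i hi])) (fun i hi => ?_) hS hS' hne
  calc (1 / 2) ^ n + ∑ m ∈ Finset.Ico (i + 1) n, dyad m * (x - m / n)
      ≤ (1 / 2) ^ n * (x - i / n) + ∑ m ∈ Finset.Ico (i + 1) n, dyad m * (x - i / n) := by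
        refine add_le_add (le_mul_of_one_le_right (by positivity) (hfrac i hi))
          (Finset.sum_le_sum fun m hm => mul_le_mul_of_nonneg_left ?_ (dyad_pos m).le)
        have him : i ≤ m := Nat.le_of_succ_le (Finset.mem_Ico.1 hm).1
        gcongr
    _ = dyad i * (x - i / n) := by
        rw [← Finset.sum_mul, sum_Ico_dyad (Nat.succ_le_of_lt hi), dyad, Nat.succ_eq_add_one,
          pow_succ]
        ring

lemma abs_digitLine_sub_filter_le (hn : 0 < n) (hS : S ⊆ Finset.range n) {k : ℕ} (hkn : k ≤ n)
    (hk : (k : ℝ) ≤ n * x) (hk' : n * x ≤ k + 1) :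
    |digitLine n S x - digitLine n (S.filter (· < k)) x| ≤ 2 * (1 / 2) ^ k / n := by
  have hn' : (0 : ℝ) < n := by exact_mod_cast hn
  have htail : digitLine n S x - digitLine n (S.filter (· < k)) x =
      digitLine n (S.filter (¬ · < k)) x := by
    rw [sub_eq_iff_eq_add']
    exact (Finset.sum_filter_add_sum_filter_not _ _ _).symm
  have hsub : S.filter (¬ · < k) ⊆ Finset.Ico k n := fun m hm =>
    Finset.mem_Ico.2 ⟨not_lt.1 (Finset.mem_filter.1 hm).2,
      Finset.mem_range.1 (hS (Finset.mem_filter.1 hm).1)⟩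
  have hle {i : ℕ} (hi : i ∈ Finset.Ico k n) : (k : ℝ) ≤ i := by
    exact_mod_cast (Finset.mem_Ico.1 hi).1
  calc |digitLine n S x - digitLine n (S.filter (· < k)) x|
      ≤ ∑ i ∈ S.filter (¬ · < k), |dyad i * (x - i / n)| :=
        htail ▸ Finset.abs_sum_le_sum_abs _ _
    _ ≤ ∑ i ∈ Finset.Ico k n, |dyad i * (x - i / n)| :=
        Finset.sum_le_sum_of_subset_of_nonneg hsub fun _ _ _ => abs_nonneg _
    _ ≤ ∑ i ∈ Finset.Ico k n, dyad i * (((i : ℝ) - k + 1) / n) := by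
        refine Finset.sum_le_sum fun i hi => ?_
        rw [abs_mul, abs_of_pos (dyad_pos i), show x - i / n = (n * x - i) / n by field_simp,
          abs_div, abs_of_pos hn']
        refine mul_le_mul_of_nonneg_left ?_ (dyad_pos i).le
        gcongr
        exact abs_le.2 ⟨by linarith, by linarith [hle hi]⟩
    _ = (2 * (1 / 2) ^ k - ((n : ℝ) - k + 2) * (1 / 2) ^ n) / n := by
        rw [← sum_Ico_dyad_mul hkn, Finset.sum_div]
        exact Finset.sum_congr rfl fun i _ => by ring
    _ ≤ 2 * (1 / 2) ^ k / n := by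
        have hkn' : (k : ℝ) ≤ n := by exact_mod_cast hkn
        gcongr
        exact sub_le_self _ (mul_nonneg (by linarith) (by positivity))

/-- The union over all sets `S` of `n` digits of the intervals of length `κ 2⁻ⁿ` above
`κ * digitLine n S x`: the slice at abscissa `x` of a Kakeya family of `2ⁿ` tubes. -/
def digitSlice (n : ℕ) (κ x : ℝ) : Set ℝ :=
  ⋃ S ∈ (Finset.range n).powerset,
    Ioo (κ * digitLine n S x) (κ * digitLine n S x + κ * (1 / 2) ^ n)

/-- Sets of digits with the same first `k ≈ n x` elements give nearly the same line at `x`. -/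
lemma digitSlice_subset {κ : ℝ} (hn : 0 < n) (hκ : 0 ≤ κ) {k : ℕ} (hkn : k ≤ n)
    (hk : (k : ℝ) ≤ n * x) (hk' : n * x ≤ k + 1) :
    digitSlice n κ x ⊆ ⋃ T ∈ (Finset.range k).powerset,
      Icc (κ * (digitLine n T x - 2 * (1 / 2) ^ k / n))
        (κ * (digitLine n T x + 2 * (1 / 2) ^ k / n + (1 / 2) ^ n)) := by
  refine iUnion₂_subset fun S hS y hy => ?_
  have htail := abs_le.1 (abs_digitLine_sub_filter_le hn (Finset.mem_powerset.1 hS) hkn hk hk')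
  refine mem_biUnion (x := S.filter (· < k)) ?_ ⟨?_, ?_⟩
  · exact Finset.mem_powerset.2 fun m hm => Finset.mem_range.2 (Finset.mem_filter.1 hm).2
  · exact (mul_le_mul_of_nonneg_left (by linarith) hκ).trans hy.1.le
  · refine hy.2.le.trans ?_
    rw [← mul_add]
    exact mul_le_mul_of_nonneg_left (by linarith) hκ

lemma two_pow_mul_half_pow_le {k : ℕ} (hn : 0 < n) (hkn : 2 * k ≤ n) :
    (2 : ℝ) ^ k * (1 / 2) ^ n ≤ 2 / n := by
  obtain ⟨m, rfl⟩ := Nat.exists_eq_add_of_le (by lia : k ≤ n)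
  have hm : ((k + m : ℕ) : ℝ) ≤ 2 * 2 ^ m := by
    have hlt := m.lt_two_pow_self
    exact_mod_cast (by lia : k + m ≤ 2 * 2 ^ m)
  rw [le_div_iff₀ (by exact_mod_cast hn), pow_add, ← mul_assoc, ← mul_pow,
    mul_one_div_cancel two_ne_zero, one_pow, one_mul]
  calc (1 / 2 : ℝ) ^ m * ((k + m : ℕ) : ℝ) ≤ (1 / 2) ^ m * (2 * 2 ^ m) := by gcongr
    _ = 2 := by rw [mul_left_comm, ← mul_pow]; norm_num

lemma volume_digitSlice_le {κ : ℝ} (hn : 0 < n) (hκ : 0 ≤ κ) (hx : 0 ≤ x) (hx2 : x ≤ 1 / 2) :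
    volume (digitSlice n κ x) ≤ ENNReal.ofReal (6 * κ / n) := by
  set k := ⌊(n : ℝ) * x⌋₊
  have hk : (k : ℝ) ≤ n * x := Nat.floor_le (by positivity)
  have hkn : 2 * k ≤ n := by
    have hle : 2 * (k : ℝ) ≤ n := by nlinarith [n.cast_nonneg (α := ℝ)]
    exact_mod_cast hle
  have hpow : (2 : ℝ) ^ k * (1 / 2) ^ k = 1 := by rw [← mul_pow]; norm_num
  set d : ℝ := 2 * (1 / 2) ^ k / n
  calc volume (digitSlice n κ x)
      ≤ ∑ T ∈ (Finset.range k).powerset, volume (Icc (κ * (digitLine n T x - d))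
          (κ * (digitLine n T x + d + (1 / 2) ^ n))) :=
        (measure_mono (digitSlice_subset hn hκ (by lia) hk (Nat.lt_floor_add_one _).le)).trans
          (measure_biUnion_finset_le _ _)
    _ = ∑ T ∈ (Finset.range k).powerset, ENNReal.ofReal (κ * (2 * d + (1 / 2) ^ n)) := by
        refine Finset.sum_congr rfl fun T _ => ?_
        rw [Real.volume_Icc]
        ring_nf
    _ = ENNReal.ofReal (2 ^ k * (κ * (2 * d + (1 / 2) ^ n))) := by
        rw [Finset.sum_const, Finset.card_powerset, Finset.card_range, nsmul_eq_mul,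
          ENNReal.ofReal_mul (p := 2 ^ k) (by positivity), ENNReal.ofReal_pow two_pos.le,
          ENNReal.ofReal_ofNat, Nat.cast_pow, Nat.cast_ofNat]
    _ = ENNReal.ofReal (κ * (4 / n * (2 ^ k * (1 / 2) ^ k) + 2 ^ k * (1 / 2) ^ n)) := by
        congr 1
        simp only [d]
        ring
    _ ≤ ENNReal.ofReal (κ * (4 / n * 1 + 2 / n)) := by
        rw [hpow]
        gcongr
        exact two_pow_mul_half_pow_le hn hkn
    _ = ENNReal.ofReal (6 * κ / n) := by ring_nf

end DigitLines

section Bumps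

variable {a b c d t : ℝ}

/-- A smooth function with values in `[0, 1]`, positive exactly on `(a, b)`. -/
def bump (a b x : ℝ) : ℝ := Real.smoothTransition (x - a) * Real.smoothTransition (b - x)

lemma bump_nonneg (a b x : ℝ) : 0 ≤ bump a b x :=
  mul_nonneg (Real.smoothTransition.nonneg _) (Real.smoothTransition.nonneg _)

lemma bump_le_one (a b x : ℝ) : bump a b x ≤ 1 :=
  mul_le_one₀ (Real.smoothTransition.le_one _) (Real.smoothTransition.nonneg _)
    (Real.smoothTransition.le_one _)

lemma contDiff_bump : ContDiff ℝ (⊤ : ℕ∞) (bump a b) :=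
  (Real.smoothTransition.contDiff.comp (contDiff_id.sub contDiff_const)).mul
    (Real.smoothTransition.contDiff.comp (contDiff_const.sub contDiff_id))

@[fun_prop] lemma continuous_bump : Continuous (bump a b) := contDiff_bump.continuous

lemma support_bump (a b : ℝ) : Function.support (bump a b) = Ioo a b := by
  ext x
  simp only [Function.mem_support, bump, ne_eq, mul_eq_zero, not_or,
    Real.smoothTransition.zero_iff_nonpos, not_le, sub_pos, mem_Ioo]

lemma bump_ne_zero_iff {x : ℝ} : bump a b x ≠ 0 ↔ x ∈ Ioo a b := by
  rw [← support_bump, Function.mem_support]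

lemma integral_bump_sq_pos (hab : a < b) : 0 < ∫ x, bump a b x ^ 2 := by
  refine Continuous.integral_pos_of_hasCompactSupport_nonneg_nonzero (by fun_prop)
    (HasCompactSupport.of_support_subset_isCompact (isCompact_Icc (a := a) (b := b)) fun x hx => ?_)
    (fun x => sq_nonneg _) (x := (a + b) / 2) (pow_ne_zero 2 (bump_ne_zero_iff.2 ?_))
  · exact Ioo_subset_Icc_self (bump_ne_zero_iff.1 ((pow_ne_zero_iff two_ne_zero).1 hx))
  · constructor <;> linarith

/-- The correlation of the bumps on `(a, b)` and `(c, d)`. -/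
def bumpCorrelation (a b c d t : ℝ) : ℝ := ∫ x, bump a b (x + t) * bump c d x

lemma bumpCorrelation_nonneg : 0 ≤ bumpCorrelation a b c d t :=
  integral_nonneg fun _ => mul_nonneg (bump_nonneg _ _ _) (bump_nonneg _ _ _)

lemma mem_Ioo_of_mul_bump_ne_zero {x : ℝ} (h : bump a b (x + t) * bump c d x ≠ 0) :
    t ∈ Ioo (a - d) (b - c) := by
  have hxt := bump_ne_zero_iff.1 (left_ne_zero_of_mul h)
  have hx := bump_ne_zero_iff.1 (right_ne_zero_of_mul h)
  constructor <;> linarith [hxt.1, hxt.2, hx.1, hx.2]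

lemma mem_Ioo_of_bumpCorrelation_ne_zero (h : bumpCorrelation a b c d t ≠ 0) :
    t ∈ Ioo (a - d) (b - c) := by
  by_contra ht
  refine h (integral_eq_zero_of_ae (ae_of_all _ fun x => ?_))
  exact of_not_not fun hx => ht (mem_Ioo_of_mul_bump_ne_zero hx)

@[fun_prop] lemma continuous_bumpCorrelation : Continuous (bumpCorrelation a b c d) := by
  have hset : bumpCorrelation a b c d =
      fun t => ∫ x in Icc c d, bump a b (x + t) * bump c d x := by
    ext t
    refine (setIntegral_eq_integral_of_forall_compl_eq_zero fun x hx => ?_).symm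
    rw [of_not_not fun h : bump c d x ≠ 0 => hx (Ioo_subset_Icc_self (bump_ne_zero_iff.1 h)),
      mul_zero]
  rw [hset]
  exact continuous_parametric_integral_of_continuous (by fun_prop) isCompact_Icc

lemma bumpCorrelation_pos (hab : a < b) (hcd : c < d) :
    0 < bumpCorrelation a b c d ((a + b) / 2 - (c + d) / 2) := by
  refine Continuous.integral_pos_of_hasCompactSupport_nonneg_nonzero (by fun_prop)
    (HasCompactSupport.of_support_subset_isCompact (isCompact_Icc (a := c) (b := d)) fun x hx => ?_)
    (fun x => mul_nonneg (bump_nonneg _ _ _) (bump_nonneg _ _ _)) (x := (c + d) / 2)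
    (mul_ne_zero (bump_ne_zero_iff.2 ?_) (bump_ne_zero_iff.2 ?_))
  · exact Ioo_subset_Icc_self (bump_ne_zero_iff.1 (right_ne_zero_of_mul hx))
  · constructor <;> linarith
  · constructor <;> linarith

lemma continuous_bumpCorrelation_div (hda : d < a) :
    Continuous fun t => bumpCorrelation a b c d t / t := by
  have hmax : (fun t => bumpCorrelation a b c d t / t) =
      fun t => bumpCorrelation a b c d t / max t (a - d) := by
    ext t
    by_cases h : bumpCorrelation a b c d t = 0
    · simp only [h, zero_div]
    · rw [max_eq_left (mem_Ioo_of_bumpCorrelation_ne_zero h).1.le]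
  rw [hmax]
  exact continuous_bumpCorrelation.div (by fun_prop) fun t =>
    (lt_max_of_lt_right (sub_pos.2 hda)).ne'

lemma hasCompactSupport_bumpCorrelation_div :
    HasCompactSupport fun t => bumpCorrelation a b c d t / t :=
  HasCompactSupport.of_support_subset_isCompact (isCompact_Icc (a := a - d) (b := b - c))
    fun _ ht => Ioo_subset_Icc_self
      (mem_Ioo_of_bumpCorrelation_ne_zero (div_ne_zero_iff.1 ht).1)

lemma integral_bumpCorrelation_div_pos (hab : a < b) (hcd : c < d) (hda : d < a) :
    0 < ∫ t, bumpCorrelation a b c d t / t := by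
  refine (continuous_bumpCorrelation_div hda).integral_pos_of_hasCompactSupport_nonneg_nonzero
    hasCompactSupport_bumpCorrelation_div (fun t => ?_) (x := (a + b) / 2 - (c + d) / 2)
    (div_pos (bumpCorrelation_pos hab hcd) (by linarith)).ne'
  by_cases h : bumpCorrelation a b c d t = 0
  · exact (by rw [h, zero_div] : bumpCorrelation a b c d t / t = 0).ge
  · exact div_nonneg bumpCorrelation_nonneg
      ((sub_pos.2 hda).trans (mem_Ioo_of_bumpCorrelation_ne_zero h).1).le

end Bumps

section Tubes

variable {I : Set ℝ} {s y₀ δ : ℝ}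

/-- The part over `I` of the open strip of vertical width `δ` above the line of slope `s` through
`(0, y₀)`. -/
def tube (I : Set ℝ) (s y₀ δ : ℝ) : Set V2 := {z | z.1 ∈ I ∧ z.2 - (s * z.1 + y₀) ∈ Ioo 0 δ}

lemma measurePreserving_shear (s y₀ : ℝ) :
    MeasurePreserving (fun z : V2 => (z.1, z.2 - (s * z.1 + y₀))) :=
  (MeasurePreserving.id volume).skew_product (g := fun x y => y - (s * x + y₀)) (by fun_prop)
    (ae_of_all _ fun x => map_sub_right_eq_self volume (s * x + y₀))

lemma tube_eq_preimage (I : Set ℝ) (s y₀ δ : ℝ) :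
    tube I s y₀ δ = (fun z : V2 => (z.1, z.2 - (s * z.1 + y₀))) ⁻¹' (I ×ˢ Ioo 0 δ) := rfl

lemma measurableSet_tube (hI : MeasurableSet I) : MeasurableSet (tube I s y₀ δ) :=
  (measurePreserving_shear s y₀).measurable (hI.prod measurableSet_Ioo)

lemma volume_tube (hI : MeasurableSet I) :
    volume (tube I s y₀ δ) = volume I * ENNReal.ofReal δ := by
  rw [tube_eq_preimage, (measurePreserving_shear s y₀).measure_preimage
    (hI.prod measurableSet_Ioo).nullMeasurableSet, Measure.volume_eq_prod, Measure.prod_prod,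
    Real.volume_Ioo, sub_zero]

lemma integral_mul_comp_shear {F G : ℝ → ℝ} (hF : Continuous F) (hG : Continuous G) (s y₀ : ℝ) :
    ∫ z : V2, F z.1 * G (z.2 - (s * z.1 + y₀)) = (∫ x, F x) * ∫ y, G y := by
  have hmp := measurePreserving_shear s y₀
  calc ∫ z : V2, F z.1 * G (z.2 - (s * z.1 + y₀))
      = ∫ z, F z.1 * G z.2 ∂(volume.map fun z : V2 => (z.1, z.2 - (s * z.1 + y₀))) :=
        (integral_map hmp.aemeasurable
          (f := fun z : V2 => F z.1 * G z.2) (by fun_prop)).symm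
    _ = (∫ x, F x) * ∫ y, G y := by
        rw [hmp.map_eq, Measure.volume_eq_prod, integral_prod_mul]

end Tubes

section WavePackets

variable {a b c d s y₀ δ : ℝ}

lemma hasCompactSupport_packet : HasCompactSupport fun z : V2 =>
    ((bump a b z.1 * bump 0 1 (δ⁻¹ * (z.2 - (s * z.1 + y₀))) : ℝ) : ℂ) := by
  refine HasCompactSupport.of_support_subset_isCompact (((isCompact_Icc (a := a) (b := b)).prod
    (isCompact_Icc (a := -|δ|) (b := |δ|))).image
      (f := fun z : V2 => (z.1, z.2 + (s * z.1 + y₀))) (by fun_prop)) fun z hz => ?_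
  have hz' := mul_ne_zero_iff.1 (Complex.ofReal_ne_zero.1 hz)
  have hz₂ := bump_ne_zero_iff.1 hz'.2
  have hδ : δ ≠ 0 := fun h => by simp [h] at hz₂
  have hle : |z.2 - (s * z.1 + y₀)| ≤ |δ| := by
    calc |z.2 - (s * z.1 + y₀)| = |δ| * |δ⁻¹ * (z.2 - (s * z.1 + y₀))| := by
          rw [← abs_mul, mul_inv_cancel_left₀ hδ]
      _ ≤ |δ| := mul_le_of_le_one_right (abs_nonneg _) (by rw [abs_of_pos hz₂.1]; exact hz₂.2.le)
  exact ⟨(z.1, z.2 - (s * z.1 + y₀)),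
    ⟨Ioo_subset_Icc_self (bump_ne_zero_iff.1 hz'.1), abs_le.1 hle⟩, by simp only [sub_add_cancel]⟩

/-- A bump adapted to the tube of slope `s` and width `δ` over `(a, b)`. -/
def wavePacket (a b s y₀ δ : ℝ) : SchwartzMap V2 ℂ :=
  (hasCompactSupport_packet (a := a) (b := b) (s := s) (y₀ := y₀) (δ := δ)).toSchwartzMap
    (Complex.ofRealCLM.contDiff.comp ((contDiff_bump.comp contDiff_fst).mul
      (contDiff_bump.comp (by fun_prop))))

lemma wavePacket_apply (z : V2) : wavePacket a b s y₀ δ z =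
    ((bump a b z.1 * bump 0 1 (δ⁻¹ * (z.2 - (s * z.1 + y₀))) : ℝ) : ℂ) := rfl

lemma norm_wavePacket_le_one (z : V2) : ‖wavePacket a b s y₀ δ z‖ ≤ 1 := by
  rw [wavePacket_apply, Complex.norm_real, Real.norm_eq_abs,
    abs_of_nonneg (mul_nonneg (bump_nonneg _ _ _) (bump_nonneg _ _ _))]
  exact mul_le_one₀ (bump_le_one _ _ _) (bump_nonneg _ _ _) (bump_le_one _ _ _)

lemma support_wavePacket (hδ : 0 < δ) :
    Function.support (wavePacket a b s y₀ δ) = tube (Ioo a b) s y₀ δ := by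
  ext z
  rw [Function.mem_support, wavePacket_apply, Complex.ofReal_ne_zero, mul_ne_zero_iff,
    bump_ne_zero_iff, bump_ne_zero_iff]
  simp only [tube, mem_Ioo, mem_ofPred_eq, mul_pos_iff_of_pos_left (inv_pos.2 hδ),
    inv_mul_lt_iff₀ hδ, mul_one]

lemma eLpNorm_two_wavePacket_sq_le (hδ : 0 < δ) :
    eLpNorm (wavePacket a b s y₀ δ) 2 volume ^ 2 ≤ ENNReal.ofReal (b - a) * ENNReal.ofReal δ := by
  rw [eLpNorm_two_sq, ← Real.volume_Ioo, ← volume_tube measurableSet_Ioo (s := s) (y₀ := y₀),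
    ← lintegral_indicator_one (measurableSet_tube measurableSet_Ioo)]
  refine lintegral_mono fun z => ?_
  by_cases hz : z ∈ tube (Ioo a b) s y₀ δ
  · rw [indicator_of_mem hz]
    have hle : ‖wavePacket a b s y₀ δ z‖ₑ ≤ 1 := by
      rw [← ofReal_norm]
      exact ENNReal.ofReal_le_one.2 (norm_wavePacket_le_one z)
    exact pow_le_one₀ zero_le hle
  · rw [← support_wavePacket hδ, Function.notMem_support] at hz
    simp [hz]

lemma integral_wavePacket_mul (hδ : 0 < δ) {φ : V2 → ℂ} {u : V2}
    (hφ : ∀ x ∈ tube (Ioo c d) s y₀ δ, ∀ t ∈ Ioo (a - d) (b - c), φ (x + t • u) = 1) (t : ℝ) :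
    ∫ x, φ (x + t • u) * (wavePacket a b s y₀ δ (x + t • (1, s)) * wavePacket c d s y₀ δ x) =
      ((δ * (∫ y, bump 0 1 y ^ 2) * bumpCorrelation a b c d t : ℝ) : ℂ) := by
  have hprod (x : V2) :
      φ (x + t • u) * (wavePacket a b s y₀ δ (x + t • (1, s)) * wavePacket c d s y₀ δ x) =
        ((bump a b (x.1 + t) * bump c d x.1 * bump 0 1 (δ⁻¹ * (x.2 - (s * x.1 + y₀))) ^ 2 : ℝ) :
          ℂ) := by
    have hline : x.2 + t * s - (s * (x.1 + t) + y₀) = x.2 - (s * x.1 + y₀) := by ring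
    have hpackets : wavePacket a b s y₀ δ (x + t • (1, s)) * wavePacket c d s y₀ δ x =
        ((bump a b (x.1 + t) * bump c d x.1 * bump 0 1 (δ⁻¹ * (x.2 - (s * x.1 + y₀))) ^ 2 : ℝ) :
          ℂ) := by
      simp only [wavePacket_apply, Prod.fst_add, Prod.snd_add, Prod.smul_fst, Prod.smul_snd,
        smul_eq_mul, mul_one, hline]
      push_cast
      ring
    rw [hpackets]
    by_cases h : bump a b (x.1 + t) * bump c d x.1 = 0
    · simp [h]
    by_cases hx : wavePacket c d s y₀ δ x = 0
    · rw [← hpackets, hx, mul_zero, mul_zero]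
    rw [hφ x (support_wavePacket hδ ▸ hx) t (mem_Ioo_of_mul_bump_ne_zero h), one_mul]
  simp_rw [hprod]
  rw [integral_complex_ofReal,
    integral_mul_comp_shear (F := fun x => bump a b (x + t) * bump c d x)
      (G := fun y => bump 0 1 (δ⁻¹ * y) ^ 2) (by fun_prop) (by fun_prop),
    Measure.integral_comp_mul_left (fun y => bump 0 1 y ^ 2), inv_inv, abs_of_pos hδ, smul_eq_mul,
    bumpCorrelation, mul_comm]

/-- The value of a half-space form on a matched pair of wave packets of width `1`. -/
def packetConstant (a b c d : ℝ) : ℂ :=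
  (2 * Real.pi * Complex.I)⁻¹ *
    ((∫ y, bump 0 1 y ^ 2) * ∫ t, bumpCorrelation a b c d t / t : ℝ)

lemma packetConstant_ne_zero (hab : a < b) (hcd : c < d) (hda : d < a) :
    packetConstant a b c d ≠ 0 := by
  refine mul_ne_zero (inv_ne_zero (by simp [Real.pi_ne_zero])) (Complex.ofReal_ne_zero.2 ?_)
  exact (mul_pos (integral_bump_sq_pos one_pos) (integral_bumpCorrelation_div_pos hab hcd hda)).ne'

lemma trilinearForm_halfSpace (f g h : SchwartzMap V2 ℂ) (u w : V2) {τ : ℝ} (hτ : |τ| = 1)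
    (hint : Integrable fun t : ℝ => (t : ℂ)⁻¹ * ∫ x, f (x + t • u) * (g (x + t • w) * h x)) :
    trilinearForm {ξ | 0 < τ * pairDot u w ξ} f g h =
      τ * ((2 * Real.pi * Complex.I)⁻¹ *
        ∫ t : ℝ, (t : ℂ)⁻¹ * ∫ x, f (x + t • u) * (g (x + t • w) * h x)) := by
  have hτ0 : τ ≠ 0 := fun h => by simp [h] at hτ
  set Q : V2 × V2 → ℂ := fun ξ => FT f ξ.1 * (FT g ξ.2 * FT h (-(ξ.1 + ξ.2)))
  set F : ℝ → ℂ := fun t => (t : ℂ)⁻¹ * ∫ x, f (x + t • u) * (g (x + t • w) * h x)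
  have hchar (t : ℝ) :
      (t : ℂ)⁻¹ * charIntegral volume Q (fun ξ => τ * pairDot u w ξ) t = τ * F (τ * t) := by
    have hτt : charIntegral volume Q (fun ξ => τ * pairDot u w ξ) t =
        charIntegral volume Q (pairDot u w) (τ * t) := by
      unfold charIntegral
      ring_nf
    rw [hτt, charIntegral_pairDot]
    simp only [F, Complex.ofReal_mul, mul_inv]
    rw [mul_assoc, mul_inv_cancel_left₀ (Complex.ofReal_ne_zero.2 hτ0)]
  calc trilinearForm {ξ | 0 < τ * pairDot u w ξ} f g h
      = ∫ t : ℝ, (2 * Real.pi * t * Complex.I)⁻¹ *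
          charIntegral volume Q (fun ξ => τ * pairDot u w ξ) t :=
        integral_indicator_pos_mul (integrable_FT_triple f g h) (by fun_prop)
          (((hint.comp_mul_left' hτ0).const_mul _).congr (ae_of_all _ fun t => (hchar t).symm))
    _ = ∫ t : ℝ, (2 * Real.pi * Complex.I)⁻¹ * (τ * F (τ * t)) := by
        refine integral_congr_ae (ae_of_all _ fun t => ?_)
        simp only [← hchar, mul_inv]
        ring
    _ = τ * ((2 * Real.pi * Complex.I)⁻¹ * ∫ t, F t) := by
        rw [integral_const_mul, integral_const_mul, Measure.integral_comp_mul_left F, abs_inv, hτ,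
          inv_one, one_smul]
        ring

lemma trilinearForm_wavePacket (hδ : 0 < δ) (hda : d < a) {u : V2} {τ : ℝ} (hτ : |τ| = 1)
    {φ : SchwartzMap V2 ℂ}
    (hφ : ∀ x ∈ tube (Ioo c d) s y₀ δ, ∀ t ∈ Ioo (a - d) (b - c), φ (x + t • u) = 1) :
    trilinearForm {ξ | 0 < τ * pairDot u (1, s) ξ} φ (wavePacket a b s y₀ δ)
      (wavePacket c d s y₀ δ) = τ * (δ * packetConstant a b c d) := by
  have hcorr (t : ℝ) : (t : ℂ)⁻¹ * ∫ x, φ (x + t • u) *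
      (wavePacket a b s y₀ δ (x + t • (1, s)) * wavePacket c d s y₀ δ x) =
        ((δ * (∫ y, bump 0 1 y ^ 2) * (bumpCorrelation a b c d t / t) : ℝ) : ℂ) := by
    rw [integral_wavePacket_mul hδ hφ]
    push_cast
    ring
  rw [trilinearForm_halfSpace _ _ _ _ _ hτ]
  · simp_rw [hcorr]
    rw [integral_complex_ofReal, integral_const_mul, packetConstant]
    push_cast
    ring
  · simp_rw [hcorr]
    exact (((continuous_bumpCorrelation_div hda).integrable_of_hasCompactSupport
      hasCompactSupport_bumpCorrelation_div).const_mul _).ofReal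

end WavePackets

section KakeyaFamily

variable {α κ : ℝ} {n : ℕ} {S : Finset ℕ} {I : Set ℝ}

/-- The tube over `I` of width `κ 2⁻ⁿ` above the line `x ↦ α x + κ * digitLine n S x`. -/
def digitTube (I : Set ℝ) (α κ : ℝ) (n : ℕ) (S : Finset ℕ) : Set V2 :=
  tube I (α + κ * digitSlope S) (κ * digitLine n S 0) (κ * (1 / 2) ^ n)

/-- The wave packet adapted to `digitTube (Ioo a b) α κ n S`. -/
def digitPacket (a b α κ : ℝ) (n : ℕ) (S : Finset ℕ) : SchwartzMap V2 ℂ :=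
  wavePacket a b (α + κ * digitSlope S) (κ * digitLine n S 0) (κ * (1 / 2) ^ n)

lemma mem_digitTube {z : V2} : z ∈ digitTube I α κ n S ↔ z.1 ∈ I ∧
    z.2 - α * z.1 ∈ Ioo (κ * digitLine n S z.1) (κ * digitLine n S z.1 + κ * (1 / 2) ^ n) := by
  have hline : (α + κ * digitSlope S) * z.1 + κ * digitLine n S 0 =
      α * z.1 + κ * digitLine n S z.1 := by
    rw [← zero_add z.1, digitLine_add, zero_add]
    ring
  rw [digitTube, tube, mem_ofPred_eq, hline, mem_Ioo, mem_Ioo]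
  refine and_congr_right fun _ => and_congr ?_ ?_ <;> constructor <;> intro h <;> linarith

lemma support_digitPacket (hκ : 0 < κ) (a b α : ℝ) (n : ℕ) (S : Finset ℕ) :
    Function.support (digitPacket a b α κ n S) = digitTube (Ioo a b) α κ n S :=
  support_wavePacket (by positivity)

lemma norm_le_of_mem_digitTube (hκ : 0 < κ) (hS : S ⊆ Finset.range n) {M : ℝ} (hM : 1 ≤ M)
    (hI : I ⊆ Icc 0 M) {z : V2} (hz : z ∈ digitTube I α κ n S) :
    ‖z‖ ≤ M * (1 + |α|) + (M + 1) * κ := by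
  obtain ⟨hz₁, hz₂, hz₂'⟩ := mem_digitTube.1 hz
  obtain ⟨h0, hzM⟩ := hI hz₁
  have hline := abs_le.1 (abs_digitLine_le hS h0 hzM hM)
  have hwidth : κ * (1 / 2) ^ n ≤ κ :=
    mul_le_of_le_one_right hκ.le (pow_le_one₀ (by norm_num) (by norm_num))
  have hα : |α * z.1| ≤ M * |α| := by
    rw [abs_mul, abs_of_nonneg h0, mul_comm]
    gcongr
  have hdiff : |z.2 - α * z.1| ≤ (M + 1) * κ := abs_le.2 ⟨by nlinarith, by nlinarith⟩
  rw [Prod.norm_def, max_le_iff, Real.norm_eq_abs, Real.norm_eq_abs, abs_of_nonneg h0]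
  constructor
  · nlinarith [abs_nonneg α]
  · calc |z.2| = |(z.2 - α * z.1) + α * z.1| := by rw [sub_add_cancel]
      _ ≤ |z.2 - α * z.1| + |α * z.1| := abs_add_le _ _
      _ ≤ M * (1 + |α|) + (M + 1) * κ := by linarith

lemma disjoint_digitTube (hκ : 0 < κ) (hI : I ⊆ Ici 2) {S' : Finset ℕ}
    (hS : S ⊆ Finset.range n) (hS' : S' ⊆ Finset.range n) (hne : S ≠ S') :
    Disjoint (digitTube I α κ n S) (digitTube I α κ n S') := by
  refine disjoint_left.2 fun z hz hz' => ?_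
  obtain ⟨hz₁, hlow, hup⟩ := mem_digitTube.1 hz
  obtain ⟨-, hlow', hup'⟩ := mem_digitTube.1 hz'
  refine (le_abs_digitLine_sub hS hS' hne (hI hz₁)).not_gt (lt_of_mul_lt_mul_left ?_ hκ.le)
  rw [← abs_of_pos hκ, ← abs_mul, abs_of_pos hκ, abs_lt]
  constructor <;> linarith

lemma volume_biUnion_digitTube_le (hn : 0 < n) (hκ : 0 ≤ κ) :
    volume (⋃ S ∈ (Finset.range n).powerset, digitTube (Ioo 0 (1 / 2)) α κ n S) ≤
      ENNReal.ofReal (6 * κ / n) := by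
  have hslice (x : ℝ) : volume (Prod.mk x ⁻¹'
      ⋃ S ∈ (Finset.range n).powerset, digitTube (Ioo 0 (1 / 2)) α κ n S) ≤
        indicator (Ioo 0 (1 / 2)) (fun _ => ENNReal.ofReal (6 * κ / n)) x := by
    simp only [preimage_iUnion]
    by_cases hx : x ∈ Ioo (0 : ℝ) (1 / 2)
    · rw [indicator_of_mem hx]
      calc _ ≤ volume ((· - α * x) ⁻¹' digitSlice n κ x) := by
            refine measure_mono (iUnion₂_subset fun S hS y hy => ?_)
            exact mem_biUnion hS (mem_digitTube.1 hy).2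
        _ ≤ ENNReal.ofReal (6 * κ / n) := by
            simp_rw [sub_eq_add_neg, measure_preimage_add_right]
            exact volume_digitSlice_le hn hκ hx.1.le hx.2.le
    · have hempty (S : Finset ℕ) : Prod.mk x ⁻¹' digitTube (Ioo 0 (1 / 2)) α κ n S = ∅ :=
        eq_empty_of_forall_notMem fun y hy => hx (mem_digitTube.1 hy).1
      simp only [hempty, iUnion_empty, measure_empty, zero_le]
  have hmeas : MeasurableSet (⋃ S ∈ (Finset.range n).powerset,
      digitTube (Ioo 0 (1 / 2)) α κ n S) :=
    Finset.measurableSet_biUnion _ fun S _ => measurableSet_tube measurableSet_Ioo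
  rw [Measure.volume_eq_prod, Measure.prod_apply hmeas]
  calc _ ≤ ∫⁻ x, indicator (Ioo (0 : ℝ) (1 / 2)) (fun _ => ENNReal.ofReal (6 * κ / n)) x :=
        lintegral_mono hslice
    _ = ENNReal.ofReal (6 * κ / n) * ENNReal.ofReal (1 / 2) := by
        rw [lintegral_indicator_const measurableSet_Ioo, Real.volume_Ioo, sub_zero]
    _ ≤ ENNReal.ofReal (6 * κ / n) :=
        mul_le_of_le_one_right' (ENNReal.ofReal_le_one.2 (by norm_num))

lemma sum_norm_digitPacket_le (hκ : 0 < κ) (x : V2) :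
    ∑ S : (Finset.range n).powerset, ‖digitPacket 2 3 α κ n S x‖ ≤
      indicator (Metric.closedBall 0 (3 * (1 + |α|) + 4 * κ)) 1 x := by
  have hsub (S : (Finset.range n).powerset) : S.1 ⊆ Finset.range n := Finset.mem_powerset.1 S.2
  have hmem {S : (Finset.range n).powerset} (hx : digitPacket 2 3 α κ n S x ≠ 0) :
      x ∈ digitTube (Ioo 2 3) α κ n S := support_digitPacket hκ 2 3 α n S ▸ hx
  by_cases hex : ∃ S : (Finset.range n).powerset, digitPacket 2 3 α κ n S x ≠ 0
  · obtain ⟨S, hS⟩ := hex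
    have hball : ‖x‖ ≤ 3 * (1 + |α|) + 4 * κ := by
      linarith [norm_le_of_mem_digitTube hκ (hsub S) (M := 3) (by norm_num)
        (fun t ht => ⟨by linarith [ht.1], ht.2.le⟩) (hmem hS)]
    rw [indicator_of_mem (mem_closedBall_zero_iff.2 hball), Finset.sum_eq_single S]
    · exact norm_wavePacket_le_one x
    · intro S' _ hne
      by_contra hS'
      exact disjoint_left.1 (disjoint_digitTube hκ (fun t ht => ht.1.le) (hsub S) (hsub S')
        fun h => hne (Subtype.ext h.symm)) (hmem hS) (hmem (norm_ne_zero_iff.1 hS'))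
    · exact fun h => absurd (Finset.mem_univ S) h
  · push Not at hex
    simp only [hex, norm_zero, Finset.sum_const_zero]
    exact indicator_nonneg (fun _ _ => zero_le_one) _

lemma sum_eLpNorm_two_digitPacket_sq_le (hκ : 0 < κ) :
    ∑ S : (Finset.range n).powerset, eLpNorm (digitPacket 0 (1 / 2) α κ n S) 2 volume ^ 2 ≤
      ENNReal.ofReal κ := by
  have hle (S : (Finset.range n).powerset) :
      eLpNorm (digitPacket 0 (1 / 2) α κ n S) 2 volume ^ 2 ≤ ENNReal.ofReal (κ * (1 / 2) ^ n) :=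
    (eLpNorm_two_wavePacket_sq_le (by positivity)).trans
      (mul_le_of_le_one_left' (ENNReal.ofReal_le_one.2 (by norm_num)))
  calc _ ≤ ∑ _S : (Finset.range n).powerset, ENNReal.ofReal (κ * (1 / 2) ^ n) :=
        Finset.sum_le_sum fun S _ => hle S
    _ = ENNReal.ofReal (2 ^ n * (κ * (1 / 2) ^ n)) := by
        rw [Finset.sum_const, Finset.card_univ, Fintype.card_coe, Finset.card_powerset,
          Finset.card_range, nsmul_eq_mul, ENNReal.ofReal_mul (p := 2 ^ n) (by positivity),
          ENNReal.ofReal_pow two_pos.le, ENNReal.ofReal_ofNat, Nat.cast_pow, Nat.cast_ofNat]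
    _ = ENNReal.ofReal κ := by
        rw [mul_left_comm, ← mul_pow]
        norm_num

lemma exists_schwartzMap_eq_one {E : Type*} [NormedAddCommGroup E] [NormedSpace ℝ E]
    [FiniteDimensional ℝ E] (R : ℝ) :
    ∃ φ : SchwartzMap E ℂ, ∀ x, ‖x‖ ≤ R → φ x = 1 := by
  let ψ : ContDiffBump (0 : E) := ⟨|R| + 1, |R| + 2, by positivity, by linarith⟩
  have hsupp : HasCompactSupport fun x => ((ψ x : ℝ) : ℂ) :=
    ψ.hasCompactSupport.comp_left Complex.ofReal_zero
  refine ⟨hsupp.toSchwartzMap (Complex.ofRealCLM.contDiff.comp ψ.contDiff), fun x hx => ?_⟩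
  have hψ : ψ x = 1 := ψ.one_of_mem_closedBall (mem_closedBall_zero_iff.2 (by
    linarith [le_abs_self R] : ‖x‖ ≤ |R| + 1))
  exact congrArg Complex.ofReal hψ

end KakeyaFamily

section HalfSpaceFamily

lemma trilinearForm_smul_right (D : Set (V2 × V2)) (f g h : V2 → ℂ) (c : ℂ) :
    trilinearForm D f g (c • h) = c * trilinearForm D f g h := by
  have hFT (ξ : V2) : FT (c • h) ξ = c * FT h ξ := by
    simp only [FT, Pi.smul_apply, smul_eq_mul, mul_left_comm _ c, integral_const_mul]
  simp only [trilinearForm, hFT, ← integral_const_mul]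
  refine integral_congr_ae (ae_of_all _ fun ξ => ?_)
  ring

/-- A joint bound for the half-space forms with conormals `τ s • (u s, (1, s))`, `s ∈ I`: the
square-function estimate that random signs extract from a `TrilinearBound`. -/
def HalfSpaceFamilyBound (I : Set ℝ) (u : ℝ → V2) (τ : ℝ → ℝ) (p q r : ℝ) (C : ENNReal) : Prop :=
  ∀ (ι : Type) [Fintype ι] (s : ι → ℝ), (∀ i, s i ∈ I) →
    ∀ (f : SchwartzMap V2 ℂ) (g h : ι → SchwartzMap V2 ℂ) (K E : Set V2), MeasurableSet K →
      (∀ x, ∑ i, ‖g i x‖ ≤ indicator K 1 x) → (∀ i, Function.support (h i) ⊆ E) →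
      ‖∑ i, trilinearForm {ξ | 0 < τ (s i) * pairDot (u (s i)) (1, s i) ξ} f (g i) (h i)‖ₑ ≤
        C * (eLpNorm f (ENNReal.ofReal p) volume * (volume K ^ (1 / q) *
          (volume E ^ (1 / r - 1 / 2) * (1 + ∑ i, eLpNorm (h i) 2 volume ^ 2))))

variable {α κ p q r Ku : ℝ} {u : ℝ → V2} {τ : ℝ → ℝ} {C : ENNReal} {n : ℕ} {S : Finset ℕ}

lemma add_mul_digitSlope_mem_Icc (hκ : 0 ≤ κ) (hS : S ⊆ Finset.range n) :
    α + κ * digitSlope S ∈ Icc α (α + κ) :=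
  ⟨le_add_of_nonneg_right (mul_nonneg hκ (digitSlope_nonneg S)),
    add_le_add_right (mul_le_of_le_one_right hκ (digitSlope_le_one hS)) α⟩

lemma trilinearForm_digitPacket (hκ : 0 < κ) (hS : S ⊆ Finset.range n) {v : V2} {σ : ℝ}
    (hσ : |σ| = 1) (hv : ‖v‖ ≤ Ku) {φ : SchwartzMap V2 ℂ}
    (hφ : ∀ x, ‖x‖ ≤ 3 * (1 + |α|) + 4 * κ + 3 * Ku → φ x = 1) :
    trilinearForm {ξ | 0 < σ * pairDot v (1, α + κ * digitSlope S) ξ} φ (digitPacket 2 3 α κ n S)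
      (digitPacket 0 (1 / 2) α κ n S) =
        σ * ((κ * (1 / 2) ^ n : ℝ) * packetConstant 2 3 0 (1 / 2)) := by
  refine trilinearForm_wavePacket (by positivity) (by norm_num) hσ fun x hx t ht => hφ _ ?_
  have hx' : ‖x‖ ≤ 3 * (1 + |α|) + (3 + 1) * κ := norm_le_of_mem_digitTube hκ hS (by norm_num)
    (fun y hy => ⟨hy.1.le, by linarith [hy.2]⟩) hx
  have ht' : |t| ≤ 3 := abs_le.2 ⟨by linarith [ht.1], by linarith [ht.2]⟩
  calc ‖x + t • v‖ ≤ ‖x‖ + |t| * ‖v‖ := by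
        simpa only [norm_smul, Real.norm_eq_abs] using norm_add_le x (t • v)
    _ ≤ 3 * (1 + |α|) + (3 + 1) * κ + 3 * Ku := by gcongr
    _ = 3 * (1 + |α|) + 4 * κ + 3 * Ku := by ring

/-- Testing on the `2ⁿ` packets: the forms add up to a constant independent of `n`. -/
lemma HalfSpaceFamilyBound.enorm_packetConstant_le
    (hB : HalfSpaceFamilyBound (Icc α (α + κ)) u τ p q r C) (hκ : 0 < κ) (hr : 0 < r) (hr2 : r ≤ 2)
    (hu : ∀ s ∈ Icc α (α + κ), ‖u s‖ ≤ Ku) (hτ : ∀ s ∈ Icc α (α + κ), |τ s| = 1)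
    {φ : SchwartzMap V2 ℂ} (hφ : ∀ x, ‖x‖ ≤ 3 * (1 + |α|) + 4 * κ + 3 * Ku → φ x = 1)
    (hn : 0 < n) :
    ‖(κ : ℂ) * packetConstant 2 3 0 (1 / 2)‖ₑ ≤ C * (eLpNorm φ (ENNReal.ofReal p) volume *
      (volume (Metric.closedBall (0 : V2) (3 * (1 + |α|) + 4 * κ)) ^ (1 / q) *
        (ENNReal.ofReal (6 * κ / n) ^ (1 / r - 1 / 2) * (1 + ENNReal.ofReal κ)))) := by
  set s : (Finset.range n).powerset → ℝ := fun S => α + κ * digitSlope S.1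
  have hsub (S : (Finset.range n).powerset) : S.1 ⊆ Finset.range n := Finset.mem_powerset.1 S.2
  have hs (S) : s S ∈ Icc α (α + κ) := add_mul_digitSlope_mem_Icc hκ.le (hsub S)
  have hτ' (S) : ‖(τ (s S) : ℂ)‖ₑ = 1 := by
    rw [← ofReal_norm, Complex.norm_real, Real.norm_eq_abs, hτ _ (hs S), ENNReal.ofReal_one]
  have hform (S : (Finset.range n).powerset) :
      trilinearForm {ξ | 0 < τ (s S) * pairDot (u (s S)) (1, s S) ξ} φ (digitPacket 2 3 α κ n S)
        ((τ (s S) : ℂ) • digitPacket 0 (1 / 2) α κ n S : SchwartzMap V2 ℂ) =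
          (κ * (1 / 2) ^ n : ℝ) * packetConstant 2 3 0 (1 / 2) := by
    have hsq : (τ (s S) : ℂ) * τ (s S) = 1 := by
      rw [← Complex.ofReal_mul, ← abs_mul_abs_self, hτ _ (hs S), mul_one, Complex.ofReal_one]
    rw [FunLike.coe_smul, trilinearForm_smul_right, trilinearForm_digitPacket hκ (hsub S)
      (hτ _ (hs S)) (hu _ (hs S)) hφ, ← mul_assoc, hsq, one_mul]
  have hsum : ∑ S : (Finset.range n).powerset, trilinearForm
      {ξ | 0 < τ (s S) * pairDot (u (s S)) (1, s S) ξ} φ (digitPacket 2 3 α κ n S)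
        ((τ (s S) : ℂ) • digitPacket 0 (1 / 2) α κ n S : SchwartzMap V2 ℂ) =
      κ * packetConstant 2 3 0 (1 / 2) := by
    have hcard : (2 : ℂ) ^ n * (1 / 2) ^ n = 1 := by rw [← mul_pow]; norm_num
    simp only [hform, Finset.sum_const, Finset.card_univ, Fintype.card_coe, Finset.card_powerset,
      Finset.card_range, nsmul_eq_mul]
    push_cast
    linear_combination κ * packetConstant 2 3 0 (1 / 2) * hcard
  rw [← hsum]
  refine (hB _ s hs φ _ _ _ (⋃ S ∈ (Finset.range n).powerset, digitTube (Ioo 0 (1 / 2)) α κ n S)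
    Metric.isClosed_closedBall.measurableSet (sum_norm_digitPacket_le hκ)
    (fun S => ?_)).trans ?_
  · refine (Function.support_const_smul_subset _ _).trans ?_
    rw [support_digitPacket hκ]
    exact subset_biUnion_of_mem (u := digitTube (Ioo 0 (1 / 2)) α κ n) S.2
  · have hexp : 0 ≤ 1 / r - 1 / 2 := sub_nonneg.2 (one_div_le_one_div_of_le hr hr2)
    gcongr
    · exact volume_biUnion_digitTube_le hn hκ.le
    · simp only [FunLike.coe_smul, eLpNorm_const_smul, hτ', one_mul]
      exact sum_eLpNorm_two_digitPacket_sq_le hκ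

theorem not_halfSpaceFamilyBound (hκ : 0 < κ) (hq : 0 < q) (hr : 0 < r) (hr2 : r < 2) (hC : C ≠ ⊤)
    (hu : ∀ s ∈ Icc α (α + κ), ‖u s‖ ≤ Ku) (hτ : ∀ s ∈ Icc α (α + κ), |τ s| = 1) :
    ¬ HalfSpaceFamilyBound (Icc α (α + κ)) u τ p q r C := by
  intro hB
  obtain ⟨φ, hφ⟩ := exists_schwartzMap_eq_one (E := V2) (3 * (1 + |α|) + 4 * κ + 3 * Ku)
  set A := C * (eLpNorm φ (ENNReal.ofReal p) volume *
    (volume (Metric.closedBall (0 : V2) (3 * (1 + |α|) + 4 * κ)) ^ (1 / q) *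
      (1 + ENNReal.ofReal κ))) with hA
  have hA_top : A ≠ ⊤ := by
    refine ENNReal.mul_ne_top hC (ENNReal.mul_ne_top (φ.memLp _ _).2.ne (ENNReal.mul_ne_top
      (ENNReal.rpow_ne_top_of_nonneg (by positivity) measure_closedBall_lt_top.ne) ?_))
    exact ENNReal.add_ne_top.2 ⟨ENNReal.one_ne_top, ENNReal.ofReal_ne_top⟩
  have hexp : 0 < 1 / r - 1 / 2 := sub_pos.2 (one_div_lt_one_div_of_lt hr hr2)
  have hvol : Tendsto (fun n : ℕ => ENNReal.ofReal (6 * κ / n)) atTop (𝓝 0) := by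
    simpa using ENNReal.tendsto_ofReal (tendsto_const_div_atTop_nhds_zero_nat (6 * κ))
  have hlim : Tendsto (fun n : ℕ => A * ENNReal.ofReal (6 * κ / n) ^ (1 / r - 1 / 2)) atTop
      (𝓝 0) := by
    simpa only [ENNReal.zero_rpow_of_pos hexp, mul_zero] using
      ENNReal.Tendsto.const_mul (hvol.ennrpow_const (1 / r - 1 / 2)) (Or.inr hA_top)
  have hle : ‖(κ : ℂ) * packetConstant 2 3 0 (1 / 2)‖ₑ ≤ 0 := by
    refine ge_of_tendsto hlim ?_
    filter_upwards [eventually_gt_atTop 0] with n hn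
    refine (hB.enorm_packetConstant_le hκ hr hr2.le hu hτ hφ hn).trans_eq ?_
    rw [hA]
    ring
  refine mul_ne_zero (Complex.ofReal_ne_zero.2 hκ.ne') (packetConstant_ne_zero (a := 2) (b := 3)
    (c := 0) (d := 1 / 2) (by norm_num) (by norm_num) (by norm_num)) ?_
  exact enorm_eq_zero.1 (nonpos_iff_eq_zero.1 hle)

end HalfSpaceFamily

section Blowup

variable {E : Type*} [NormedAddCommGroup E] [NormedSpace ℝ E]

/-- The rescalings of `D` about `q` converge, off the kernel of `L`, to the half space
`{x | 0 < σ * L x}`. -/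
def BlowsUpTo (D : Set E) (q : E) (L : E →L[ℝ] ℝ) (σ : ℝ) : Prop :=
  ∀ x, L x ≠ 0 → ∀ᶠ R : ℝ in atTop, (q + R⁻¹ • x ∈ D ↔ 0 < σ * L x)

lemma ae_apply_ne_zero [MeasurableSpace E] [BorelSpace E] [FiniteDimensional ℝ E] (μ : Measure E)
    [μ.IsAddHaarMeasure] {L : E →L[ℝ] ℝ} (hL : L ≠ 0) : ∀ᵐ x ∂μ, L x ≠ 0 := by
  refine measure_eq_zero_iff_ae_notMem.1 (Measure.addHaar_submodule μ L.ker fun hker => hL ?_)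
  ext x
  exact LinearMap.mem_ker.1 (hker ▸ Submodule.mem_top)

lemma trilinearForm_modulate (D : Set (V2 × V2)) (f g h : SchwartzMap V2 ℂ) (a b : V2) :
    trilinearForm D (modulate a f) (modulate b g) (modulate (-(a + b)) h) =
      trilinearForm ((· + (a, b)) ⁻¹' D) f g h := by
  simp only [trilinearForm]
  rw [← integral_add_right_eq_self (μ := (volume : Measure (V2 × V2))) _ (a, b)]
  refine integral_congr_ae (ae_of_all _ fun ξ => ?_)
  have harg : -(ξ.1 + a + (ξ.2 + b)) - -(a + b) = -(ξ.1 + ξ.2) := by abel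
  simp only [FT_modulate, Prod.fst_add, Prod.snd_add, add_sub_cancel_right, harg]
  rfl

lemma BlowsUpTo.tendsto_trilinearForm {D : Set (V2 × V2)} {ζ : V2 × V2} {u w : V2} {σ : ℝ}
    (hb : BlowsUpTo D ζ (pairDot u w) σ) (hD : MeasurableSet D) (hL : pairDot u w ≠ 0)
    (f g h : SchwartzMap V2 ℂ) :
    Tendsto (fun R : ℝ => trilinearForm {ξ | ζ + R⁻¹ • ξ ∈ D} f g h) atTop
      (𝓝 (trilinearForm {ξ | 0 < σ * pairDot u w ξ} f g h)) := by
  have hmeas (R : ℝ) : MeasurableSet {ξ : V2 × V2 | ζ + R⁻¹ • ξ ∈ D} := hD.preimage (by fun_prop)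
  refine tendsto_integral_filter_of_dominated_convergence
    (fun ξ => ‖FT f ξ.1 * (FT g ξ.2 * FT h (-(ξ.1 + ξ.2)))‖) ?_ ?_
    (integrable_FT_triple f g h).norm ?_
  · exact Eventually.of_forall fun R =>
      (integrable_indicator_one_mul (hmeas R) (integrable_FT_triple f g h)).aestronglyMeasurable
  · refine Eventually.of_forall fun R => ae_of_all _ fun ξ => ?_
    rw [norm_mul]
    refine mul_le_of_le_one_left (norm_nonneg _) ?_
    simpa only [norm_one] using norm_indicator_le_norm_self (fun _ : V2 × V2 => (1 : ℂ)) ξ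
  · filter_upwards [ae_apply_ne_zero volume hL] with ξ hξ
    refine tendsto_const_nhds.congr' ?_
    filter_upwards [hb ξ hξ] with R hR
    simp only [indicator, mem_ofPred_eq, hR]

lemma trilinearForm_modulate_preimage_smul (D : Set (V2 × V2)) (f g h : SchwartzMap V2 ℂ) {R : ℝ}
    (hR : R ≠ 0) (a b : V2) :
    trilinearForm ((R⁻¹ • ·) ⁻¹' D) (modulate (R • a) f) (modulate (R • b) g)
      (modulate (-(R • a + R • b)) h) = trilinearForm {ξ | (a, b) + R⁻¹ • ξ ∈ D} f g h := by
  rw [trilinearForm_modulate]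
  congr 1
  ext ξ
  simp only [mem_preimage, mem_ofPred_eq, ← Prod.smul_mk, smul_add, inv_smul_smul₀ hR, add_comm]

theorem TrilinearBound.halfSpaceFamilyBound {D : Set (V2 × V2)} {p q r : ℝ} {C : ENNReal}
    (hB : TrilinearBound D p q r C) (hD : MeasurableSet D) (hp : 0 < p) (hq : 0 < q) (hr : 0 < r)
    (hr2 : r ≤ 2) (hsum : p⁻¹ + q⁻¹ + r⁻¹ = 1) {I : Set ℝ} {a : V2} {b u : ℝ → V2} {τ : ℝ → ℝ}
    (hb : ∀ s ∈ I, BlowsUpTo D (a, b s) (pairDot (u s) (1, s)) (τ s)) :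
    HalfSpaceFamilyBound I u τ p q r C := by
  intro ι _ s hs f g h K E hK hg hh
  have hL (i : ι) : pairDot (u (s i)) (1, s i) ≠ 0 := fun h0 => by
    simpa [pairDot_apply, dot2] using DFunLike.congr_fun h0 ((0, 0), (1, 0))
  have hlim := tendsto_finsetSum Finset.univ fun i _ =>
    (hb (s i) (hs i)).tendsto_trilinearForm hD (hL i) f (g i) (h i)
  refine le_of_tendsto hlim.enorm ?_
  filter_upwards [eventually_gt_atTop (0 : ℝ)] with R hR
  have hnorm (t : ENNReal) (c : V2) (φ : SchwartzMap V2 ℂ) :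
      eLpNorm (modulate c φ) t volume = eLpNorm φ t volume :=
    eLpNorm_congr_norm_ae (ae_of_all _ fun x => norm_modulate_apply c φ x)
  have hbound := (hB.preimage_smul hp hq hr hsum (inv_ne_zero hR.ne')).enorm_sum_le
    (hD.preimage (by fun_prop)) hq hr hr2 (modulate (R • a) f)
    (g := fun i => modulate (R • b (s i)) (g i))
    (h := fun i => modulate (-(R • a + R • b (s i))) (h i)) hK
    (by simpa only [norm_modulate_apply] using hg)
    (fun i x hx => hh i <| norm_ne_zero_iff.1 <|
      norm_modulate_apply _ (h i) x ▸ norm_ne_zero_iff.2 hx)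
  simpa only [hnorm, trilinearForm_modulate_preimage_smul D _ _ _ hR.ne'] using hbound

end Blowup

section ConvexBlowup

variable {E : Type*} [NormedAddCommGroup E] [NormedSpace ℝ E] {A D K : Set E} {q : E}
  {L : E →L[ℝ] ℝ} {g : E → ℝ} {σ : ℝ}

lemma tendsto_add_inv_smul_prod (q y : E) :
    Tendsto (fun z : ℝ × E => q + z.1⁻¹ • z.2) (atTop ×ˢ 𝓝 y) (𝓝 q) := by
  have hinv : Tendsto (fun z : ℝ × E => z.1⁻¹) (atTop ×ˢ 𝓝 y) (𝓝 0) :=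
    tendsto_inv_atTop_zero.comp tendsto_fst
  simpa using (hinv.smul (tendsto_snd (f := atTop) (g := 𝓝 y))).const_add q

lemma eventually_add_inv_smul (hA : A ∈ 𝓝 q) (x : E) :
    ∀ᶠ R : ℝ in atTop, q + R⁻¹ • x ∈ A :=
  ((tendsto_add_inv_smul_prod q x).comp (tendsto_id.prodMk tendsto_const_nhds)).eventually hA

lemma eventually_forall_add_inv_smul {P : E → Prop} {S : Set E} (hS : IsCompact S)
    (hP : ∀ y ∈ S, ∀ᶠ z : ℝ × E in atTop ×ˢ 𝓝 y, P (q + z.1⁻¹ • z.2)) :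
    ∀ᶠ R : ℝ in atTop, ∀ y ∈ S, P (q + R⁻¹ • y) :=
  (Eventually.curry (hS.mem_prod_nhdsSet_of_forall hP)).mono fun _ h => h.self_of_nhdsSet

lemma eventually_pos_of_hasFDerivAt (hg : HasFDerivAt g L q) (hq : g q = 0) {y : E}
    (hy : 0 < L y) : ∀ᶠ z : ℝ × E in atTop ×ˢ 𝓝 y, 0 < g (q + z.1⁻¹ • z.2) := by
  have hpos : ∀ᶠ z : ℝ × E in atTop ×ˢ 𝓝 y, 0 < z.1 :=
    tendsto_fst.eventually (eventually_gt_atTop 0)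
  have hlim := (hasFDerivWithinAt_univ.2 hg).lim (l := atTop ×ˢ 𝓝 y) (c := Prod.fst)
    (d := fun z => z.1⁻¹ • z.2) (by simpa using tendsto_add_inv_smul_prod 0 y)
    (Eventually.of_forall fun _ => mem_univ _)
    (tendsto_snd.congr' (hpos.mono fun z hz => (smul_inv_smul₀ hz.ne' z.2).symm))
  filter_upwards [hlim.eventually (lt_mem_nhds hy), hpos] with z hz hz'
  rw [hq, sub_zero] at hz
  exact (pos_iff_pos_of_mul_pos hz).1 hz'

lemma BlowsUpTo.of_inter {U : Set E} (h : BlowsUpTo (D ∩ U) q L σ) (hU : U ∈ 𝓝 q) :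
    BlowsUpTo D q L σ := by
  intro x hx
  filter_upwards [h x hx, eventually_add_inv_smul hU x] with R hR hRU
  rw [← hR, mem_inter_iff, and_iff_left hRU]

lemma BlowsUpTo.of_compl (h : BlowsUpTo Dᶜ q L σ) (hσ : σ ≠ 0) : BlowsUpTo D q L (-σ) := by
  intro x hx
  filter_upwards [h x hx] with R hR
  rw [← not_iff_not, ← mem_compl_iff, hR, neg_mul, neg_pos, not_lt, le_iff_lt_or_eq,
    or_iff_left (mul_ne_zero hσ hx).symm]

lemma subset_interior_of_isPreconnected {X : Type*} [TopologicalSpace X] {S A : Set X}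
    (hS : IsPreconnected S) (hfr : Disjoint S (frontier A)) (hne : (S ∩ interior A).Nonempty) :
    S ⊆ interior A := by
  refine hS.subset_left_of_subset_union isOpen_interior isClosed_closure.isOpen_compl
    (disjoint_compl_right.mono_left (interior_subset.trans subset_closure)) (fun x hx => ?_) hne
  by_contra hx'
  rw [mem_union, not_or, notMem_compl_iff] at hx'
  exact disjoint_left.1 hfr hx ⟨hx'.2, hx'.1⟩

lemma eventually_mem_interior (hg : HasFDerivAt g L q) (hq : g q = 0)
    (hfr : ∀ᶠ z in 𝓝 q, z ∈ frontier A → g z = 0) {d x : E}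
    (hd : ∀ᶠ R : ℝ in atTop, q + R⁻¹ • d ∈ interior A) (hdx : 0 < L d * L x) :
    ∀ᶠ R : ℝ in atTop, q + R⁻¹ • x ∈ interior A := by
  have hpos : ∀ y ∈ segment ℝ d x, 0 < L d * L y := by
    have hdd : 0 < L d * L d := mul_self_pos.2 (left_ne_zero_of_mul hdx.ne')
    exact (convex_halfSpace_gt (𝕜 := ℝ) (L d • L).toLinearMap.isLinear 0).segment_subset hdd hdx
  have hseg : IsCompact (segment ℝ d x) := by
    rw [segment_eq_image]
    exact isCompact_Icc.image (by fun_prop)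
  have hne := eventually_forall_add_inv_smul (P := fun z => 0 < L d * g z) hseg fun y hy =>
    eventually_pos_of_hasFDerivAt (hg.const_mul (L d)) (by rw [hq, mul_zero]) (hpos y hy)
  have hfr' := eventually_forall_add_inv_smul hseg fun y _ =>
    (tendsto_add_inv_smul_prod q y).eventually hfr
  filter_upwards [hd, hne, hfr'] with R hdR hneR hfrR
  have hconn : IsPreconnected ((fun y => q + R⁻¹ • y) '' segment ℝ d x) :=
    (convex_segment d x).isPreconnected.image _ (by fun_prop)
  refine subset_interior_of_isPreconnected hconn ?_ ⟨_, mem_image_of_mem _ (left_mem_segment ℝ d x),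
    hdR⟩ (mem_image_of_mem _ (right_mem_segment ℝ d x))
  rw [disjoint_left]
  rintro _ ⟨y, hy, rfl⟩ hfy
  exact right_ne_zero_of_mul (hneR y hy).ne' (hfrR y hy hfy)

lemma exists_mem_interior_apply_sub_ne_zero (hK : (interior K).Nonempty) (hL : L ≠ 0) (q : E) :
    ∃ d ∈ interior K, L (d - q) ≠ 0 := by
  obtain ⟨v, hv⟩ := DFunLike.ne_iff.1 hL
  obtain ⟨d, hd⟩ := hK
  by_cases hd0 : L (d - q) = 0
  · obtain ⟨R, hR, hR0⟩ := ((eventually_add_inv_smul (isOpen_interior.mem_nhds hd) v).and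
      (eventually_ne_atTop 0)).exists
    refine ⟨_, hR, ?_⟩
    rw [add_sub_right_comm, map_add, hd0, zero_add, map_smul]
    exact smul_ne_zero (inv_ne_zero hR0) hv
  · exact ⟨d, hd, hd0⟩

theorem exists_blowsUpTo_of_convex (hK : Convex ℝ K) (hKne : (interior K).Nonempty)
    (hqK : q ∈ frontier K) (hg : HasFDerivAt g L q) (hq : g q = 0) (hL : L ≠ 0)
    (hfr : ∀ᶠ z in 𝓝 q, z ∈ frontier K → g z = 0) : ∃ σ : ℝ, |σ| = 1 ∧ BlowsUpTo K q L σ := by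
  obtain ⟨d, hd, hLd⟩ := exists_mem_interior_apply_sub_ne_zero hKne hL q
  have hseg : ∀ᶠ R : ℝ in atTop, q + R⁻¹ • (d - q) ∈ interior K := by
    filter_upwards [eventually_gt_atTop 1] with R hR
    refine hK.openSegment_closure_interior_subset_interior hqK.1 hd ?_
    rw [openSegment_eq_image']
    exact mem_image_of_mem _ ⟨by positivity, inv_lt_one_of_one_lt₀ hR⟩
  have hmem (x : E) (hx : 0 < L (d - q) * L x) : ∀ᶠ R : ℝ in atTop, q + R⁻¹ • x ∈ interior K :=
    eventually_mem_interior hg hq hfr hseg hx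
  have hnotMem (x : E) (hx : L (d - q) * L x < 0) : ∀ᶠ R : ℝ in atTop, q + R⁻¹ • x ∉ K := by
    filter_upwards [hmem (-x) (by rwa [map_neg, mul_neg, neg_pos])] with R hR hRx
    refine hqK.2 (hK.openSegment_interior_self_subset_interior hR hRx ?_)
    exact ⟨1 / 2, 1 / 2, by norm_num, by norm_num, by norm_num, by module⟩
  refine ⟨|L (d - q)|⁻¹ * L (d - q), ?_, fun x hx => ?_⟩
  · rw [abs_mul, abs_inv, abs_abs, inv_mul_cancel₀ (abs_ne_zero.2 hLd)]
  rw [mul_assoc, mul_pos_iff_of_pos_left (inv_pos.2 (abs_pos.2 hLd))]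
  rcases (mul_ne_zero hLd hx).lt_or_gt with h | h
  · filter_upwards [hnotMem x h] with R hR
    exact iff_of_false hR h.not_gt
  · filter_upwards [hmem x h] with R hR
    exact iff_of_true (interior_subset hR) h

/-- Near a regular zero of `g` there are others: `g` changes sign on small spheres, which are
connected. -/
lemma exists_ne_apply_eq_zero (hE : 1 < Module.rank ℝ E) {W : Set E} (hW : W ∈ 𝓝 q)
    (hgW : ContinuousOn g W) (hg : HasFDerivAt g L q) (hq : g q = 0) (hL : L ≠ 0) :
    ∃ z ∈ W, z ≠ q ∧ g z = 0 := by
  obtain ⟨v, hv⟩ : ∃ v, 0 < L v := by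
    obtain ⟨v, hv⟩ := DFunLike.ne_iff.1 hL
    rcases hv.lt_or_gt with h | h
    · exact ⟨-v, by simpa using h⟩
    · exact ⟨v, h⟩
  have hv0 : v ≠ 0 := fun h => by simp [h] at hv
  have hpos := eventually_pos_of_hasFDerivAt hg hq hv
  have hneg := eventually_pos_of_hasFDerivAt hg.neg (by simp [hq]) (y := -v) (by simpa using hv)
  have hsphere : ∀ᶠ R : ℝ in atTop, Metric.sphere q ‖R⁻¹ • v‖ ⊆ W := by
    obtain ⟨δ, hδ, hball⟩ := Metric.mem_nhds_iff.1 hW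
    filter_upwards [eventually_add_inv_smul (Metric.ball_mem_nhds q hδ) v] with R hR
    refine (Metric.sphere_subset_ball ?_).trans hball
    simpa [dist_eq_norm] using hR
  obtain ⟨R, hposR, hnegR, hW', hR⟩ := (((tendsto_id.prodMk tendsto_const_nhds).eventually
    hpos).and (((tendsto_id.prodMk tendsto_const_nhds).eventually hneg).and
      (hsphere.and (eventually_gt_atTop 0)))).exists
  obtain ⟨z, hz, hgz⟩ := (isPreconnected_sphere hE q ‖R⁻¹ • v‖).intermediate_value
    (a := q + R⁻¹ • -v) (b := q + R⁻¹ • v) (by simp) (by simp) (hgW.mono hW')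
    (show (0 : ℝ) ∈ _ from ⟨(neg_pos.1 hnegR).le, hposR.le⟩)
  refine ⟨z, hW' hz, ?_, hgz⟩
  exact Metric.ne_of_mem_sphere hz (norm_ne_zero_iff.2 (smul_ne_zero (inv_ne_zero hR.ne') hv0))

end ConvexBlowup

section Charts

variable {E : Type*} [NormedAddCommGroup E] [NormedSpace ℝ E] {A D U W : Set E} {g : E → ℝ}

/-- A `C¹` hypersurface, given locally as the zero set of a function without critical points; the
counterpart of `IsSmoothHypersurface` for one derivative. -/
def IsC1Hypersurface (M : Set E) : Prop :=
  ∀ p ∈ M, ∃ (W : Set E) (g : E → ℝ), IsOpen W ∧ p ∈ W ∧ ContDiffOn ℝ 1 g W ∧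
    (∀ x ∈ W, fderiv ℝ g x ≠ 0) ∧ M ∩ W = {x ∈ W | g x = 0}

lemma IsSmoothHypersurface.isC1Hypersurface {M : Set (V2 × V2)} (hM : IsSmoothHypersurface M) :
    IsC1Hypersurface M := fun p hp =>
  let ⟨W, g, hW, hpW, hg, hM⟩ := hM p hp
  ⟨W, g, hW, hpW, hg.of_le (by exact_mod_cast le_top), hM⟩

/-- A boundary chart `g` of `D` on `W`: the zero set of `g` is a `C¹` hypersurface containing no
segment, at each point of which `D` blows up to a half space. -/
structure StrictChart (D : Set E) (g : E → ℝ) (W : Set E) : Prop where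
  isOpen : IsOpen W
  contDiffOn : ContDiffOn ℝ 1 g W
  fderiv_ne_zero : ∀ q ∈ W, fderiv ℝ g q ≠ 0
  blowsUpTo : ∀ q ∈ W, g q = 0 → ∃ σ : ℝ, |σ| = 1 ∧ BlowsUpTo D q (fderiv ℝ g q) σ
  not_segment_subset : ∀ x ∈ W, ∀ y ∈ W, x ≠ y → ¬ segment ℝ x y ⊆ {q ∈ W | g q = 0}

lemma hasFDerivAt_of_contDiffOn (hg : ContDiffOn ℝ 1 g W) (hW : IsOpen W) {q : E} (hq : q ∈ W) :
    HasFDerivAt g (fderiv ℝ g q) q :=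
  ((hg.differentiableOn one_ne_zero).differentiableAt (hW.mem_nhds hq)).hasFDerivAt

lemma StrictChart.preimage (h : StrictChart D g W) (e : E ≃L[ℝ] E) :
    StrictChart (e ⁻¹' D) (g ∘ e) (e ⁻¹' W) where
  isOpen := h.isOpen.preimage e.continuous
  contDiffOn := h.contDiffOn.comp e.contDiff.contDiffOn fun _ hx => hx
  fderiv_ne_zero q hq h0 := by
    refine h.fderiv_ne_zero _ hq (ContinuousLinearMap.ext fun x => ?_)
    simpa [e.comp_right_fderiv] using DFunLike.congr_fun h0 (e.symm x)
  blowsUpTo q hq hgq := by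
    obtain ⟨σ, hσ, hb⟩ := h.blowsUpTo _ hq hgq
    refine ⟨σ, hσ, fun x hx => ?_⟩
    rw [e.comp_right_fderiv] at hx ⊢
    filter_upwards [hb (e x) hx] with R hR
    rwa [mem_preimage, map_add, map_smul]
  not_segment_subset x hx y hy hxy hs := by
    refine h.not_segment_subset (e x) hx (e y) hy (e.injective.ne hxy) ?_
    have himage : e '' segment ℝ x y = segment ℝ (e x) (e y) :=
      image_segment ℝ e.toLinearMap.toAffineMap x y
    rwa [← himage, image_subset_iff]

lemma frontier_inter_inter_open {X : Type*} [TopologicalSpace X] {A U : Set X} (hU : IsOpen U) :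
    frontier (A ∩ U) ∩ U = frontier A ∩ U := by
  ext z
  simp only [frontier, mem_inter_iff, Set.mem_sdiff, interior_inter, hU.interior_eq]
  constructor
  · rintro ⟨⟨hcl, hint⟩, hz⟩
    exact ⟨⟨closure_mono inter_subset_left hcl, fun h => hint ⟨h, hz⟩⟩, hz⟩
  · rintro ⟨⟨hcl, hint⟩, hz⟩
    exact ⟨⟨hU.closure_inter ⟨hcl, hz⟩, fun h => hint h.1⟩, hz⟩

lemma interior_inter_nonempty_of_convex (hU : IsOpen U) (hUc : Convex ℝ U)
    (hA : Convex ℝ (A ∩ U)) {x y : E} (hx : x ∈ closure A ∩ U) (hy : y ∈ closure A ∩ U)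
    (hxy : ¬ segment ℝ x y ⊆ frontier A) : (interior (A ∩ U)).Nonempty := by
  obtain ⟨z, hz, hzA⟩ := not_subset.1 hxy
  have hzU : z ∈ U := hUc.segment_subset hx.2 hy.2 hz
  have hzcl : z ∈ closure (A ∩ U) :=
    hA.closure.segment_subset (hU.closure_inter hx) (hU.closure_inter hy) hz
  have hzint : z ∈ interior A := by
    by_contra h
    exact hzA ⟨closure_mono inter_subset_left hzcl, h⟩
  exact ⟨z, by rw [interior_inter, hU.interior_eq]; exact ⟨hzint, hzU⟩⟩

/-- Strict convexity enters through the interior of `A`, which contains a point of some chord. -/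
theorem exists_blowsUpTo_of_convex_inter (hE : 1 < Module.rank ℝ E) (hW : IsOpen W)
    (hWc : Convex ℝ W) (hA : Convex ℝ (A ∩ W)) (hg : ContDiffOn ℝ 1 g W)
    (hfr : ∀ z ∈ W, z ∈ frontier A ↔ g z = 0)
    (hstrict : ∀ x ∈ W, ∀ y ∈ W, x ≠ y → ¬ segment ℝ x y ⊆ frontier A) {q : E} (hq : q ∈ W)
    (hgq : g q = 0) (hg' : fderiv ℝ g q ≠ 0) :
    ∃ σ : ℝ, |σ| = 1 ∧ BlowsUpTo A q (fderiv ℝ g q) σ := by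
  have hWq := hW.mem_nhds hq
  have hgd := hasFDerivAt_of_contDiffOn hg hW hq
  have hfrW {z : E} (hz : z ∈ W) : z ∈ frontier (A ∩ W) ↔ g z = 0 := by
    have hiff := Set.ext_iff.1 (frontier_inter_inter_open (A := A) hW) z
    rw [← hfr z hz, ← and_iff_left (a := z ∈ frontier (A ∩ W)) hz, ← mem_inter_iff, hiff,
      mem_inter_iff, and_iff_left hz]
  obtain ⟨z, hz, hzq, hgz⟩ := exists_ne_apply_eq_zero hE hWq hg.continuousOn hgd hgq hg'
  have hint : (interior (A ∩ W)).Nonempty :=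
    interior_inter_nonempty_of_convex hW hWc hA ⟨((hfr z hz).2 hgz).1, hz⟩
      ⟨((hfr q hq).2 hgq).1, hq⟩ (hstrict z hz q hq hzq)
  obtain ⟨σ, hσ, hb⟩ := exists_blowsUpTo_of_convex hA hint ((hfrW hq).2 hgq) hgd hgq hg'
    (eventually_of_mem hWq fun w hw => (hfrW hw).1)
  exact ⟨σ, hσ, hb.of_inter hWq⟩

lemma strictChart_of_convex (hE : 1 < Module.rank ℝ E) (hW : IsOpen W) (hWc : Convex ℝ W)
    (hconv : Convex ℝ (D ∩ W) ∨ Convex ℝ (Dᶜ ∩ W)) (hg : ContDiffOn ℝ 1 g W)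
    (hg' : ∀ x ∈ W, fderiv ℝ g x ≠ 0) (hfr : ∀ z ∈ W, z ∈ frontier D ↔ g z = 0)
    (hstrict : ∀ x ∈ W, ∀ y ∈ W, x ≠ y → ¬ segment ℝ x y ⊆ frontier D) : StrictChart D g W where
  isOpen := hW
  contDiffOn := hg
  fderiv_ne_zero := hg'
  blowsUpTo q hq hgq := by
    rcases hconv with hc | hc
    · exact exists_blowsUpTo_of_convex_inter hE hW hWc hc hg hfr hstrict hq hgq (hg' q hq)
    · rw [← frontier_compl] at hfr hstrict
      obtain ⟨σ, hσ, hb⟩ :=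
        exists_blowsUpTo_of_convex_inter hE hW hWc hc hg hfr hstrict hq hgq (hg' q hq)
      exact ⟨-σ, by rwa [abs_neg], hb.of_compl (by rintro rfl; simp at hσ)⟩
  not_segment_subset x hx y hy hxy hseg :=
    hstrict x hx y hy hxy fun z hz => (hfr z (hseg hz).1).2 (hseg hz).2

theorem exists_strictChart (hE : 1 < Module.rank ℝ E) (hU : IsOpen U)
    (hbd : (frontier D ∩ U).Nonempty) (hM : IsC1Hypersurface (frontier D ∩ U))
    (hconv : Convex ℝ (D ∩ U) ∨ Convex ℝ (Dᶜ ∩ U))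
    (hstrict : ∀ x ∈ frontier D ∩ U, ∀ y ∈ frontier D ∩ U, x ≠ y →
      ¬ segment ℝ x y ⊆ frontier D ∩ U) :
    ∃ p g W, StrictChart D g W ∧ p ∈ W ∧ g p = 0 := by
  obtain ⟨p, hp⟩ := hbd
  obtain ⟨W, g, hW, hpW, hg, hg', hzero⟩ := hM p hp
  obtain ⟨δ, hδ, hball⟩ := Metric.isOpen_iff.1 (hW.inter hU) p ⟨hpW, hp.2⟩
  have hBW : Metric.ball p δ ⊆ W := hball.trans inter_subset_left
  have hBU : Metric.ball p δ ⊆ U := hball.trans inter_subset_right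
  have hpB : p ∈ Metric.ball p δ := Metric.mem_ball_self hδ
  have hfr (z : E) (hz : z ∈ Metric.ball p δ) : z ∈ frontier D ↔ g z = 0 := by
    simpa only [mem_inter_iff, mem_ofPred_eq, hBW hz, hBU hz, and_true, true_and] using
      Set.ext_iff.1 hzero z
  have hconvB {A : Set E} (hA : Convex ℝ (A ∩ U)) : Convex ℝ (A ∩ Metric.ball p δ) := by
    rw [← inter_eq_right.2 hBU, ← inter_assoc]
    exact hA.inter (convex_ball p δ)
  have hstrictB : ∀ x ∈ Metric.ball p δ, ∀ y ∈ Metric.ball p δ, x ≠ y →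
      ¬ segment ℝ x y ⊆ frontier D := fun x hx y hy hxy hseg =>
    hstrict x ⟨hseg (left_mem_segment ℝ x y), hBU hx⟩ y
      ⟨hseg (right_mem_segment ℝ x y), hBU hy⟩ hxy
      (subset_inter hseg (((convex_ball p δ).segment_subset hx hy).trans hBU))
  exact ⟨p, g, Metric.ball p δ, strictChart_of_convex hE Metric.isOpen_ball
    (convex_ball p δ) (hconv.imp hconvB hconvB) (hg.mono hBW) (fun x hx => hg' x (hBW hx)) hfr
    hstrictB, hpB, (hfr p hpB).1 hp.1⟩

end Charts

section Slices

variable {E : Type*} [NormedAddCommGroup E] [NormedSpace ℝ E] {D W : Set E} {g : E → ℝ}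
  {p e₁ e₂ : E}

lemma hasFDerivAt_add_smul_add_smul (p e₁ e₂ : E) (v : ℝ × ℝ) :
    HasFDerivAt (fun v : ℝ × ℝ => p + (v.2 • e₁ + v.1 • e₂))
      ((ContinuousLinearMap.snd ℝ ℝ ℝ).smulRight e₁ +
        (ContinuousLinearMap.fst ℝ ℝ ℝ).smulRight e₂) v :=
  ((hasFDerivAt_snd.smul_const e₁).add (hasFDerivAt_fst.smul_const e₂)).const_add p

lemma exists_contDiffAt_graph (hg : ContDiffAt ℝ 1 g p) (he₁ : fderiv ℝ g p e₁ ≠ 0) (e₂ : E) :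
    ∃ c : ℝ → ℝ, ContDiffAt ℝ 1 c 0 ∧ c 0 = 0 ∧
      ∀ᶠ y in 𝓝 0, g (p + (c y • e₁ + y • e₂)) = g p := by
  let J : ℝ × ℝ → E := fun v => p + (v.2 • e₁ + v.1 • e₂)
  have hJ : J (0, 0) = p := by simp [J]
  have hgJ : ContDiffAt ℝ 1 g (J (0, 0)) := hJ.symm ▸ hg
  have hF : ContDiffAt ℝ 1 (g ∘ J) (0, 0) := hgJ.comp (0, 0) (by fun_prop)
  have hF' : fderiv ℝ (g ∘ J) (0, 0) (0, 1) = fderiv ℝ g p e₁ := by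
    have hcomp := (hgJ.differentiableAt one_ne_zero).hasFDerivAt.comp (0, 0)
      (hasFDerivAt_add_smul_add_smul p e₁ e₂ (0, 0))
    simp [hcomp.fderiv, hJ]
  have hinv : (fderiv ℝ (g ∘ J) (0, 0) ∘L .inr ℝ ℝ ℝ).IsInvertible := by
    refine ⟨ContinuousLinearEquiv.unitsEquivAut ℝ (Units.mk0 _ (hF'.trans_ne he₁)), ?_⟩
    ext
    simp
  refine ⟨hF.implicitFunction one_ne_zero hinv, hF.contDiffAt_implicitFunction one_ne_zero hinv,
    hF.implicitFunction_apply_self one_ne_zero hinv, ?_⟩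
  filter_upwards [hF.eventually_apply_implicitFunction one_ne_zero hinv] with y hy
  exact hy.trans (congrArg g hJ)

lemma hasDerivAt_graph {c : ℝ → ℝ} {y k : ℝ} (hc : DifferentiableAt ℝ c y)
    (hg : DifferentiableAt ℝ g (p + (c y • e₁ + y • e₂)))
    (hk : ∀ᶠ y in 𝓝 y, g (p + (c y • e₁ + y • e₂)) = k)
    (he₁ : fderiv ℝ g (p + (c y • e₁ + y • e₂)) e₁ ≠ 0) :
    HasDerivAt c (-(fderiv ℝ g (p + (c y • e₁ + y • e₂)) e₂ /
      fderiv ℝ g (p + (c y • e₁ + y • e₂)) e₁)) y := by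
  have hγ : HasDerivAt (fun y => p + (c y • e₁ + y • e₂)) (deriv c y • e₁ + (1 : ℝ) • e₂) y :=
    ((hc.hasDerivAt.smul_const e₁).add ((hasDerivAt_id y).smul_const e₂)).const_add p
  have hzero := (hg.hasFDerivAt.comp_hasDerivAt y hγ).unique
    ((hasDerivAt_const y k).congr_of_eventuallyEq hk)
  rw [map_add, map_smul, map_smul, one_smul, smul_eq_mul, ← eq_neg_iff_add_eq_zero] at hzero
  rw [← neg_div, ← eq_div_of_mul_eq he₁ hzero]
  exact hc.hasDerivAt

/-- Along an arc of constant slope the zero set of `g` would contain a segment. -/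
lemma StrictChart.not_forall_hasDerivAt (h : StrictChart D g W)
    (hlin : LinearIndependent ℝ ![e₁, e₂]) {c : ℝ → ℝ} {δ : ℝ} (hδ : 0 < δ)
    (hγ : ∀ y ∈ Icc 0 δ, p + (c y • e₁ + y • e₂) ∈ {q ∈ W | g q = 0}) (m : ℝ) :
    ¬ ∀ y ∈ Icc 0 δ, HasDerivAt c m y := by
  intro hc
  have hderiv (y : ℝ) (hy : y ∈ Icc 0 δ) : HasDerivAt (fun y => c y - y * m) 0 y := by
    simpa using (hc y hy).fun_sub ((hasDerivAt_id' y).mul_const m)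
  have haff (y : ℝ) (hy : y ∈ Icc 0 δ) : c y - y * m = c 0 := by
    simpa using constant_of_has_deriv_right_zero
      (fun y hy => (hderiv y hy).continuousAt.continuousWithinAt)
      (fun y hy => (hderiv y (Ico_subset_Icc_self hy)).hasDerivWithinAt) y hy
  set γ : ℝ → E := fun y => p + (c y • e₁ + y • e₂) with hγdef
  have hline (y : ℝ) (hy : y ∈ Icc 0 δ) : γ y = γ 0 + y • (m • e₁ + e₂) := by
    simp only [hγdef, eq_add_of_sub_eq (haff y hy)]
    module
  have h0 : (0 : ℝ) ∈ Icc 0 δ := left_mem_Icc.2 hδ.le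
  have h1 : δ ∈ Icc 0 δ := right_mem_Icc.2 hδ.le
  refine h.not_segment_subset (γ 0) (hγ 0 h0).1 (γ δ) (hγ δ h1).1 (fun heq => ?_) ?_
  · rw [hline δ h1, left_eq_add, smul_eq_zero, or_iff_right hδ.ne'] at heq
    exact one_ne_zero (LinearIndependent.pair_iff.1 hlin m 1 (by rwa [one_smul])).2
  · rw [segment_eq_image']
    rintro _ ⟨θ, hθ, rfl⟩
    have hθδ : θ * δ ∈ Icc 0 δ :=
      ⟨mul_nonneg hθ.1 hδ.le, mul_le_of_le_one_left hδ.le hθ.2⟩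
    convert hγ (θ * δ) hθδ using 1
    change _ = γ (θ * δ)
    simp only [hline δ h1, hline _ hθδ, add_sub_cancel_left, smul_smul]

lemma StrictChart.exists_slice_graph (h : StrictChart D g W) (hp : p ∈ W) (hgp : g p = 0)
    (he₁ : fderiv ℝ g p e₁ ≠ 0) (e₂ : E) :
    ∃ (c : ℝ → ℝ) (δ : ℝ), 0 < δ ∧ ∀ y ∈ Icc 0 δ,
      p + (c y • e₁ + y • e₂) ∈ {q ∈ W | g q = 0} ∧
      fderiv ℝ g (p + (c y • e₁ + y • e₂)) e₁ ≠ 0 ∧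
      HasDerivAt c (-(fderiv ℝ g (p + (c y • e₁ + y • e₂)) e₂ /
        fderiv ℝ g (p + (c y • e₁ + y • e₂)) e₁)) y := by
  have hWp := h.isOpen.mem_nhds hp
  obtain ⟨c, hc, hc0, hzero⟩ := exists_contDiffAt_graph (h.contDiffOn.contDiffAt hWp) he₁ e₂
  have hγ : Tendsto (fun y => p + (c y • e₁ + y • e₂)) (𝓝 0) (𝓝 p) := by
    have hcont : ContinuousAt (fun y => p + (c y • e₁ + y • e₂)) 0 := by
      have := hc.continuousAt
      fun_prop
    simpa [ContinuousAt, hc0] using hcont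
  have hne : ∀ᶠ q in 𝓝 p, fderiv ℝ g q e₁ ≠ 0 :=
    (((h.contDiffOn.continuousOn_fderiv_of_isOpen h.isOpen le_rfl).continuousAt hWp).clm_apply
      continuousAt_const).eventually_ne he₁
  have hall := ((hc.eventually (by simp)).and hzero.eventually_nhds).and
    (hγ.eventually ((h.isOpen.eventually_mem hp).and hne))
  obtain ⟨ε, hε, hball⟩ := Metric.nhds_basis_closedBall.eventually_iff.1 hall
  refine ⟨c, ε, hε, fun y hy => ?_⟩
  obtain ⟨⟨hcy, hzy⟩, hWy, hney⟩ := hball (show y ∈ Metric.closedBall 0 ε by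
    rw [Real.closedBall_eq_Icc]
    exact ⟨by linarith [hy.1], by linarith [hy.2]⟩)
  exact ⟨⟨hWy, hzy.self_of_nhds.trans hgp⟩, hney, hasDerivAt_graph
    (hcy.differentiableAt one_ne_zero) (hasFDerivAt_of_contDiffOn h.contDiffOn h.isOpen
      hWy).differentiableAt hzy hney⟩

theorem StrictChart.exists_isCompact_slopes (h : StrictChart D g W) (hp : p ∈ W) (hgp : g p = 0)
    (he₁ : fderiv ℝ g p e₁ ≠ 0) (hlin : LinearIndependent ℝ ![e₁, e₂]) :
    ∃ (S : Set E) (α κ : ℝ), IsCompact S ∧ 0 < κ ∧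
      (∀ q ∈ S, q ∈ W ∧ g q = 0 ∧ fderiv ℝ g q e₁ ≠ 0 ∧ ∃ x y : ℝ, q = p + (x • e₁ + y • e₂)) ∧
      Icc α (α + κ) ⊆ (fun q => fderiv ℝ g q e₂ / fderiv ℝ g q e₁) '' S := by
  obtain ⟨c, δ, hδ, hc⟩ := h.exists_slice_graph hp hgp he₁ e₂
  set γ : ℝ → E := fun y => p + (c y • e₁ + y • e₂)
  set m : E → ℝ := fun q => fderiv ℝ g q e₂ / fderiv ℝ g q e₁
  have hcc : ContinuousOn c (Icc 0 δ) := fun y hy =>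
    (hc y hy).2.2.continuousAt.continuousWithinAt
  have hγc : ContinuousOn γ (Icc 0 δ) := by fun_prop
  have hfd (e : E) : ContinuousOn (fun y => fderiv ℝ g (γ y) e) (Icc 0 δ) :=
    ((h.contDiffOn.continuousOn_fderiv_of_isOpen h.isOpen le_rfl).comp hγc
      fun y hy => (hc y hy).1.1).clm_apply continuousOn_const
  have hmc : ContinuousOn (m ∘ γ) (Icc 0 δ) := (hfd e₂).div (hfd e₁) fun y hy => (hc y hy).2.1
  have h0 : (0 : ℝ) ∈ Icc 0 δ := left_mem_Icc.2 hδ.le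
  obtain ⟨y₁, hy₁, hne⟩ : ∃ y ∈ Icc 0 δ, m (γ y) ≠ m (γ 0) := by
    by_contra! hconst
    exact h.not_forall_hasDerivAt hlin hδ (fun y hy => (hc y hy).1) (-m (γ 0))
      fun y hy => hconst y hy ▸ (hc y hy).2.2
  have hsub : uIcc 0 y₁ ⊆ Icc 0 δ := ordConnected_Icc.uIcc_subset h0 hy₁
  refine ⟨γ '' Icc 0 δ, min (m (γ 0)) (m (γ y₁)), max (m (γ 0)) (m (γ y₁)) -
    min (m (γ 0)) (m (γ y₁)), isCompact_Icc.image_of_continuousOn hγc,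
    sub_pos.2 (min_lt_max.2 hne.symm), ?_, ?_⟩
  · rintro _ ⟨y, hy, rfl⟩
    exact ⟨(hc y hy).1.1, (hc y hy).1.2, (hc y hy).2.1, c y, y, rfl⟩
  · rw [add_sub_cancel, ← image_comp]
    exact (intermediate_value_uIcc (hmc.mono hsub)).trans (image_mono hsub)

end Slices

section SweptSlopes

variable {D W : Set (V2 × V2)} {g : V2 × V2 → ℝ} {p : V2 × V2}

lemma BlowsUpTo.of_smul {E : Type*} [NormedAddCommGroup E] [NormedSpace ℝ E] {D : Set E} {q : E}
    {L : E →L[ℝ] ℝ} {a σ : ℝ} (h : BlowsUpTo D q (a • L) σ) (ha : a ≠ 0) :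
    BlowsUpTo D q L (σ * (a / |a|)) := by
  intro x hx
  filter_upwards [h x (mul_ne_zero ha hx)] with R hR
  have hscale : σ * (a • L) x = |a| * (σ * (a / |a|) * L x) := by
    have := abs_ne_zero.2 ha
    rw [smul_apply, smul_eq_mul]
    field_simp
  rw [hR, hscale, mul_pos_iff_of_pos_left (abs_pos.2 ha)]

lemma eq_smul_pairDot (L : (V2 × V2) →L[ℝ] ℝ) {a : ℝ} (ha : L (0, (1, 0)) = a) (ha0 : a ≠ 0) :
    L = a • pairDot (L ((1, 0), 0) / a, L ((0, 1), 0) / a)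
      (1, L (0, (0, 1)) / a) := by
  ext <;> simp [pairDot_apply, dot2, ha, mul_div_cancel₀ _ ha0]

theorem StrictChart.exists_blowsUpTo_Icc (h : StrictChart D g W) (hp : p ∈ W) (hgp : g p = 0)
    (hgp' : fderiv ℝ g p (0, (1, 0)) ≠ 0) :
    ∃ (α κ M : ℝ) (b u : ℝ → V2) (τ : ℝ → ℝ), 0 < κ ∧ ∀ s ∈ Icc α (α + κ),
      ‖u s‖ ≤ M ∧ |τ s| = 1 ∧ BlowsUpTo D (p.1, b s) (pairDot (u s) (1, s)) (τ s) := by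
  have hlin : LinearIndependent ℝ ![((0, (1, 0)) : V2 × V2), (0, (0, 1))] :=
    LinearIndependent.pair_iff.2 fun s t hst => by simpa using hst
  obtain ⟨S, α, κ, hS, hκ, hSW, hslope⟩ := h.exists_isCompact_slopes hp hgp hgp' hlin
  set a : V2 × V2 → ℝ := fun q => fderiv ℝ g q (0, (1, 0))
  set U : V2 × V2 → V2 := fun q =>
    (fderiv ℝ g q ((1, 0), 0) / a q, fderiv ℝ g q ((0, 1), 0) / a q)
  have hfd (e : V2 × V2) : ContinuousOn (fun q => fderiv ℝ g q e) S :=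
    ((h.contDiffOn.continuousOn_fderiv_of_isOpen h.isOpen le_rfl).mono
      fun q hq => (hSW q hq).1).clm_apply continuousOn_const
  have ha (q) (hq : q ∈ S) : a q ≠ 0 := (hSW q hq).2.2.1
  obtain ⟨M, hM⟩ := hS.exists_bound_of_continuousOn
    (((hfd _).div (hfd _) ha).prodMk ((hfd _).div (hfd _) ha) : ContinuousOn U S)
  have hex : ∀ s ∈ Icc α (α + κ), ∃ b u τ,
      ‖u‖ ≤ M ∧ |τ| = 1 ∧ BlowsUpTo D (p.1, b) (pairDot u (1, s)) τ := by
    intro s hs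
    obtain ⟨q, hq, rfl⟩ := hslope hs
    obtain ⟨hqW, hgq, -, x, y, hqp⟩ := hSW q hq
    obtain ⟨σ, hσ, hb⟩ := h.blowsUpTo q hqW hgq
    rw [eq_smul_pairDot (fderiv ℝ g q) rfl (ha q hq)] at hb
    have hq1 : (p.1, q.2) = q := Prod.ext (by simp [hqp]) rfl
    refine ⟨q.2, U q, σ * (a q / |a q|), hM q hq, ?_, hq1.symm ▸ hb.of_smul (ha q hq)⟩
    rw [abs_mul, hσ, one_mul, abs_div, abs_abs, div_self (abs_ne_zero.2 (ha q hq))]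
  choose! b u τ hbu using hex
  exact ⟨α, κ, M, b, u, τ, hκ, hbu⟩

end SweptSlopes

section Conclusion

variable {D W : Set (V2 × V2)} {g : V2 × V2 → ℝ} {x : V2 × V2} {p q r : ℝ} {C : ENNReal}

lemma fderiv_comp_equiv_symm {E : Type*} [NormedAddCommGroup E] [NormedSpace ℝ E] (g : E → ℝ)
    (e : E ≃L[ℝ] E) (x v : E) : fderiv ℝ (g ∘ e) (e.symm x) v = fderiv ℝ g x (e v) := by
  rw [e.comp_right_fderiv, e.apply_symm_apply]
  rfl

lemma StrictChart.not_trilinearBound_of_fderiv_ne_zero (h : StrictChart D g W)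
    (hD : MeasurableSet D) (hC : C ≠ ⊤) (hp : 0 < p) (hq : 0 < q) (hr : 0 < r) (hr2 : r < 2)
    (hsum : p⁻¹ + q⁻¹ + r⁻¹ = 1) (hx : x ∈ W) (hgx : g x = 0)
    (hx' : fderiv ℝ g x (0, (1, 0)) ≠ 0) : ¬ TrilinearBound D p q r C := by
  intro hB
  obtain ⟨α, κ, M, b, u, τ, hκ, hbu⟩ := h.exists_blowsUpTo_Icc hx hgx hx'
  exact not_halfSpaceFamilyBound hκ hq hr hr2 hC (fun s hs => (hbu s hs).1)
    (fun s hs => (hbu s hs).2.1)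
    (hB.halfSpaceFamilyBound hD hp hq hr hr2.le hsum fun s hs => (hbu s hs).2.2)

lemma StrictChart.not_trilinearBound_of_fderiv_snd_ne_zero (h : StrictChart D g W)
    (hD : MeasurableSet D) (hC : C ≠ ⊤) (hp : 0 < p) (hq : 0 < q) (hr : 0 < r) (hr2 : r < 2)
    (hsum : p⁻¹ + q⁻¹ + r⁻¹ = 1) (hx : x ∈ W) (hgx : g x = 0) {v : V2}
    (hv : fderiv ℝ g x (0, v) ≠ 0) : ¬ TrilinearBound D p q r C := by
  intro hB
  by_cases hfst : fderiv ℝ g x (0, (1, 0)) = 0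
  · let e : (V2 × V2) ≃L[ℝ] (V2 × V2) :=
      (ContinuousLinearEquiv.prodComm ℝ ℝ ℝ).prodCongr (ContinuousLinearEquiv.prodComm ℝ ℝ ℝ)
    have hsnd : fderiv ℝ g x (0, (0, 1)) ≠ 0 := by
      intro hsnd
      have hdecomp : ((0, v) : V2 × V2) = v.1 • (0, (1, 0)) + v.2 • (0, (0, 1)) := by simp
      exact hv (by rw [hdecomp, map_add, map_smul, map_smul, hfst, hsnd, smul_zero, smul_zero,
        add_zero])
    refine (h.preimage e).not_trilinearBound_of_fderiv_ne_zero
      (hD.preimage e.continuous.measurable) hC hp hq hr hr2 hsum (x := e.symm x) (by simpa)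
      (by simpa) ?_ (hB.preimage_coordSwap hp hq hr hsum)
    rw [fderiv_comp_equiv_symm]
    exact hsnd
  · exact h.not_trilinearBound_of_fderiv_ne_zero hD hC hp hq hr hr2 hsum hx hgx hfst hB

lemma StrictChart.not_trilinearBound_of_third_lt_two (h : StrictChart D g W)
    (hD : MeasurableSet D) (hC : C ≠ ⊤) (hp : 0 < p) (hq : 0 < q) (hr : 0 < r) (hr2 : r < 2)
    (hsum : p⁻¹ + q⁻¹ + r⁻¹ = 1) (hx : x ∈ W) (hgx : g x = 0) : ¬ TrilinearBound D p q r C := by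
  intro hB
  obtain ⟨v, hv⟩ := DFunLike.ne_iff.1 (h.fderiv_ne_zero x hx)
  by_cases hsnd : fderiv ℝ g x (0, v.2) = 0
  · let e : (V2 × V2) ≃L[ℝ] (V2 × V2) := ContinuousLinearEquiv.prodComm ℝ V2 V2
    have hfst : fderiv ℝ g x (v.1, 0) ≠ 0 := by
      intro hfst
      have hdecomp : v = (v.1, 0) + (0, v.2) := by simp
      exact hv (by rw [hdecomp, map_add, hfst, hsnd, add_zero, zero_apply])
    refine (h.preimage e).not_trilinearBound_of_fderiv_snd_ne_zero
      (hD.preimage e.continuous.measurable) hC hq hp hr hr2 (by rwa [add_comm q⁻¹])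
      (x := e.symm x) (v := v.1) (by simpa) (by simpa) ?_ hB.preimage_swap
    rw [fderiv_comp_equiv_symm]
    exact hfst
  · exact h.not_trilinearBound_of_fderiv_snd_ne_zero hD hC hp hq hr hr2 hsum hx hgx hsnd hB

lemma StrictChart.not_trilinearBound_of_first_lt_two (h : StrictChart D g W)
    (hD : MeasurableSet D) (hC : C ≠ ⊤) (hp : 0 < p) (hq : 0 < q) (hr : 0 < r) (hp2 : p < 2)
    (hsum : p⁻¹ + q⁻¹ + r⁻¹ = 1) (hx : x ∈ W) (hgx : g x = 0) : ¬ TrilinearBound D p q r C :=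
  fun hB => (h.preimage exchangeFirstThird).not_trilinearBound_of_third_lt_two
    (hD.preimage exchangeFirstThird.continuous.measurable) hC hr hq hp hp2 (by rw [← hsum]; ring)
    (x := exchangeFirstThird.symm x) (by simpa) (by simpa) hB.preimage_exchangeFirstThird

lemma StrictChart.not_trilinearBound_of_second_lt_two (h : StrictChart D g W)
    (hD : MeasurableSet D) (hC : C ≠ ⊤) (hp : 0 < p) (hq : 0 < q) (hr : 0 < r) (hq2 : q < 2)
    (hsum : p⁻¹ + q⁻¹ + r⁻¹ = 1) (hx : x ∈ W) (hgx : g x = 0) : ¬ TrilinearBound D p q r C :=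
  let e : (V2 × V2) ≃L[ℝ] (V2 × V2) := ContinuousLinearEquiv.prodComm ℝ V2 V2
  fun hB => (h.preimage e).not_trilinearBound_of_first_lt_two
    (hD.preimage e.continuous.measurable) hC hq hp hr hq2 (by rwa [add_comm q⁻¹])
    (x := e.symm x) (by simpa) (by simpa) hB.preimage_swap

theorem corollary_strictly_convex_general {D U : Set (V2 × V2)} (hD : MeasurableSet D)
    (hU : IsOpen U) (hbd : (frontier D ∩ U).Nonempty) (hM : IsC1Hypersurface (frontier D ∩ U))
    (hconv : Convex ℝ (D ∩ U) ∨ Convex ℝ (Dᶜ ∩ U))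
    (hstrict : ∀ x ∈ frontier D ∩ U, ∀ y ∈ frontier D ∩ U, x ≠ y →
      ¬ segment ℝ x y ⊆ frontier D ∩ U)
    {p : Fin 3 → ℝ} (hp : ∀ k, 1 < p k) (hsum : (p 0)⁻¹ + (p 1)⁻¹ + (p 2)⁻¹ = 1)
    (hp2 : ∃ k, p k < 2) :
    ¬ ∃ C : ℝ, ∀ f g : SchwartzMap V2 ℂ,
      eLpNorm (TD D f g) (ENNReal.ofReal (p 2 / (p 2 - 1))) volume ≤
        ENNReal.ofReal C * (eLpNorm f (ENNReal.ofReal (p 0)) volume *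
          eLpNorm g (ENNReal.ofReal (p 1)) volume) := by
  rintro ⟨C, hC⟩
  have hrank : 1 < Module.rank ℝ (V2 × V2) := by
    rw [← Module.finrank_eq_rank]
    norm_num [Module.finrank_prod]
  obtain ⟨x, g, W, hchart, hx, hgx⟩ := exists_strictChart hrank hU hbd hM hconv hstrict
  have hB := TrilinearBound.of_TD hD (hp 2) hC
  have hpos (k : Fin 3) : 0 < p k := zero_lt_one.trans (hp k)
  obtain ⟨k, hk⟩ := hp2
  fin_cases k
  · exact hchart.not_trilinearBound_of_first_lt_two hD ENNReal.ofReal_ne_top (hpos 0) (hpos 1)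
      (hpos 2) hk hsum hx hgx hB
  · exact hchart.not_trilinearBound_of_second_lt_two hD ENNReal.ofReal_ne_top (hpos 0) (hpos 1)
      (hpos 2) hk hsum hx hgx hB
  · exact hchart.not_trilinearBound_of_third_lt_two hD ENNReal.ofReal_ne_top (hpos 0) (hpos 1)
      (hpos 2) hk hsum hx hgx hB

end Conclusion

/-- **Corollary.** If `D ⊆ ℝ⁴` is a domain whose boundary is a smooth hypersurface in
some open set `U`, and `D` (or its complement) is strictly convex there, then `T_D` is
unbounded from `L^{p₁} × L^{p₂}` to `L^{p₃'}` whenever `1/p₁+1/p₂+1/p₃ = 1`,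
`1 < pₖ < ∞` and exactly one `pₖ` is `< 2`. -/
theorem corollary_strictly_convex (D : Set (V2 × V2)) (hD : IsOpen D)
    (hconn : IsConnected D)
    (U : Set (V2 × V2)) (hU : IsOpen U) (hbd : (frontier D ∩ U).Nonempty)
    (hsmooth : IsSmoothHypersurface (frontier D ∩ U))
    (hconv : Convex ℝ (D ∩ U) ∨ Convex ℝ (Dᶜ ∩ U))
    (hstrict : ∀ x ∈ frontier D ∩ U, ∀ y ∈ frontier D ∩ U, x ≠ y →
      ¬ segment ℝ x y ⊆ frontier D ∩ U)
    (p : Fin 3 → ℝ) (hp : ∀ k, 1 < p k)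
    (hsum : (p 0)⁻¹ + (p 1)⁻¹ + (p 2)⁻¹ = 1)
    (hone : ∃! k : Fin 3, p k < 2) :
    ¬ ∃ C : ℝ, ∀ f g : SchwartzMap V2 ℂ,
      eLpNorm (TD D ⇑f ⇑g) (ENNReal.ofReal (p 2 / (p 2 - 1))) volume ≤
        ENNReal.ofReal C * (eLpNorm (⇑f) (ENNReal.ofReal (p 0)) volume *
          eLpNorm (⇑g) (ENNReal.ofReal (p 1)) volume) :=
  corollary_strictly_convex_general hD.measurableSet hU hbd hsmooth.isC1Hypersurface hconv hstrict
    hp hsum hone.exists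
end
end

section
/- Cylinder boundedness transfer (used in Proposition 3): Let 1 < p1,p2,p3 < ∞ with 1/p1+1/p2+1/p3 = 1 and set p3' = p3/(p3−1). Let D0 ⊆ ℝ² be measurable and suppose there is a constant C such that ‖T_{D0}(u,v)‖_{L^{p3'}(ℝ)} ≤ C ‖u‖_{L^{p1}(ℝ)} ‖v‖_{L^{p2}(ℝ)} for all Schwartz u,v on ℝ. Let D = {(ξ1,ξ2,ξ3,ξ4) ∈ ℝ⁴ : (ξ1,ξ3) ∈ D0}, where a point of ℝ⁴ = ℝ²×ℝ² is written ((ξ1,ξ2),(ξ3,ξ4)). Then ‖T_D(f,g)‖_{L^{p3'}(ℝ²)} ≤ C ‖f‖_{L^{p1}(ℝ²)} ‖g‖_{L^{p2}(ℝ²)} for all Schwartz f,g on ℝ²; in particular T_D is a bounded bilinear Fourier multiplier from L^{p1}(ℝ²)×L^{p2}(ℝ²) to L^{p3'}(ℝ²). -/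
open MeasureTheory Filter Topology Set

noncomputable section

/-- Fourier transform on ℝ. -/
def FT1 (f : ℝ → ℂ) (ξ : ℝ) : ℂ :=
  ∫ x : ℝ, Complex.exp (-(2 * Real.pi * (x * ξ)) * Complex.I) * f x

/-- The one-dimensional bilinear Fourier multiplier operator with symbol `χ_{D₀}`,
`D₀ ⊆ ℝ×ℝ`. -/
def TD0 (D0 : Set (ℝ × ℝ)) (u v : ℝ → ℂ) (x : ℝ) : ℂ :=
  ∫ ξ : ℝ × ℝ, Set.indicator D0 (fun _ => (1 : ℂ)) ξ *
    (FT1 u ξ.1 * (FT1 v ξ.2 * Complex.exp ((2 * Real.pi * ((ξ.1 + ξ.2) * x)) * Complex.I)))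

/-!
The symbol of `T_D` does not depend on `ξ₂` and `ξ₄`, so the Fourier inversion in these two
variables can be carried out: on the horizontal line at height `y` the function `T_D(f, g)` is
`T_{D₀}(f(·, y), g(·, y))`. Applying the one-dimensional bound on each line and integrating in `y`
by Hölder's inequality, with `1/q = 1/p₁ + 1/p₂`, preserves the constant.
-/

open scoped SchwartzMap FourierTransform ENNReal

lemma measurePreserving_prodProdProdComm {α β γ δ : Type*} [MeasurableSpace α] [MeasurableSpace β]
    [MeasurableSpace γ] [MeasurableSpace δ] (μa : Measure α) (μb : Measure β) (μc : Measure γ)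
    (μd : Measure δ) [SFinite μa] [SFinite μb] [SFinite μc] [SFinite μd] :
    MeasurePreserving (Equiv.prodProdProdComm α β γ δ) ((μa.prod μb).prod (μc.prod μd))
      ((μa.prod μc).prod (μb.prod μd)) := by
  have hswap : MeasurePreserving (fun p : β × γ × δ => (p.2.1, p.1, p.2.2))
      (μb.prod (μc.prod μd)) (μc.prod (μb.prod μd)) :=
    (measurePreserving_prodAssoc μc μb μd).comp
      ((Measure.measurePreserving_swap.prod (MeasurePreserving.id μd)).comp
        (measurePreserving_prodAssoc μb μc μd).symm)
  exact (measurePreserving_prodAssoc μa μc (μb.prod μd)).symm.comp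
    (((MeasurePreserving.id μa).prod hswap).comp
      (measurePreserving_prodAssoc μa μb (μc.prod μd)))

lemma integrable_fourierChar_smul {α G : Type*} [MeasurableSpace α] {μ : Measure α}
    [NormedAddCommGroup G] [NormedSpace ℂ G] {f : α → G} (hf : Integrable f μ) {r : α → ℝ}
    (hr : AEStronglyMeasurable r μ) :
    Integrable (fun z => 𝐞 (r z) • f z) μ :=
  hf.congr' ((Real.continuous_fourierChar.comp_aestronglyMeasurable hr).smul hf.1)
    (ae_of_all _ fun _ => (Circle.norm_smul _ _).symm)

section MixedNorm

variable {α β : Type*} [MeasurableSpace α] [MeasurableSpace β] {μ : Measure α} {ν : Measure β}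

lemma eLpNorm_top_le_iff {ε : Type*} [ENorm ε] {f : α → ε} {a : ℝ≥0∞} :
    eLpNorm f ∞ μ ≤ a ↔ ∀ᵐ x ∂μ, ‖f x‖ₑ ≤ a := by
  rw [eLpNorm_exponent_top]
  exact ⟨fun h => (enorm_ae_le_eLpNormEssSup f μ).mono fun _ hx => hx.trans h,
    eLpNormEssSup_le_of_ae_enorm_bound⟩

lemma eLpNorm_mul_le_eLpNorm_top_mul {φ ψ : α → ℝ≥0∞} (hψ : AEMeasurable ψ μ) {p : ℝ≥0∞} :
    eLpNorm (fun x => φ x * ψ x) p μ ≤ eLpNorm φ ∞ μ * eLpNorm ψ p μ := by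
  have hφ : ∀ᵐ x ∂μ, φ x ≤ eLpNorm φ ∞ μ := eLpNorm_top_le_iff.1 le_rfl
  obtain rfl | hp := eq_or_ne p 0
  · simp
  obtain rfl | hp_top := eq_or_ne p ∞
  · refine eLpNorm_top_le_iff.2 ?_
    filter_upwards [hφ, eLpNorm_top_le_iff.1 (le_refl (eLpNorm ψ ∞ μ))] with x hφx hψx
    exact mul_le_mul' hφx hψx
  have hp_pos : 0 < p.toReal := ENNReal.toReal_pos hp hp_top
  simp only [eLpNorm_eq_lintegral_rpow_enorm_toReal hp hp_top, enorm_eq_self, one_div]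
  rw [ENNReal.rpow_inv_le_iff hp_pos, ENNReal.mul_rpow_of_nonneg _ _ hp_pos.le,
    ENNReal.rpow_inv_rpow hp_pos.ne', ← lintegral_const_mul'' _ (hψ.pow_const _)]
  refine lintegral_mono_ae (hφ.mono fun x hx => ?_)
  rw [← ENNReal.mul_rpow_of_nonneg _ _ hp_pos.le]
  gcongr

lemma eLpNorm_const_mul_le {ψ : α → ℝ≥0∞} (hψ : AEMeasurable ψ μ) (c p : ℝ≥0∞) :
    eLpNorm (fun x => c * ψ x) p μ ≤ c * eLpNorm ψ p μ :=
  (eLpNorm_mul_le_eLpNorm_top_mul hψ).trans <|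
    mul_le_mul_left (eLpNorm_top_le_iff.2 (ae_of_all _ fun _ => le_rfl)) _

lemma eLpNorm_mul_le_of_holderTriple {φ ψ : α → ℝ≥0∞} (hφ : AEMeasurable φ μ)
    (hψ : AEMeasurable ψ μ) {p₁ p₂ q : ℝ≥0∞} [hpq : ENNReal.HolderTriple p₁ p₂ q] :
    eLpNorm (fun x => φ x * ψ x) q μ ≤ eLpNorm φ p₁ μ * eLpNorm ψ p₂ μ := by
  obtain rfl | hq := eq_or_ne q 0
  · simp
  obtain rfl | hp₁_top := eq_or_ne p₁ ∞
  · obtain rfl : q = p₂ := ENNReal.HolderTriple.unique ∞ p₂ q p₂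
    exact eLpNorm_mul_le_eLpNorm_top_mul hψ
  obtain rfl | hp₂_top := eq_or_ne p₂ ∞
  · obtain rfl : q = p₁ := ENNReal.HolderTriple.unique p₁ ∞ q p₁
    simpa only [mul_comm] using eLpNorm_mul_le_eLpNorm_top_mul hφ
  have hq_top : q ≠ ∞ := ((ENNReal.HolderTriple.le p₁ p₂ q).trans_lt hp₁_top.lt_top).ne
  have hp₁ : p₁ ≠ 0 := (hq.bot_lt.trans_le (ENNReal.HolderTriple.le p₁ p₂ q)).ne'
  have hp₂ : p₂ ≠ 0 := (hq.bot_lt.trans_le (ENNReal.HolderTriple.le p₂ p₁ q)).ne'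
  have hinv : q.toReal⁻¹ = p₁.toReal⁻¹ + p₂.toReal⁻¹ := by
    simpa [ENNReal.toReal_add, hp₁, hp₂] using congrArg ENNReal.toReal hpq.inv_eq
  have hlt : q.toReal < p₁.toReal := by
    rw [← inv_lt_inv₀ (ENNReal.toReal_pos hp₁ hp₁_top) (ENNReal.toReal_pos hq hq_top), hinv]
    exact lt_add_of_pos_right _ (inv_pos.2 (ENNReal.toReal_pos hp₂ hp₂_top))
  simp only [eLpNorm_eq_lintegral_rpow_enorm_toReal hq hq_top,
    eLpNorm_eq_lintegral_rpow_enorm_toReal hp₁ hp₁_top,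
    eLpNorm_eq_lintegral_rpow_enorm_toReal hp₂ hp₂_top, enorm_eq_self]
  exact ENNReal.lintegral_Lp_mul_le_Lq_mul_Lr (ENNReal.toReal_pos hq hq_top) hlt
    (by simpa only [one_div] using hinv) μ hφ hψ

variable {ε : Type*} [TopologicalSpace ε] [ContinuousENorm ε] {f : α × β → ε} {p : ℝ≥0∞}

lemma ae_ae_swap_of_ae_prod [SFinite μ] [SFinite ν] {P : α × β → Prop}
    (h : ∀ᵐ z ∂μ.prod ν, P z) : ∀ᵐ y ∂ν, ∀ᵐ x ∂μ, P (x, y) :=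
  Measure.ae_ae_of_ae_prod (Measure.measurePreserving_swap.quasiMeasurePreserving.ae h)

lemma eLpNorm_prodMk_right_congr_ae [SFinite μ] [SFinite ν] {g : α × β → ε}
    (h : f =ᵐ[μ.prod ν] g) :
    (fun y => eLpNorm (fun x => f (x, y)) p μ) =ᵐ[ν] fun y => eLpNorm (fun x => g (x, y)) p μ :=
  (ae_ae_swap_of_ae_prod h).mono fun _ hy => eLpNorm_congr_ae hy

lemma measurable_eLpNorm_prodMk_right [SFinite μ] (hf : StronglyMeasurable f) :
    Measurable fun y => eLpNorm (fun x => f (x, y)) p μ := by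
  obtain rfl | hp := eq_or_ne p 0
  · simp
  obtain rfl | hp_top := eq_or_ne p ∞
  · refine measurable_of_Iic fun a => ?_
    have hpre : (fun y => eLpNorm (fun x => f (x, y)) ∞ μ) ⁻¹' Iic a =
        {y | μ ((fun x => (x, y)) ⁻¹' {z | a < ‖f z‖ₑ}) = 0} := by
      ext y
      simp only [mem_preimage, mem_Iic, eLpNorm_top_le_iff, ae_iff, not_le]
      rfl
    rw [hpre]
    exact measurable_measure_prodMk_right (measurableSet_lt measurable_const hf.enorm)
      (measurableSet_singleton 0)
  · simp only [eLpNorm_eq_lintegral_rpow_enorm_toReal hp hp_top]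
    exact (hf.enorm.pow_const _).lintegral_prod_left'.pow_const _

lemma aemeasurable_eLpNorm_prodMk_right [SFinite μ] [SFinite ν]
    (hf : AEStronglyMeasurable f (μ.prod ν)) :
    AEMeasurable (fun y => eLpNorm (fun x => f (x, y)) p μ) ν :=
  (measurable_eLpNorm_prodMk_right hf.stronglyMeasurable_mk).aemeasurable.congr
    (eLpNorm_prodMk_right_congr_ae hf.ae_eq_mk).symm

lemma eLpNorm_prod_symm [SFinite μ] [SFinite ν] (hf : AEStronglyMeasurable f (μ.prod ν)) :
    eLpNorm f p (μ.prod ν) = eLpNorm (fun y => eLpNorm (fun x => f (x, y)) p μ) p ν := by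
  obtain rfl | hp := eq_or_ne p 0
  · simp
  obtain rfl | hp_top := eq_or_ne p ∞
  · rw [eLpNorm_congr_ae hf.ae_eq_mk,
      eLpNorm_congr_ae (eLpNorm_prodMk_right_congr_ae hf.ae_eq_mk)]
    refine eq_of_forall_ge_iff fun a => ?_
    have hmeas : MeasurableSet {z | ‖hf.mk f z‖ₑ ≤ a} :=
      measurableSet_le hf.stronglyMeasurable_mk.enorm measurable_const
    simp only [eLpNorm_top_le_iff, enorm_eq_self]
    rw [Measure.ae_prod_iff_ae_ae hmeas]
    exact Measure.ae_ae_comm hmeas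
  · have hp_pos : p.toReal ≠ 0 := (ENNReal.toReal_pos hp hp_top).ne'
    simp only [eLpNorm_eq_lintegral_rpow_enorm_toReal hp hp_top, enorm_eq_self, one_div,
      ENNReal.rpow_inv_rpow hp_pos]
    rw [lintegral_prod_symm _ (hf.enorm.pow_const _)]

theorem eLpNorm_prod_le_of_forall_slice {ε₁ ε₂ : Type*} [TopologicalSpace ε₁] [ContinuousENorm ε₁]
    [TopologicalSpace ε₂] [ContinuousENorm ε₂] [SFinite μ] [SFinite ν] {p₁ p₂ q c : ℝ≥0∞}
    [ENNReal.HolderTriple p₁ p₂ q] {h : α × β → ε} {f : α × β → ε₁} {g : α × β → ε₂}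
    (hh : AEStronglyMeasurable h (μ.prod ν)) (hf : AEStronglyMeasurable f (μ.prod ν))
    (hg : AEStronglyMeasurable g (μ.prod ν))
    (hle : ∀ᵐ y ∂ν, eLpNorm (fun x => h (x, y)) q μ ≤
      c * (eLpNorm (fun x => f (x, y)) p₁ μ * eLpNorm (fun x => g (x, y)) p₂ μ)) :
    eLpNorm h q (μ.prod ν) ≤ c * (eLpNorm f p₁ (μ.prod ν) * eLpNorm g p₂ (μ.prod ν)) := by
  rw [eLpNorm_prod_symm hh, eLpNorm_prod_symm hf, eLpNorm_prod_symm hg]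
  have hf' := aemeasurable_eLpNorm_prodMk_right (p := p₁) hf
  have hg' := aemeasurable_eLpNorm_prodMk_right (p := p₂) hg
  exact (eLpNorm_mono_enorm_ae hle).trans <| (eLpNorm_const_mul_le (hf'.mul hg') c q).trans <|
    mul_le_mul_right (eLpNorm_mul_le_of_holderTriple hf' hg') c

end MixedNorm

section PartialFourier

variable {E F G : Type*} [NormedAddCommGroup E] [NormedAddCommGroup F] [NormedAddCommGroup G]

section Slices

variable [NormedSpace ℝ E] [NormedSpace ℝ F] [NormedSpace ℝ G]

lemma hasTemperateGrowth_prodMk_right (y : F) :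
    Function.HasTemperateGrowth fun x : E => (x, y) := by
  simpa [Function.comp_def, Pi.add_def] using
    (ContinuousLinearMap.inl ℝ E F).hasTemperateGrowth.add (.const (0, y))

lemma hasTemperateGrowth_prodMk_left (x : E) :
    Function.HasTemperateGrowth fun y : F => (x, y) := by
  simpa [Function.comp_def, Pi.add_def] using
    (ContinuousLinearMap.inr ℝ E F).hasTemperateGrowth.add (.const (x, 0))

/-- The restriction of `f` to the horizontal line at height `y`, as a Schwartz function on `E`. -/
def horizontalSlice (f : 𝓢(E × F, G)) (y : F) : 𝓢(E, G) :=
  SchwartzMap.compCLMOfAntilipschitz ℝ (K := 1) (hasTemperateGrowth_prodMk_right y)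
    (Isometry.of_dist_eq fun x x' => by simp [Prod.dist_eq]).antilipschitz f

/-- The restriction of `f` to the vertical line over `x`, as a Schwartz function on `F`. -/
def verticalSlice (f : 𝓢(E × F, G)) (x : E) : 𝓢(F, G) :=
  SchwartzMap.compCLMOfAntilipschitz ℝ (K := 1) (hasTemperateGrowth_prodMk_left x)
    (Isometry.of_dist_eq fun y y' => by simp [Prod.dist_eq]).antilipschitz f

lemma coe_horizontalSlice (f : 𝓢(E × F, G)) (y : F) : ⇑(horizontalSlice f y) = fun x => f (x, y) :=
  rfl

lemma exists_integrable_forall_norm_slice_le [MeasurableSpace E] (μ : Measure E)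
    [μ.HasTemperateGrowth] (f : 𝓢(E × F, G)) :
    ∃ b : E → ℝ, Integrable b μ ∧ ∀ x y, ‖f (x, y)‖ ≤ b x := by
  obtain ⟨K, hK⟩ : ∃ K, ∀ z : E × F, (1 + ‖z‖) ^ μ.integrablePower * ‖f z‖ ≤ K := by
    have hdecay := SchwartzMap.one_add_le_sup_seminorm_apply (𝕜 := ℝ)
      (m := (μ.integrablePower, 0)) le_rfl le_rfl f
    simp only [norm_iteratedFDeriv_zero] at hdecay
    exact ⟨_, hdecay⟩
  refine ⟨fun x => (1 + ‖x‖) ^ (-(μ.integrablePower : ℝ)) * K,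
    (Measure.integrable_pow_neg_integrablePower μ).mul_const K, fun x y => ?_⟩
  simp only [Real.rpow_neg (add_nonneg zero_le_one (norm_nonneg x)), Real.rpow_natCast]
  rw [← div_eq_inv_mul, le_div_iff₀' (by positivity)]
  refine le_trans ?_ (hK (x, y))
  gcongr
  exact norm_fst_le (x, y)

end Slices

variable [InnerProductSpace ℝ E] [FiniteDimensional ℝ E] [MeasurableSpace E] [BorelSpace E]
  [NormedSpace ℂ G]

lemma continuous_fourier_slice [NormedSpace ℝ F] (f : 𝓢(E × F, G)) (ξ : E) :
    Continuous fun y => 𝓕 (fun x => f (x, y)) ξ := by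
  obtain ⟨b, hb, hfb⟩ := exists_integrable_forall_norm_slice_le volume f
  simp only [Real.fourier_eq]
  refine continuous_of_dominated (fun y => ?_) (fun y => ae_of_all _ fun x => ?_) hb
    (ae_of_all _ fun x => ?_)
  · have hphase : Continuous fun x : E => -inner ℝ x ξ := by fun_prop
    exact (integrable_fourierChar_smul (horizontalSlice f y).integrable
      hphase.aestronglyMeasurable).aestronglyMeasurable
  · rw [Circle.norm_smul]
    exact hfb x y
  · exact (f.continuous.comp (.prodMk_right x)).const_smul _

lemma integrable_fourier_slice {β : Type*} [MeasurableSpace β] {ν : Measure β} [SFinite ν]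
    {f : E × β → G} (hf : Integrable f (volume.prod ν)) (ξ : E) :
    Integrable (fun y => 𝓕 (fun x => f (x, y)) ξ) ν := by
  simp only [Real.fourier_eq]
  have hphase : Measurable fun z : E × β => -inner ℝ z.1 ξ := by fun_prop
  exact (integrable_fourierChar_smul hf hphase.aestronglyMeasurable).integral_prod_right

variable [InnerProductSpace ℝ F] [FiniteDimensional ℝ F] [MeasurableSpace F] [BorelSpace F]

/-- The Fourier transform on `E × F`. It is transported from `WithLp 2 (E × F)`, because `E × F`
itself carries the supremum norm and is not an inner product space. -/
def prodFourier (f : 𝓢(E × F, G)) : 𝓢(E × F, G) :=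
  let e := WithLp.prodContinuousLinearEquiv 2 ℝ E F
  SchwartzMap.compCLMOfContinuousLinearEquiv ℂ e.symm
    (𝓕 (SchwartzMap.compCLMOfContinuousLinearEquiv ℂ e f))

lemma prodFourier_apply (f : 𝓢(E × F, G)) (ζ : E × F) :
    prodFourier f ζ =
      ∫ z : E × F, 𝐞 (-(inner ℝ z.1 ζ.1 + inner ℝ z.2 ζ.2)) • f z := by
  rw [← (WithLp.volume_preserving_ofLp E F).integral_comp
    (MeasurableEquiv.toLp 2 (E × F)).symm.measurableEmbedding]
  rfl

lemma fourier_fourier_slice (f : 𝓢(E × F, G)) (ξ : E) (η : F) :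
    𝓕 (fun y => 𝓕 (fun x => f (x, y)) ξ) η = prodFourier f (ξ, η) := by
  have hphase : Continuous fun z : E × F => -(inner ℝ z.1 ξ + inner ℝ z.2 η) := by fun_prop
  have hint := integrable_fourierChar_smul (f.integrable (μ := volume.prod volume))
    hphase.aestronglyMeasurable
  rw [prodFourier_apply, Measure.volume_eq_prod, integral_prod_symm _ hint]
  simp only [Real.fourier_eq, neg_add_rev, AddChar.map_add_eq_mul, mul_smul]
  refine integral_congr_ae (ae_of_all _ fun y => ?_)
  exact (integral_smul _ _).symm

lemma fourierInv_prodFourier [CompleteSpace G] (f : 𝓢(E × F, G)) (ξ : E) (y : F) :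
    𝓕⁻ (fun η => prodFourier f (ξ, η)) y = 𝓕 (fun x => f (x, y)) ξ := by
  have hfourier : 𝓕 (fun y => 𝓕 (fun x => f (x, y)) ξ) = fun η => prodFourier f (ξ, η) :=
    funext (fourier_fourier_slice f ξ)
  have hint : Integrable (𝓕 fun y => 𝓕 (fun x => f (x, y)) ξ) :=
    hfourier ▸ (verticalSlice (prodFourier f) ξ).integrable
  rw [← hfourier, (continuous_fourier_slice f ξ).fourierInv_fourier_eq
    (integrable_fourier_slice f.integrable ξ) hint]

end PartialFourier

section BilinearMultiplier

lemma exp_two_pi_mul_I (r : ℝ) : Complex.exp (2 * Real.pi * r * Complex.I) = 𝐞 r := by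
  rw [Real.fourierChar_apply]
  push_cast
  rfl

lemma FT1_eq_fourier (u : ℝ → ℂ) : FT1 u = 𝓕 u := by
  ext ξ
  rw [FT1, Real.fourier_eq]
  refine integral_congr_ae (ae_of_all _ fun x => ?_)
  simp only [Circle.smul_def, ← exp_two_pi_mul_I, smul_eq_mul, RCLike.inner_apply, conj_trivial]
  push_cast
  ring_nf

lemma FT_eq_prodFourier (f : 𝓢(V2, ℂ)) : FT f = prodFourier f := by
  ext ξ
  rw [FT, prodFourier_apply]
  refine integral_congr_ae (ae_of_all _ fun x => ?_)
  simp only [Circle.smul_def, ← exp_two_pi_mul_I, smul_eq_mul, RCLike.inner_apply, conj_trivial,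
    dot2]
  push_cast
  ring_nf

lemma integral_FT_mul_exp (f : 𝓢(V2, ℂ)) (ξ y : ℝ) :
    ∫ η : ℝ, FT f (ξ, η) * Complex.exp (2 * Real.pi * (η * y) * Complex.I) =
      FT1 (horizontalSlice f y) ξ := by
  rw [FT1_eq_fourier, FT_eq_prodFourier, coe_horizontalSlice, ← fourierInv_prodFourier,
    Real.fourierInv_eq]
  refine integral_congr_ae (ae_of_all _ fun η => ?_)
  simp only [Circle.smul_def, ← exp_two_pi_mul_I, smul_eq_mul, RCLike.inner_apply, conj_trivial]
  push_cast
  ring_nf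

/-- The cylinder over `D₀` in the first frequency variables: all `((ξ₁, ξ₂), (ξ₃, ξ₄))` with
`(ξ₁, ξ₃) ∈ D₀`. -/
def frequencyCylinder (D0 : Set (ℝ × ℝ)) : Set (V2 × V2) := {p | (p.1.1, p.2.1) ∈ D0}

lemma measurableSet_frequencyCylinder {D0 : Set (ℝ × ℝ)} (hD0 : MeasurableSet D0) :
    MeasurableSet (frequencyCylinder D0) :=
  hD0.preimage (by fun_prop : Measurable fun p : V2 × V2 => (p.1.1, p.2.1))

lemma integrable_TD_integrand {D : Set (V2 × V2)} (hD : MeasurableSet D) (f g : 𝓢(V2, ℂ))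
    (x : V2) :
    Integrable fun ξ : V2 × V2 => indicator D (fun _ => (1 : ℂ)) ξ *
      (FT f ξ.1 * (FT g ξ.2 *
        Complex.exp (2 * Real.pi * dot2 (ξ.1 + ξ.2) x * Complex.I))) := by
  have hphase : Continuous fun ξ : V2 × V2 => dot2 (ξ.1 + ξ.2) x := by unfold dot2; fun_prop
  have hprod : Integrable fun ξ : V2 × V2 => FT f ξ.1 * FT g ξ.2 := by
    rw [FT_eq_prodFourier, FT_eq_prodFourier]
    exact (prodFourier f).integrable.mul_prod (prodFourier g).integrable
  refine ((integrable_fourierChar_smul hprod hphase.aestronglyMeasurable).indicator hD).congr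
    (ae_of_all _ fun ξ => ?_)
  by_cases hξ : ξ ∈ D
  · simp only [indicator_of_mem hξ, exp_two_pi_mul_I, Circle.smul_def, smul_eq_mul]
    ring
  · simp only [indicator_of_notMem hξ, zero_mul]

lemma stronglyMeasurable_TD {D : Set (V2 × V2)} (hD : MeasurableSet D) (f g : 𝓢(V2, ℂ)) :
    StronglyMeasurable (TD D f g) := by
  have hind : Measurable (indicator D fun _ => (1 : ℂ)) := measurable_const.indicator hD
  have hf : Measurable (FT f) := FT_eq_prodFourier f ▸ (prodFourier f).continuous.measurable
  have hg : Measurable (FT g) := FT_eq_prodFourier g ▸ (prodFourier g).continuous.measurable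
  have hexp : Measurable fun p : V2 × V2 × V2 =>
      Complex.exp (2 * Real.pi * dot2 (p.2.1 + p.2.2) p.1 * Complex.I) :=
    Continuous.measurable (by unfold dot2; fun_prop)
  exact StronglyMeasurable.integral_prod_right <| Measurable.stronglyMeasurable <|
    (hind.comp measurable_snd).mul <| (hf.comp (by fun_prop)).mul <|
      (hg.comp (by fun_prop)).mul hexp

lemma TD_frequencyCylinder_integrand_eq (D0 : Set (ℝ × ℝ)) (f g : V2 → ℂ) (ξ η : ℝ × ℝ) (x y : ℝ) :
    indicator (frequencyCylinder D0) (fun _ => (1 : ℂ)) ((ξ.1, η.1), (ξ.2, η.2)) *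
      (FT f (ξ.1, η.1) * (FT g (ξ.2, η.2) * Complex.exp
        (2 * Real.pi * dot2 ((ξ.1, η.1) + (ξ.2, η.2)) (x, y) * Complex.I))) =
    indicator D0 (fun _ => (1 : ℂ)) ξ *
        Complex.exp (2 * Real.pi * ((ξ.1 + ξ.2) * x) * Complex.I) *
      ((FT f (ξ.1, η.1) * Complex.exp (2 * Real.pi * (η.1 * y) * Complex.I)) *
        (FT g (ξ.2, η.2) * Complex.exp (2 * Real.pi * (η.2 * y) * Complex.I))) := by
  have hexp : Complex.exp (2 * Real.pi * dot2 ((ξ.1, η.1) + (ξ.2, η.2)) (x, y) * Complex.I) =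
      Complex.exp (2 * Real.pi * ((ξ.1 + ξ.2) * x) * Complex.I) *
        Complex.exp (2 * Real.pi * (η.1 * y) * Complex.I) *
        Complex.exp (2 * Real.pi * (η.2 * y) * Complex.I) := by
    rw [← Complex.exp_add, ← Complex.exp_add]
    congr 1
    simp only [dot2, Prod.mk_add_mk]
    push_cast
    ring
  have hind : indicator (frequencyCylinder D0) (fun _ => (1 : ℂ)) ((ξ.1, η.1), (ξ.2, η.2)) =
      indicator D0 (fun _ => (1 : ℂ)) ξ := rfl
  rw [hexp, hind]
  ring

theorem TD_frequencyCylinder_apply {D0 : Set (ℝ × ℝ)} (hD0 : MeasurableSet D0) (f g : 𝓢(V2, ℂ))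
    (x y : ℝ) :
    TD (frequencyCylinder D0) f g (x, y) =
      TD0 D0 (horizontalSlice f y) (horizontalSlice g y) x := by
  have hpres := measurePreserving_prodProdProdComm (volume : Measure ℝ) (volume : Measure ℝ)
    (volume : Measure ℝ) (volume : Measure ℝ)
  have hemb := (Homeomorph.prodProdProdComm ℝ ℝ ℝ ℝ).measurableEmbedding
  have hint := (hpres.integrable_comp_emb hemb).2
    (integrable_TD_integrand (measurableSet_frequencyCylinder hD0) f g (x, y))
  calc TD (frequencyCylinder D0) f g (x, y)
    _ = ∫ ξ : ℝ × ℝ, ∫ η : ℝ × ℝ,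
          indicator (frequencyCylinder D0) (fun _ => (1 : ℂ)) ((ξ.1, η.1), (ξ.2, η.2)) *
            (FT f (ξ.1, η.1) * (FT g (ξ.2, η.2) * Complex.exp
              (2 * Real.pi * dot2 ((ξ.1, η.1) + (ξ.2, η.2)) (x, y) * Complex.I))) :=
        (hpres.integral_comp hemb _).symm.trans (integral_prod _ hint)
    _ = TD0 D0 (horizontalSlice f y) (horizontalSlice g y) x := by
        refine integral_congr_ae (ae_of_all _ fun ξ => ?_)
        simp only [TD_frequencyCylinder_integrand_eq]
        rw [integral_const_mul, Measure.volume_eq_prod, integral_prod_mul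
          (fun η₁ => FT f (ξ.1, η₁) * Complex.exp (2 * Real.pi * (η₁ * y) * Complex.I))
          (fun η₂ => FT g (ξ.2, η₂) * Complex.exp (2 * Real.pi * (η₂ * y) * Complex.I)),
          integral_FT_mul_exp, integral_FT_mul_exp]
        ring

end BilinearMultiplier

theorem cylinder_transfer_general {p1 p2 q : ℝ≥0∞} [ENNReal.HolderTriple p1 p2 q]
    {D0 : Set (ℝ × ℝ)} (hD0 : MeasurableSet D0) {c : ℝ≥0∞}
    (hc : ∀ u v : 𝓢(ℝ, ℂ),
      eLpNorm (TD0 D0 u v) q volume ≤ c * (eLpNorm u p1 volume * eLpNorm v p2 volume))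
    (f g : 𝓢(V2, ℂ)) :
    eLpNorm (TD (frequencyCylinder D0) f g) q volume ≤
      c * (eLpNorm f p1 volume * eLpNorm g p2 volume) := by
  refine eLpNorm_prod_le_of_forall_slice
    (stronglyMeasurable_TD (measurableSet_frequencyCylinder hD0) f g).aestronglyMeasurable
    f.continuous.aestronglyMeasurable g.continuous.aestronglyMeasurable
    (ae_of_all _ fun y => ?_)
  simp only [TD_frequencyCylinder_apply hD0, ← coe_horizontalSlice]
  exact hc (horizontalSlice f y) (horizontalSlice g y)

/-- **Cylinder boundedness transfer.** If `T_{D₀}` is bounded from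
`L^{p₁}(ℝ) × L^{p₂}(ℝ)` to `L^{p₃'}(ℝ)` with constant `C`, then for the cylinder
`D = {((ξ₁,ξ₂),(ξ₃,ξ₄)) : (ξ₁,ξ₃) ∈ D₀}` the operator `T_D` is bounded from
`L^{p₁}(ℝ²) × L^{p₂}(ℝ²)` to `L^{p₃'}(ℝ²)` with the same constant. -/
theorem cylinder_transfer (p1 p2 p3 : ℝ) (hp1 : 1 < p1) (hp2 : 1 < p2) (hp3 : 1 < p3)
    (hsum : p1⁻¹ + p2⁻¹ + p3⁻¹ = 1)
    (D0 : Set (ℝ × ℝ)) (hD0 : MeasurableSet D0) (C : ℝ)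
    (hC : ∀ u v : SchwartzMap ℝ ℂ,
      eLpNorm (TD0 D0 ⇑u ⇑v) (ENNReal.ofReal (p3 / (p3 - 1))) volume ≤
        ENNReal.ofReal C * (eLpNorm (⇑u) (ENNReal.ofReal p1) volume *
          eLpNorm (⇑v) (ENNReal.ofReal p2) volume)) :
    ∀ f g : SchwartzMap V2 ℂ,
      eLpNorm (TD {p : V2 × V2 | (p.1.1, p.2.1) ∈ D0} ⇑f ⇑g)
          (ENNReal.ofReal (p3 / (p3 - 1))) volume ≤
        ENNReal.ofReal C * (eLpNorm (⇑f) (ENNReal.ofReal p1) volume *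
          eLpNorm (⇑g) (ENNReal.ofReal p2) volume) := by
  have hinv : p1⁻¹ + p2⁻¹ = (p3 / (p3 - 1))⁻¹ := by
    rw [inv_div, sub_div, div_self (by positivity), one_div]
    linarith
  have : ENNReal.HolderTriple (ENNReal.ofReal p1) (ENNReal.ofReal p2)
      (ENNReal.ofReal (p3 / (p3 - 1))) :=
    Real.HolderTriple.ennrealOfReal ⟨hinv, by linarith, by linarith⟩
  exact cylinder_transfer_general hD0 hC
end
end
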